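/- arXiv:1701.05490 — 2 statements merged into one kernel-verified Lean document; each statement's English description precedes it below -/
import Mathlib

section
/- Let G be a finite nonsolvable group satisfying the two-prime hypothesis, and let M/N be a nonabelian chief factor of G, i.e., N < M are normal subgroups of G such that there is no normal subgroup of G strictly between N and M, and the quotient M/N is nonabelian. Then M/N is either a simple group or isomorphic to A_5 × A_5. -/
open CategoryTheory

/-- The set of degrees of the complex irreducible characters of `G`. -/
def charDegrees (G : Type) [Group G] : Set ℕ :=
  {n | ∃ V : FDRep ℂ G, Simple V ∧ Module.finrank ℂ V = n}

/-- `G` satisfies the two-prime hypothesis: for any distinct irreducible character degrees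
`a`, `b`, the gcd `gcd a b` has at most two prime divisors counted with multiplicity. -/
def TwoPrimeHypothesis (G : Type) [Group G] : Prop :=
  ∀ a ∈ charDegrees G, ∀ b ∈ charDegrees G, a ≠ b →
    (Nat.gcd a b).primeFactorsList.length ≤ 2


abbrev GA (X : Type) [Group X] := MonoidAlgebra ℂ X
noncomputable def oo {X : Type} [Group X] (x : X) : GA X := MonoidAlgebra.of ℂ X x

section P1
open Matrix

lemma oo_one {X : Type} [Group X] : (oo (1 : X)) = 1 := map_one _
lemma oo_mul {X : Type} [Group X] (x y : X) : oo (x * y) = oo x * oo y := map_mul _ _ _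
lemma oo_coeff {X : Type} [Group X] [DecidableEq X] (x y : X) :
    (oo x).coeff y = if x = y then 1 else 0 := by
  simp [oo, MonoidAlgebra.of_apply, Finsupp.single_apply]

lemma single_eq {X : Type} [Group X] (m : X) (r : ℂ) : MonoidAlgebra.single m r = r • oo m := by
  simp [oo]

lemma scalar_of_comm {ι : Type} [Fintype ι] [DecidableEq ι] (A : Matrix ι ι ℂ)
    (h : ∀ B, A * B = B * A) : ∃ c : ℂ, A = c • 1 := by
  have := Matrix.mem_range_scalar_of_commute_single (M := A) (fun i j _ => (h _).symm)
  obtain ⟨c, hc⟩ := this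
  exact ⟨c, by rw [← hc]; simp [Matrix.smul_one_eq_diagonal]⟩

lemma trace_idem_nat {ι : Type} [Fintype ι] [DecidableEq ι] (A : Matrix ι ι ℂ) (h : A * A = A) :
    ∃ n : ℕ, A.trace = n ∧ (n = 0 → A = 0) ∧ A.rank = n := by
  have h2 : IsIdempotentElem (Matrix.toLin' A) := by
    unfold IsIdempotentElem; rw [Module.End.mul_eq_comp, ← Matrix.toLin'_mul, h]
  have := (LinearMap.IsIdempotentElem.isProj_range _ h2).trace
  rw [Matrix.trace_toLin'_eq] at this
  refine ⟨_, this, fun h0 => ?_, rfl⟩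
  rw [Submodule.finrank_eq_zero, LinearMap.range_eq_bot] at h0
  simpa using h0

/-- trace of left multiplication on matrices -/
lemma trace_lmul_GA {X : Type} [Group X] [Fintype X] (a : GA X) :
    LinearMap.trace ℂ (GA X) (LinearMap.mulLeft ℂ a) = Fintype.card X * a.coeff 1 := by
  classical
  rw [LinearMap.trace_eq_matrix_trace ℂ (MonoidAlgebra.basis X ℂ)]
  simp only [Matrix.trace, Matrix.diag, LinearMap.toMatrix_apply]
  have : ∀ x : X, ((MonoidAlgebra.basis X ℂ).repr ((LinearMap.mulLeft ℂ a) ((MonoidAlgebra.basis X ℂ) x))) x = a.coeff 1 := by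
    intro x
    have h1 : (MonoidAlgebra.basis X ℂ) x = MonoidAlgebra.single x 1 := by
      simp
    rw [h1]
    change (a * MonoidAlgebra.single x 1).coeff x = _
    rw [MonoidAlgebra.coeff_mul_single_apply]; simp
  rw [Finset.sum_congr rfl fun x _ => this x]; simp

lemma trace_lmul_pi {n : ℕ} (d : Fin n → ℕ) (a : Π i, Matrix (Fin (d i)) (Fin (d i)) ℂ) :
    LinearMap.trace ℂ (Π i, Matrix (Fin (d i)) (Fin (d i)) ℂ) (LinearMap.mulLeft ℂ a) =
      ∑ i, (d i : ℂ) * (a i).trace := by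
  classical
  rw [LinearMap.trace_eq_matrix_trace ℂ (Pi.basis fun i => Matrix.stdBasis ℂ (Fin (d i)) (Fin (d i)))]
  simp only [Matrix.trace, Matrix.diag, LinearMap.toMatrix_apply, Pi.basis_repr, Pi.basis_apply,
    LinearMap.mulLeft_apply, Fintype.sum_sigma, Fintype.sum_prod_type]
  refine Finset.sum_congr rfl fun i _ => ?_
  rw [Finset.mul_sum]
  refine Finset.sum_congr rfl fun x _ => ?_
  have : ∀ y, ((Matrix.stdBasis ℂ (Fin (d i)) (Fin (d i))).repr (a i * (Matrix.stdBasis ℂ (Fin (d i)) (Fin (d i))) (x,y))) (x,y) = a i x x := by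
    intro y
    rw [Matrix.stdBasis_eq_single]
    change (a i * Matrix.single x y 1 : Matrix _ _ ℂ) x y = _
    simp
  simp only [Pi.mul_apply, Pi.single_eq_same, this]; simp

lemma regular_trace {X : Type} [Group X] [Fintype X] {n : ℕ} (d : Fin n → ℕ)
    (e : GA X ≃ₐ[ℂ] Π i, Matrix (Fin (d i)) (Fin (d i)) ℂ) (a : GA X) :
    ∑ i, (d i : ℂ) * (e a i).trace = Fintype.card X * a.coeff 1 := by
  rw [← trace_lmul_GA, ← trace_lmul_pi, ← LinearMap.trace_conj' (LinearMap.mulLeft ℂ a) e.toLinearEquiv]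
  congr 1
  refine LinearMap.ext fun x => ?_
  simp [LinearEquiv.conj_apply]

lemma block {X : Type} [Group X] {n : ℕ} (d : Fin n → ℕ)
    (hd : ∀ i, NeZero (d i))
    (e : GA X ≃ₐ[ℂ] Π i, Matrix (Fin (d i)) (Fin (d i)) ℂ)
    {ι : Type} [Fintype ι] [DecidableEq ι] [Nonempty ι]
    (W : GA X →ₐ[ℂ] Matrix ι ι ℂ) (hW : Function.Surjective W) :
    ∃ i, Fintype.card ι = d i ∧ (∀ a, W a = 0 ↔ e a i = 0) ∧ ∀ a, (W a).trace = (e a i).trace := by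
  let δ : Fin n → GA X := fun i => e.symm (Pi.single i 1)
  have hcomm : ∀ i a, δ i * a = a * δ i := by
    intro i a
    apply e.injective
    simp only [δ, map_mul, AlgEquiv.apply_symm_apply]
    ext1 j
    by_cases h : j = i
    · subst h; simp
    · simp [h]
  have hidem : ∀ i, δ i * δ i = δ i := by
    intro i
    apply e.injective
    simp only [δ, map_mul, AlgEquiv.apply_symm_apply, ← Pi.single_mul, mul_one]
  have hsum : ∑ i, δ i = 1 := by
    apply e.injective
    simp only [δ, map_sum, AlgEquiv.apply_symm_apply, map_one]
    exact Finset.univ_sum_single (1 : Π i, Matrix (Fin (d i)) (Fin (d i)) ℂ)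
  have h01 : ∀ i, W (δ i) = 0 ∨ W (δ i) = 1 := by
    intro i
    obtain ⟨c, hc⟩ := scalar_of_comm (W (δ i)) (by
      intro B; obtain ⟨b, rfl⟩ := hW B; rw [← map_mul, ← map_mul, hcomm])
    have h2 : W (δ i) * W (δ i) = W (δ i) := by rw [← map_mul, hidem]
    rw [hc] at h2 ⊢
    have h3 : c * c = c := by
      have := congrFun₂ h2 (Classical.arbitrary ι) (Classical.arbitrary ι)
      simpa using this
    have h4 : c = 0 ∨ c = 1 := by
      by_cases h : c = 0
      · left; exact h
      · right; exact mul_left_cancel₀ h (by rw [h3, mul_one])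
    rcases h4 with h | h
    · left; simp [h]
    · right; simp [h]
  obtain ⟨i, hi⟩ : ∃ i, W (δ i) = 1 := by
    by_contra hcon
    push Not at hcon
    have : W 1 = 0 := by
      rw [← hsum, map_sum]
      exact Finset.sum_eq_zero fun i _ => (h01 i).resolve_right (hcon i)
    rw [map_one] at this
    exact one_ne_zero this
  have hsingle : ∀ a, δ i * a = e.symm (Pi.single i (e a i)) := by
    intro a
    apply e.injective
    simp only [δ, map_mul, AlgEquiv.apply_symm_apply]
    ext1 j
    by_cases h : j = i
    · subst h; simp
    · simp [h]
  have hWa : ∀ a, W a = W (e.symm (Pi.single i (e a i))) := by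
    intro a
    rw [← hsingle, map_mul, hi, one_mul]
  let φ : Matrix (Fin (d i)) (Fin (d i)) ℂ →ₐ[ℂ] Matrix ι ι ℂ := AlgHom.ofLinearMap
    (W.toLinearMap ∘ₗ e.symm.toLinearMap ∘ₗ LinearMap.single ℂ (fun i => Matrix (Fin (d i)) (Fin (d i)) ℂ) i) (by simpa [δ] using hi) (by
      intro x y
      simp [Pi.single_mul])
  have hφ : ∀ x, φ x = W (e.symm (Pi.single i x)) := fun x => rfl
  have hφs : Function.Surjective φ := by
    intro B
    obtain ⟨b, rfl⟩ := hW B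
    exact ⟨e b i, by rw [hφ, ← hWa]⟩
  have hφi : Function.Injective φ := by
    have := hd i
    exact φ.toRingHom.injective
  let Φ := AlgEquiv.ofBijective φ ⟨hφi, hφs⟩
  have hΦ : ∀ a, W a = Φ (e a i) := fun a => hWa a
  refine ⟨i, ?_, ?_, ?_⟩
  · have h1 := LinearEquiv.finrank_eq Φ.toLinearEquiv
    rw [Module.finrank_matrix, Module.finrank_matrix] at h1
    simp at h1
    nlinarith [h1]
  · intro a; rw [hΦ, EmbeddingLike.map_eq_zero_iff]
  · intro a; rw [hΦ, Matrix.trace_map]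

/-- irreducible characters -/
def IsIrr {X : Type} [Group X] (f : X → ℂ) : Prop :=
  ∃ d : ℕ, 0 < d ∧ ∃ W : GA X →ₐ[ℂ] Matrix (Fin d) (Fin d) ℂ, Function.Surjective W ∧
    ∀ x, f x = (W (oo x)).trace

noncomputable def EE {X : Type} [Group X] [Fintype X] (f : X → ℂ) : GA X :=
  ∑ x, (f 1 / Fintype.card X * f x⁻¹) • oo x

lemma EE_coeff {X : Type} [Group X] [Fintype X] (f : X → ℂ) (x : X) :
    (EE f).coeff x = f 1 / Fintype.card X * f x⁻¹ := by
  classical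
  simp only [EE, MonoidAlgebra.coeff_sum, MonoidAlgebra.coeff_smul, Finsupp.finsetSum_apply, Finsupp.smul_apply, oo_coeff]
  simp

lemma wedd (X : Type) [Group X] [Fintype X] : ∃ (n : ℕ) (d : Fin n → ℕ), (∀ i, NeZero (d i)) ∧
      Nonempty (GA X ≃ₐ[ℂ] Π i, Matrix (Fin (d i)) (Fin (d i)) ℂ) :=
  IsSemisimpleRing.exists_algEquiv_pi_matrix_of_isAlgClosed ℂ (GA X)

lemma wedd_EE {X : Type} [Group X] [Fintype X] {n : ℕ} (d : Fin n → ℕ)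
    (e : GA X ≃ₐ[ℂ] Π i, Matrix (Fin (d i)) (Fin (d i)) ℂ) (i : Fin n) (f : X → ℂ)
    (hf : ∀ x, f x = (e (oo x) i).trace) : EE f = e.symm (Pi.single i 1) := by
  classical
  have hX : (Fintype.card X : ℂ) ≠ 0 := by simp
  have hf1 : f 1 = d i := by rw [hf, oo_one, map_one]; simp
  apply MonoidAlgebra.ext
  ext x
  have h := regular_trace d e (e.symm (Pi.single i 1) * oo x⁻¹)
  rw [EE_coeff]
  have h2 : (e.symm (Pi.single i 1) * oo x⁻¹).coeff 1 = (e.symm (Pi.single i 1)).coeff x := by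
    rw [oo, MonoidAlgebra.of_apply, MonoidAlgebra.coeff_mul_single_apply]; simp
  rw [h2] at h
  rw [Finset.sum_eq_single i] at h
  · rw [map_mul, Pi.mul_apply, AlgEquiv.apply_symm_apply, Pi.single_eq_same, one_mul, ← hf] at h
    rw [hf1]; field_simp; rw [h]
  · intro j _ hj
    rw [map_mul, Pi.mul_apply, AlgEquiv.apply_symm_apply, Pi.single_eq_of_ne hj]; simp
  · simp

section
variable {X : Type} [Group X] [Fintype X] {ι : Type} [Fintype ι] [DecidableEq ι] [Nonempty ι]
    (W : GA X →ₐ[ℂ] Matrix ι ι ℂ) (hW : Function.Surjective W) (f : X → ℂ)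
    (hf : ∀ x, f x = (W (oo x)).trace)
include hW hf

lemma EE_props : W (EE f) = 1 ∧ (∀ a, EE f * a = a * EE f) ∧ (∀ a, W a = 0 ↔ EE f * a = 0) := by
  obtain ⟨n, d, hd, ⟨e⟩⟩ := wedd X
  obtain ⟨i, hc, hk, ht⟩ := block d hd e W hW
  have hE := wedd_EE d e i f (fun x => by rw [hf, ht])
  have hcomm : ∀ a, EE f * a = a * EE f := by
    intro a
    apply e.injective
    simp only [hE, map_mul, AlgEquiv.apply_symm_apply]
    ext1 j
    by_cases h : j = i
    · subst h; simp
    · simp [h]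
  refine ⟨?_, hcomm, ?_⟩
  · have : W (EE f - 1) = 0 := by
      rw [hk, hE]; simp
    rwa [map_sub, map_one, sub_eq_zero] at this
  · intro a
    rw [hk]
    constructor
    · intro h
      apply e.injective
      simp only [hE, map_mul, AlgEquiv.apply_symm_apply, map_zero]
      ext1 j
      by_cases h' : j = i
      · subst h'; simp [h]
      · simp [h']
    · intro h
      have := congrFun (congrArg e h) i
      simpa [hE] using this

lemma irr_of_rep : IsIrr f := by
  obtain ⟨n, d, hd, ⟨e⟩⟩ := wedd X
  obtain ⟨i, hc, hk, ht⟩ := block d hd e W hW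
  refine ⟨d i, Nat.pos_of_ne_zero (hd i).ne, ((Pi.evalAlgHom ℂ _ i).comp e.toAlgHom), ?_, ?_⟩
  · intro B
    exact ⟨e.symm (Pi.single i B), by simp⟩
  · intro x; rw [hf, ht]; rfl
end

theorem exists_irr (X : Type) [Group X] [Fintype X] : ∃ s : Finset (X → ℂ), (∀ f, f ∈ s ↔ IsIrr f) ∧
    ∀ g h : X, ∑ f ∈ s, f g * f h⁻¹ = (Nat.card {x : X // x⁻¹ * g * x = h} : ℂ) := by
  classical
  obtain ⟨n, d, hd, ⟨e⟩⟩ := wedd X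
  let χ : Fin n → X → ℂ := fun i x => (e (oo x) i).trace
  have hinj : Function.Injective χ := by
    intro i j hij
    have h1 := wedd_EE d e i (χ i) (fun x => rfl)
    have h2 := wedd_EE d e j (χ j) (fun x => rfl)
    rw [hij, h2] at h1
    have h3 := congrFun (e.symm.injective h1) i
    by_contra hne
    rw [Pi.single_eq_same, Pi.single_eq_of_ne hne] at h3
    have := hd i
    exact one_ne_zero h3.symm
  refine ⟨Finset.univ.map ⟨χ, hinj⟩, ?_, ?_⟩
  · intro f
    simp only [Finset.mem_map, Finset.mem_univ, true_and, Function.Embedding.coeFn_mk]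
    constructor
    · rintro ⟨i, rfl⟩
      have := hd i
      apply irr_of_rep ((Pi.evalAlgHom ℂ _ i).comp e.toAlgHom) _ (χ i) (fun x => rfl)
      intro B
      exact ⟨e.symm (Pi.single i B), by simp⟩
    · rintro ⟨m, hm, W, hW, hf⟩
      have : Nonempty (Fin m) := ⟨⟨0, hm⟩⟩
      obtain ⟨i, hc, hk, ht⟩ := block d hd e W hW
      exact ⟨i, by ext x; rw [hf, ht]⟩
  · intro g h
    rw [Finset.sum_map]
    simp only [Function.Embedding.coeFn_mk]
    let c : GA X := ∑ x : X, oo (x⁻¹ * g * x)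
    have hX : (Fintype.card X : ℂ) ≠ 0 := by simp
    have hcc : ∀ a, c * a = a * c := by
      intro a
      induction a using MonoidAlgebra.induction_linear with
      | zero => simp
      | add x y hx hy => rw [mul_add, add_mul, hx, hy]
      | single m r =>
        have := single_eq m r
        rw [this, mul_smul_comm, smul_mul_assoc]
        congr 1
        simp only [c, Finset.sum_mul, Finset.mul_sum, ← oo_mul]
        refine Fintype.sum_equiv (Equiv.mulRight m) _ _ fun x => ?_
        simp [mul_assoc]
    have hcs : ∀ i, e c i = (Fintype.card X * χ i g / d i : ℂ) • 1 := by
      intro i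
      obtain ⟨k, hk⟩ := scalar_of_comm (e c i) (by
        intro B
        have := congrFun (congrArg e (hcc (e.symm (Pi.single i B)))) i
        simpa using this)
      have h1 : (e c i).trace = Fintype.card X * χ i g := by
        simp only [c, map_sum, Finset.sum_apply, Matrix.trace_sum, oo_mul, map_mul, Pi.mul_apply]
        have : ∀ x : X, (e (oo x⁻¹) i * e (oo g) i * e (oo x) i).trace = χ i g := by
          intro x
          rw [Matrix.trace_mul_comm, ← mul_assoc, ← Pi.mul_apply, ← map_mul, ← oo_mul, mul_inv_cancel, oo_one, map_one, Pi.one_apply, one_mul]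
        rw [Finset.sum_congr rfl fun x _ => this x]; simp
      have h2 : (d i : ℂ) ≠ 0 := by simpa using (hd i).ne
      rw [hk] at h1 ⊢
      rw [← h1]
      simp [h2]
    have h1 := regular_trace d e (c * oo h⁻¹)
    have h2 : ∀ i, (d i : ℂ) * (e (c * oo h⁻¹) i).trace = Fintype.card X * (χ i g * χ i h⁻¹) := by
      intro i
      have h2 : (d i : ℂ) ≠ 0 := by simpa using (hd i).ne
      rw [map_mul, Pi.mul_apply, hcs, smul_mul_assoc, one_mul, Matrix.trace_smul]
      change _ * (_ • χ i h⁻¹) = _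
      rw [smul_eq_mul]; field_simp
    rw [Finset.sum_congr rfl fun i _ => h2 i, ← Finset.mul_sum] at h1
    have h3 := mul_left_cancel₀ hX h1
    rw [h3]
    simp only [c, Finset.sum_mul, ← oo_mul, MonoidAlgebra.coeff_sum, Finsupp.finsetSum_apply, oo_coeff]
    rw [Finset.sum_boole, Nat.card_eq_fintype_card, Fintype.card_subtype]
    simp only [mul_inv_eq_one]

noncomputable def irr (X : Type) [Group X] [Fintype X] : Finset (X → ℂ) := (exists_irr X).choose

lemma mem_irr {X : Type} [Group X] [Fintype X] {f : X → ℂ} : f ∈ irr X ↔ IsIrr f :=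
  (exists_irr X).choose_spec.1 f

lemma irr_orth {X : Type} [Group X] [Fintype X] (g h : X) :
    ∑ f ∈ irr X, f g * f h⁻¹ = (Nat.card {x : X // x⁻¹ * g * x = h} : ℂ) :=
  (exists_irr X).choose_spec.2 g h

end P1

section P2
set_option linter.unusedSectionVars false
open Matrix

lemma pow_val_add {R : Type} [Monoid R] {n : ℕ} [NeZero n] (T : R) (hT : T ^ n = 1) (s t : ZMod n) :
    T ^ (s + t).val = T ^ s.val * T ^ t.val := by
  rw [ZMod.val_add, ← pow_add]
  conv_rhs => rw [← Nat.div_add_mod (s.val + t.val) n, pow_add, pow_mul, hT, one_pow, one_mul]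

lemma ψ_sum {n : ℕ} [NeZero n] (b : ZMod n) : ∑ s : ZMod n, ZMod.stdAddChar (s * b) =
    if b = 0 then (n : ℂ) else 0 := by
  classical
  rw [AddChar.sum_mulShift b (ZMod.isPrimitive_stdAddChar n)]
  split_ifs <;> simp

lemma ψ_integral {n : ℕ} [NeZero n] (i : ZMod n) : IsIntegral ℤ (ZMod.stdAddChar i : ℂ) := by
  refine IsIntegral.of_pow (NeZero.pos n) ?_
  rw [← AddChar.map_nsmul_eq_pow]
  simp [isIntegral_one]

noncomputable def cycP {n : ℕ} [NeZero n] {R : Type} [Ring R] [Algebra ℂ R] (T : R) (i : ZMod n) : R :=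
  (n : ℂ)⁻¹ • ∑ s : ZMod n, (ZMod.stdAddChar (-(s * i)) : ℂ) • T ^ s.val

section
variable {n : ℕ} [NeZero n] {R : Type} [Ring R] [Algebra ℂ R] (T : R) (hT : T ^ n = 1)

include hT in
lemma pow_mul_cycP (t i : ZMod n) : T ^ t.val * cycP T i = (ZMod.stdAddChar (t * i) : ℂ) • cycP T i := by
  rw [cycP, mul_smul_comm, smul_comm]
  congr 1
  rw [Finset.mul_sum, Finset.smul_sum]
  refine Fintype.sum_equiv (Equiv.addLeft t) _ _ fun s => ?_
  simp only [Equiv.coe_addLeft]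
  rw [pow_val_add T hT, mul_smul_comm, smul_smul, ← AddChar.map_add_eq_mul]
  congr 2; ring_nf

include hT in
lemma cycP_mul [DecidableEq (ZMod n)] (i j : ZMod n) : cycP T j * cycP T i = if i = j then cycP T i else 0 := by
  rw [cycP, smul_mul_assoc, Finset.sum_mul]
  simp_rw [smul_mul_assoc, pow_mul_cycP T hT, smul_smul, ← AddChar.map_add_eq_mul, ← Finset.sum_smul]
  have : ∀ s : ZMod n, -(s * j) + s * i = s * (i - j) := fun s => by ring
  simp_rw [this, ψ_sum, sub_eq_zero]
  have hn : (n : ℂ) ≠ 0 := by exact_mod_cast NeZero.ne n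
  split_ifs with h
  · rw [smul_smul, inv_mul_cancel₀ hn, one_smul]
  · simp

lemma cycP_sum (t : ZMod n) : ∑ i : ZMod n, (ZMod.stdAddChar (t * i) : ℂ) • cycP T i = T ^ t.val := by
  classical
  have hn : (n : ℂ) ≠ 0 := by exact_mod_cast NeZero.ne n
  simp_rw [cycP, smul_comm _ ((n : ℂ)⁻¹), ← Finset.smul_sum, Finset.smul_sum (s := Finset.univ)]
  rw [Finset.sum_comm]
  have h : ∀ s : ZMod n, ∑ i : ZMod n, (ZMod.stdAddChar (t * i) : ℂ) • (ZMod.stdAddChar (-(s * i)) : ℂ) • T ^ s.val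
      = (if t = s then (n : ℂ) else 0) • T ^ s.val := by
    intro s
    simp_rw [smul_smul, ← Finset.sum_smul, ← AddChar.map_add_eq_mul]
    have : ∀ i : ZMod n, t * i + -(s * i) = i * (t - s) := fun s => by ring
    simp_rw [this, ψ_sum, sub_eq_zero]
  simp_rw [← Finset.smul_sum (r := (n : ℂ)⁻¹), h]
  simp [hn]

lemma cycP_comm (A : R) (h : A * T = T * A) (i : ZMod n) : A * cycP T i = cycP T i * A := by
  rw [cycP, mul_smul_comm, smul_mul_assoc, Finset.mul_sum, Finset.sum_mul]
  congr 1
  refine Finset.sum_congr rfl fun s _ => ?_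
  rw [mul_smul_comm, smul_mul_assoc]
  congr 1
  exact (Commute.pow_right (show Commute A T from h) _)

lemma cycP_sum_one : ∑ i : ZMod n, cycP T i = 1 := by
  have := cycP_sum T (0 : ZMod n)
  simpa using this
end

section
variable {n : ℕ} [NeZero n] {ι : Type} [Fintype ι] [DecidableEq ι] (T : Matrix ι ι ℂ) (hT : T ^ n = 1)

/-- eigenvalue multiplicity -/
noncomputable def mu (T : Matrix ι ι ℂ) (i : ZMod n) : ℕ := (cycP T i).rank

include hT
lemma mu_eq (i : ZMod n) : (cycP T i).trace = (mu T i : ℂ) := by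
  classical
  obtain ⟨m, h1, h2, h3⟩ := trace_idem_nat (cycP T i) (by rw [cycP_mul T hT]; simp)
  rw [mu, h3, h1]

lemma mu_zero (i : ZMod n) (h : mu T i = 0) : cycP T i = 0 := by
  classical
  obtain ⟨m, h1, h2, h3⟩ := trace_idem_nat (cycP T i) (by rw [cycP_mul T hT]; simp)
  rw [mu, h3] at h
  exact h2 h

lemma trace_pow_mu (t : ZMod n) : (T ^ t.val).trace = ∑ i : ZMod n, (ZMod.stdAddChar (t * i) : ℂ) * mu T i := by
  rw [← cycP_sum T t, Matrix.trace_sum]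
  refine Finset.sum_congr rfl fun i _ => ?_
  rw [Matrix.trace_smul, mu_eq T hT, smul_eq_mul]

lemma sum_mu : ∑ i : ZMod n, mu T i = Fintype.card ι := by
  have h := trace_pow_mu T hT 0
  simp at h
  exact_mod_cast h.symm

lemma trace_mu : T.trace = ∑ i : ZMod n, (ZMod.stdAddChar i : ℂ) * mu T i := by
  have h := trace_pow_mu T hT 1
  have h2 : T ^ (1 : ZMod n).val = T := by
    rw [ZMod.val_one_eq_one_mod]
    conv_rhs => rw [← pow_one T, ← Nat.div_add_mod 1 n, pow_add, pow_mul, hT, one_pow, one_mul]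
  rw [h2] at h
  simpa using h

lemma trace_integral : IsIntegral ℤ T.trace := by
  rw [trace_mu T hT]
  refine IsIntegral.sum _ fun i _ => IsIntegral.mul (ψ_integral i) ?_
  exact isIntegral_algebraMap (x := (mu T i : ℤ))

omit hT in
lemma eq_one_of_re {w : ℂ} (h1 : ‖w‖ = 1) (h2 : w.re = 1) : w = 1 := by
  have h3 : ‖w‖ ^ 2 = w.re ^ 2 + w.im ^ 2 := by
    rw [← Complex.normSq_eq_norm_sq, Complex.normSq_apply]; ring
  rw [h1, h2] at h3
  have : w.im = 0 := by nlinarith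
  exact Complex.ext h2 this

lemma burnside_scalar [Nonempty ι] (hintg : IsIntegral ℤ (T.trace / Fintype.card ι)) :
    T.trace = 0 ∨ ∃ c : ℂ, T = c • 1 := by
  classical
  by_cases h0 : T.trace = 0
  · left; exact h0
  right
  have hd : (Fintype.card ι : ℂ) ≠ 0 := by simp
  have hdr : (0 : ℝ) < Fintype.card ι := by exact_mod_cast Fintype.card_pos
  let ζ : ℂ := ZMod.stdAddChar (1 : ZMod n)
  have hζn : ζ ^ n = 1 := by
    simp only [ζ]; rw [← AddChar.map_nsmul_eq_pow]; simp
  have hψ : ∀ i : ZMod n, ZMod.stdAddChar i = ζ ^ i.val := by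
    intro i
    simp only [ζ]; rw [← AddChar.map_nsmul_eq_pow]; simp
  have hζint : IsIntegral ℚ ζ := (ψ_integral (1 : ZMod n)).tower_top
  let K := IntermediateField.adjoin ℚ {ζ}
  have : FiniteDimensional ℚ K := IntermediateField.adjoin.finiteDimensional hζint
  have : NumberField K := {}
  let z : K := ⟨ζ, IntermediateField.mem_adjoin_simple_self ℚ ζ⟩
  have hz : z ^ n = 1 := by
    apply Subtype.ext; simpa [z] using hζn
  let x : K := (∑ i : ZMod n, z ^ i.val * (mu T i : K)) / (Fintype.card ι : K)
  have hx : (x : ℂ) = T.trace / Fintype.card ι := by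
    rw [trace_mu T hT]
    have h := map_sum K.val (fun i : ZMod n => z ^ i.val * (mu T i : K)) Finset.univ
    change K.val ((∑ i : ZMod n, z ^ i.val * (mu T i : K)) / (Fintype.card ι : K)) = _
    rw [map_div₀, h]
    simp [hψ, z]
  have hx0 : x ≠ 0 := by
    intro h
    rw [h] at hx
    have := div_ne_zero h0 hd
    exact this (by rw [← hx]; simp)
  have hxi : IsIntegral ℤ x := by
    rw [← hx] at hintg
    exact (isIntegral_algHom_iff (K.val.restrictScalars ℤ) (Subtype.val_injective)).1 hintg
  have hnorm : ∀ φ : K →+* ℂ, ‖φ x‖ ≤ 1 := by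
    intro φ
    have hφz : ‖φ z‖ = 1 := by
      apply Complex.norm_eq_one_of_pow_eq_one (n := n) _ (NeZero.ne n)
      rw [← map_pow, hz, map_one]
    simp only [x, map_div₀, map_sum, map_mul, map_pow, map_natCast]
    rw [norm_div, Complex.norm_natCast, div_le_one hdr]
    refine (norm_sum_le _ _).trans ?_
    simp only [norm_mul, norm_pow, hφz, one_pow, one_mul, Complex.norm_natCast]
    rw [← sum_mu T hT]; push_cast; rfl
  obtain ⟨m, hm, hxm⟩ := NumberField.Embeddings.pow_eq_one_of_norm_le_one K ℂ hx0 hxi hnorm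
  let u : ℂ := T.trace / Fintype.card ι
  have hu : u ^ m = 1 := by
    have := congrArg (K.val) hxm
    simp only [map_pow, map_one] at this
    rw [← this]; congr 1; exact hx.symm
  have hun : ‖u‖ = 1 := Complex.norm_eq_one_of_pow_eq_one hu hm.ne'
  have hψn : ∀ i : ZMod n, ‖(ZMod.stdAddChar i : ℂ)‖ = 1 := by
    intro i
    apply Complex.norm_eq_one_of_pow_eq_one (n := n) _ (NeZero.ne n)
    rw [← AddChar.map_nsmul_eq_pow]; simp
  have huu : u * (starRingEnd ℂ) u = 1 := by
    rw [Complex.mul_conj, Complex.normSq_eq_norm_sq, hun]; simp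
  have hsum : ∑ i : ZMod n, (mu T i : ℝ) * (1 - ((ZMod.stdAddChar i : ℂ) * (starRingEnd ℂ) u).re) = 0 := by
    have h1 : ∑ i : ZMod n, (mu T i : ℂ) * ((ZMod.stdAddChar i : ℂ) * (starRingEnd ℂ) u) = Fintype.card ι := by
      have : T.trace * (starRingEnd ℂ) u = Fintype.card ι := by
        have : T.trace = u * Fintype.card ι := by simp only [u]; field_simp
        rw [this, mul_right_comm, huu, one_mul]
      rw [← this, trace_mu T hT, Finset.sum_mul]
      exact Finset.sum_congr rfl fun i _ => by ring
    have h2 := congrArg Complex.re h1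
    simp only [Complex.re_sum, Complex.natCast_re] at h2
    have h3 : ∀ i : ZMod n, ((mu T i : ℂ) * ((ZMod.stdAddChar i : ℂ) * (starRingEnd ℂ) u)).re =
      (mu T i : ℝ) * (((ZMod.stdAddChar i : ℂ) * (starRingEnd ℂ) u)).re := by
      intro i; rw [← Complex.ofReal_natCast, Complex.re_ofReal_mul]
    simp only [h3] at h2
    simp only [mul_sub, mul_one, Finset.sum_sub_distrib, h2]
    rw [← Nat.cast_sum, sum_mu T hT]; simp
  have hle : ∀ i : ZMod n, ((ZMod.stdAddChar i : ℂ) * (starRingEnd ℂ) u).re ≤ 1 := by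
    intro i
    refine (Complex.re_le_norm _).trans ?_
    rw [norm_mul, hψn, RCLike.norm_conj, hun]; simp
  rw [Finset.sum_eq_zero_iff_of_nonneg (fun i _ => mul_nonneg (Nat.cast_nonneg _) (sub_nonneg.2 (hle i)))] at hsum
  refine ⟨u, ?_⟩
  have h1 := cycP_sum T (1 : ZMod n)
  have h2 : T ^ (1 : ZMod n).val = T := by
    rw [ZMod.val_one_eq_one_mod]
    conv_rhs => rw [← pow_one T, ← Nat.div_add_mod 1 n, pow_add, pow_mul, hT, one_pow, one_mul]
  rw [h2] at h1
  rw [← cycP_sum_one (n := n) T, Finset.smul_sum]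
  conv_lhs => rw [← h1]
  refine Finset.sum_congr rfl fun i _ => ?_
  by_cases hi : mu T i = 0
  · rw [mu_zero T hT i hi]; simp
  · have h3 := hsum i (Finset.mem_univ i)
    have h4 : ((ZMod.stdAddChar i : ℂ) * (starRingEnd ℂ) u).re = 1 := by
      rcases mul_eq_zero.1 h3 with h | h
      · exact absurd (by exact_mod_cast h) hi
      · linarith
    have h5 := eq_one_of_re (by rw [norm_mul, hψn, RCLike.norm_conj, hun]; simp) h4
    have h6 : (ZMod.stdAddChar i : ℂ) = u := by
      calc (ZMod.stdAddChar i : ℂ) = (ZMod.stdAddChar i * (starRingEnd ℂ) u) * u := by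
            rw [mul_assoc, mul_comm ((starRingEnd ℂ) u), huu, mul_one]
        _ = u := by rw [h5, one_mul]
    rw [one_mul, h6]
end

section
variable {X : Type} [Group X] [Fintype X] {ι : Type} [Fintype ι] [DecidableEq ι] [Nonempty ι]
    (W : GA X →ₐ[ℂ] Matrix ι ι ℂ)

lemma W_pow (x : X) (k : ℕ) : W (oo x) ^ k = W (oo (x ^ k)) := by
  induction k with
  | zero => simp [oo_one]
  | succ k ih => rw [pow_succ, ih, pow_succ, oo_mul, map_mul]

lemma W_trace_integral (x : X) : IsIntegral ℤ (W (oo x)).trace := by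
  have : NeZero (Fintype.card X) := ⟨Fintype.card_ne_zero⟩
  apply trace_integral (n := Fintype.card X)
  rw [W_pow, pow_card_eq_one, oo_one, map_one]

lemma GA_sum (a : GA X) : a = ∑ x, a.coeff x • oo x := by
  classical
  apply MonoidAlgebra.ext
  ext y
  simp [MonoidAlgebra.coeff_sum, oo_coeff]

lemma scalar_integral (a : GA X) (ha : ∀ x, IsIntegral ℤ (a.coeff x)) (c : ℂ) (hc : W a = c • 1) :
    IsIntegral ℤ c := by
  let O := integralClosure ℤ ℂ
  let ρ : X →* Matrix ι ι ℂ := (W : GA X →* Matrix ι ι ℂ).comp (MonoidAlgebra.of ℂ X)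
  let L := MonoidAlgebra.lift O (Matrix ι ι ℂ) X ρ
  let b : MonoidAlgebra O X := ∑ x, MonoidAlgebra.single x (⟨a.coeff x, ha x⟩ : O)
  have hb : L b = c • 1 := by
    rw [← hc]
    conv_rhs => rw [GA_sum a]
    simp only [b, map_sum, L, MonoidAlgebra.lift_single, map_smul]
    rfl
  have h1 : IsIntegral O (L b) := (IsIntegral.of_finite O b).map L
  rw [hb] at h1
  have h2 : IsIntegral O c := by
    have : Function.Injective (Algebra.ofId ℂ (Matrix ι ι ℂ)) := (algebraMap ℂ (Matrix ι ι ℂ)).injective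
    rw [← isIntegral_algHom_iff ((Algebra.ofId ℂ (Matrix ι ι ℂ)).restrictScalars O) this]
    convert h1 using 1
    simp [Algebra.algebraMap_eq_smul_one]
  exact isIntegral_trans (A := O) c h2

lemma int_of_integral {a b : ℕ} (hb : b ≠ 0) (h : IsIntegral ℤ ((a : ℂ) / b)) : b ∣ a := by
  have h1 : IsIntegral ℤ ((a : ℚ) / b) := by
    rw [← isIntegral_algHom_iff ((Algebra.ofId ℚ ℂ).restrictScalars ℤ) (algebraMap ℚ ℂ).injective]
    convert h using 1
    simp [Algebra.ofId_apply]
  obtain ⟨y, hy⟩ := IsIntegrallyClosed.isIntegral_iff.1 h1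
  have hb' : (b : ℚ) ≠ 0 := by exact_mod_cast hb
  rw [eq_div_iff hb'] at hy
  have : (b : ℤ) ∣ a := ⟨y, by rw [mul_comm]; simp at hy; exact_mod_cast hy.symm⟩
  exact_mod_cast this

variable (hW : Function.Surjective W) (f : X → ℂ) (hf : ∀ x, f x = (W (oo x)).trace)
include hf

lemma f_one : f 1 = Fintype.card ι := by rw [hf, oo_one, map_one, Matrix.trace_one]

lemma f_conj (x y : X) : f (x * y * x⁻¹) = f y := by
  rw [hf, hf, oo_mul, oo_mul, map_mul, map_mul, Matrix.trace_mul_comm, ← mul_assoc, ← map_mul, ← oo_mul]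
  simp [oo_one]

include hW

lemma row_orth : ∑ x, f x⁻¹ * f x = Fintype.card X := by
  have h := congrArg Matrix.trace (EE_props W hW f hf).1
  have hX : (Fintype.card X : ℂ) ≠ 0 := by simp
  have hd : (Fintype.card ι : ℂ) ≠ 0 := by simp
  simp only [EE, map_sum, map_smul, Matrix.trace_sum, Matrix.trace_smul, ← hf, Matrix.trace_one,
    f_one W f hf, smul_eq_mul, mul_assoc, ← Finset.mul_sum] at h
  field_simp at h
  linear_combination h

lemma card_dvd : Fintype.card ι ∣ Fintype.card X := by
  have hX : (Fintype.card X : ℂ) ≠ 0 := by simp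
  have hd : (Fintype.card ι : ℂ) ≠ 0 := by simp
  apply int_of_integral Fintype.card_ne_zero
  apply scalar_integral W (((Fintype.card X : ℂ) / Fintype.card ι) • EE f)
  · intro x
    rw [MonoidAlgebra.coeff_smul, Finsupp.smul_apply, EE_coeff, f_one W f hf, smul_eq_mul]
    have : (Fintype.card X : ℂ) / Fintype.card ι * (Fintype.card ι / Fintype.card X * f x⁻¹) = f x⁻¹ := by
      field_simp
    rw [this, hf]
    exact W_trace_integral W _
  · rw [map_smul, (EE_props W hW f hf).1]

/-- Burnside: coprime class size. -/
lemma burnside_class (g : X) (hg : Nat.Coprime (Fintype.card ι) (Nat.card (ConjClasses.carrier (ConjClasses.mk g)))) :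
    f g = 0 ∨ ∃ c : ℂ, W (oo g) = c • 1 := by
  classical
  have : NeZero (Fintype.card X) := ⟨Fintype.card_ne_zero⟩
  have hd : (Fintype.card ι : ℂ) ≠ 0 := by simp
  let k : GA X := ∑ y with IsConj g y, oo y
  have hkc : ∀ a, k * a = a * k := by
    intro a
    induction a using MonoidAlgebra.induction_linear with
    | zero => simp
    | add x y hx hy => rw [mul_add, add_mul, hx, hy]
    | single m r =>
      rw [single_eq m r, mul_smul_comm, smul_mul_assoc]
      congr 1
      simp only [k, Finset.sum_mul, Finset.mul_sum, ← oo_mul]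
      refine Finset.sum_bij (fun y _ => m⁻¹ * y * m) ?_ ?_ ?_ ?_
      · intro y hy
        simp only [Finset.mem_filter, Finset.mem_univ, true_and] at hy ⊢
        refine hy.trans ?_
        rw [isConj_iff]; exact ⟨m⁻¹, by simp⟩
      · intro a _ b _ h
        simpa using h
      · intro b hb
        refine ⟨m * b * m⁻¹, ?_, by group⟩
        simp only [Finset.mem_filter, Finset.mem_univ, true_and] at hb ⊢
        refine hb.trans ?_
        rw [isConj_iff]; exact ⟨m, by simp⟩
      · intro y _; congr 1; group
  obtain ⟨c, hc⟩ := scalar_of_comm (W k) (by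
    intro B; obtain ⟨b, rfl⟩ := hW B; rw [← map_mul, ← map_mul, hkc])
  have hci : IsIntegral ℤ c := by
    apply scalar_integral W k _ c hc
    intro x
    simp only [k, MonoidAlgebra.coeff_sum, Finsupp.finsetSum_apply, oo_coeff]
    refine IsIntegral.sum _ fun i _ => ?_
    split_ifs
    · exact isIntegral_one
    · exact isIntegral_zero
  have htr : c * Fintype.card ι = Nat.card (ConjClasses.carrier (ConjClasses.mk g)) * f g := by
    have h := congrArg Matrix.trace hc
    rw [Matrix.trace_smul, Matrix.trace_one, smul_eq_mul] at h
    rw [← h]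
    simp only [k, map_sum, Matrix.trace_sum, ← hf]
    have : ∀ y ∈ Finset.univ.filter (fun y => IsConj g y), f y = f g := by
      intro y hy
      simp only [Finset.mem_filter, Finset.mem_univ, true_and] at hy
      obtain ⟨x, hx⟩ := isConj_iff.1 hy
      rw [← hx, f_conj W f hf]
    rw [Finset.sum_congr rfl this, Finset.sum_const, nsmul_eq_mul]
    congr 2
    rw [Nat.card_eq_fintype_card, Fintype.card_subtype]
    congr 1; ext y
    rw [Finset.mem_filter, Finset.mem_filter, ConjClasses.mem_carrier_iff_mk_eq, ConjClasses.mk_eq_mk_iff_isConj]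
    simp only [Finset.mem_univ, true_and]
    exact isConj_comm
  have hintg : IsIntegral ℤ (f g / Fintype.card ι) := by
    set m := Nat.card (ConjClasses.carrier (ConjClasses.mk g))
    have hb := Nat.gcd_eq_gcd_ab (Fintype.card ι) m
    rw [hg.gcd_eq_one] at hb
    have hb' : (1 : ℂ) = Fintype.card ι * ((Fintype.card ι).gcdA m : ℤ) + m * ((Fintype.card ι).gcdB m : ℤ) := by
      exact_mod_cast congrArg (Int.cast : ℤ → ℂ) hb
    have : f g / Fintype.card ι = f g * ((Fintype.card ι).gcdA m : ℤ) + c * ((Fintype.card ι).gcdB m : ℤ) := by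
      rw [div_eq_iff hd]
      linear_combination (f g) * hb' - (((Fintype.card ι).gcdB m : ℤ) : ℂ) * htr
    rw [this]
    refine IsIntegral.add (IsIntegral.mul ?_ (isIntegral_intCast _)) (IsIntegral.mul hci (isIntegral_intCast _))
    rw [hf]; exact W_trace_integral W g
  rw [hf] at hintg ⊢
  exact burnside_scalar (n := Fintype.card X) _ (by rw [W_pow, pow_card_eq_one, oo_one, map_one]) hintg
end

end P2

section P3
set_option linter.unusedSectionVars false
open Matrix

noncomputable def deg {X : Type} [Group X] (f : X → ℂ) : ℕ := ⌊(f 1).re⌋₊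

section basics
variable {X : Type} [Group X] [Fintype X]

lemma irr_rep {f : X → ℂ} (hf : f ∈ irr X) : 0 < deg f ∧ f 1 = deg f ∧
    ∃ W : GA X →ₐ[ℂ] Matrix (Fin (deg f)) (Fin (deg f)) ℂ, Function.Surjective W ∧
    ∀ x, f x = (W (oo x)).trace := by
  obtain ⟨d, hd, W, hW, h⟩ := mem_irr.1 hf
  have h1 : f 1 = d := by rw [h, oo_one, map_one]; simp
  have h2 : deg f = d := by rw [deg, h1]; simp
  rw [h2]
  exact ⟨hd, h1, W, hW, h⟩

lemma deg_pos {f : X → ℂ} (hf : f ∈ irr X) : 0 < deg f := (irr_rep hf).1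
lemma irr_one {f : X → ℂ} (hf : f ∈ irr X) : f 1 = deg f := (irr_rep hf).2.1
noncomputable def rep {f : X → ℂ} (hf : f ∈ irr X) :
  GA X →ₐ[ℂ] Matrix (Fin (deg f)) (Fin (deg f)) ℂ := (irr_rep hf).2.2.choose
lemma rep_surj {f : X → ℂ} (hf : f ∈ irr X) : Function.Surjective (rep hf) :=
  (irr_rep hf).2.2.choose_spec.1
lemma rep_trace {f : X → ℂ} (hf : f ∈ irr X) (x : X) : f x = (rep hf (oo x)).trace :=
  (irr_rep hf).2.2.choose_spec.2 x
lemma deg_of_rep {ι : Type} [Fintype ι] [DecidableEq ι] [Nonempty ι]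
    (W : GA X →ₐ[ℂ] Matrix ι ι ℂ) (f : X → ℂ) (h : ∀ x, f x = (W (oo x)).trace) :
    deg f = Fintype.card ι := by
  rw [deg, h, oo_one, map_one, Matrix.trace_one]; simp

lemma fin_deg_ne {f : X → ℂ} (hf : f ∈ irr X) : Nonempty (Fin (deg f)) := ⟨⟨0, deg_pos hf⟩⟩

lemma irr_integral {f : X → ℂ} (hf : f ∈ irr X) (x : X) : IsIntegral ℤ (f x) := by
  have := fin_deg_ne hf
  rw [rep_trace hf]; exact W_trace_integral _ x

lemma irr_dvd {f : X → ℂ} (hf : f ∈ irr X) : deg f ∣ Fintype.card X := by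
  have := fin_deg_ne hf
  simpa using card_dvd (rep hf) (rep_surj hf) f (rep_trace hf)

lemma irr_conj {f : X → ℂ} (hf : f ∈ irr X) (x y : X) : f (x * y * x⁻¹) = f y := by
  have := fin_deg_ne hf
  exact f_conj (rep hf) f (rep_trace hf) x y

lemma irr_row {f : X → ℂ} (hf : f ∈ irr X) : ∑ x, f x⁻¹ * f x = Fintype.card X := by
  have := fin_deg_ne hf
  exact row_orth (rep hf) (rep_surj hf) f (rep_trace hf)

lemma irr_sum_deg {x : X} (hx : x ≠ 1) : ∑ f ∈ irr X, (deg f : ℂ) * f x = 0 := by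
  have h := irr_orth x (1 : X)
  have h2 : Nat.card {y : X // y⁻¹ * x * y = 1} = 0 := by
    rw [Nat.card_eq_zero]; left
    refine ⟨fun ⟨y, hy⟩ => hx ?_⟩
    have : x = y * (y⁻¹ * x * y) * y⁻¹ := by group
    rw [this, hy]; simp
  rw [h2, inv_one] at h
  rw [← Nat.cast_zero, ← h]
  refine Finset.sum_congr rfl fun f hf => ?_
  rw [irr_one hf, mul_comm]

lemma irr_sum_deg_one : ∑ f ∈ irr X, (deg f : ℂ) * f 1 = Fintype.card X := by
  have h := irr_orth (1 : X) (1 : X)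
  have h2 : Nat.card {y : X // y⁻¹ * 1 * y = 1} = Fintype.card X := by
    rw [← Nat.card_eq_fintype_card]
    exact Nat.card_congr (Equiv.subtypeUnivEquiv (by simp))
  rw [h2, inv_one] at h
  rw [← h]
  refine Finset.sum_congr rfl fun f hf => ?_
  rw [irr_one hf]

lemma irr_sum_sq : ∑ f ∈ irr X, deg f * deg f = Fintype.card X := by
  have h := irr_sum_deg_one (X := X)
  have h2 : ∑ f ∈ irr X, (deg f : ℂ) * f 1 = ∑ f ∈ irr X, (deg f : ℂ) * deg f :=
    Finset.sum_congr rfl fun f hf => by rw [irr_one hf]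
  rw [h2] at h
  exact_mod_cast h

lemma rep_trace_lin {ι : Type} [Fintype ι] [DecidableEq ι]
    (W : GA X →ₐ[ℂ] Matrix ι ι ℂ) (f : X → ℂ) (h : ∀ x, f x = (W (oo x)).trace) (a : GA X) :
    (W a).trace = ∑ x, a.coeff x * f x := by
  conv_lhs => rw [GA_sum a]
  simp only [map_sum, map_smul, Matrix.trace_sum, Matrix.trace_smul, h, smul_eq_mul]

lemma irr_sum_lin (a : GA X) : ∑ f ∈ irr X, (deg f : ℂ) * ∑ x, a.coeff x * f x
    = Fintype.card X * a.coeff 1 := by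
  classical
  simp_rw [Finset.mul_sum]
  rw [Finset.sum_comm]
  rw [Finset.sum_eq_single (1 : X)]
  · simp_rw [mul_left_comm _ (a.coeff 1)]
    rw [← Finset.mul_sum, irr_sum_deg_one, mul_comm]
  · intro x _ hx
    simp_rw [mul_left_comm _ (a.coeff x)]
    rw [← Finset.mul_sum, irr_sum_deg hx, mul_zero]
  · simp

lemma map_oo {Y : Type} [Group Y] (φ : Y →* X) (y : Y) :
    MonoidAlgebra.mapDomainAlgHom ℂ ℂ φ (oo y) = oo (φ y) := by
  simp [oo]

lemma map_surj {Y : Type} [Group Y] (φ : Y →* X) (hφ : Function.Surjective φ) :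
    Function.Surjective (MonoidAlgebra.mapDomainAlgHom ℂ ℂ φ) := by
  intro a
  choose s hs using hφ
  refine ⟨∑ x, a.coeff x • oo (s x), ?_⟩
  simp only [map_sum, map_smul, map_oo, hs]
  exact (GA_sum a).symm

lemma irr_comp {Y : Type} [Group Y] [Fintype Y] (φ : Y →* X) (hφ : Function.Surjective φ)
    {f : X → ℂ} (hf : f ∈ irr X) : (fun y => f (φ y)) ∈ irr Y := by
  have := fin_deg_ne hf
  refine mem_irr.2 (irr_of_rep ((rep hf).comp (MonoidAlgebra.mapDomainAlgHom ℂ ℂ φ)) ?_ _ ?_)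
  · exact (rep_surj hf).comp (map_surj φ hφ)
  · intro y
    rw [AlgHom.comp_apply, map_oo, rep_trace hf]

lemma one_mem_irr : (fun _ => 1 : X → ℂ) ∈ irr X := by
  refine mem_irr.2 (irr_of_rep (ι := Unit) (MonoidAlgebra.lift ℂ _ X 1) ?_ _ ?_)
  · intro B
    refine ⟨(B () ()) • oo 1, ?_⟩
    ext i j
    simp [oo_one]
  · intro x
    rw [oo, MonoidAlgebra.lift_of]; simp

lemma deg_one : deg (fun _ => 1 : X → ℂ) = 1 := by simp [deg]

lemma avg_nat {f : X → ℂ} (hf : f ∈ irr X) (C : Subgroup X) [Fintype C] :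
    ∃ m : ℕ, ∑ x : C, f x = m * Nat.card C := by
  have hC : (Fintype.card C : ℂ) ≠ 0 := by simp
  let a : Matrix (Fin (deg f)) (Fin (deg f)) ℂ := (Fintype.card C : ℂ)⁻¹ • ∑ x : C, rep hf (oo x)
  have h1 : ∀ y : C, rep hf (oo y) * a = a := by
    intro y
    simp only [a, mul_smul_comm, Finset.mul_sum, ← map_mul, ← oo_mul]
    congr 1
    exact Fintype.sum_equiv (Equiv.mulLeft y) _ _ fun x => by simp
  have h2 : a * a = a := by
    conv_lhs => enter [1]; simp only [a]
    rw [smul_mul_assoc, Finset.sum_mul, Finset.sum_congr rfl fun y _ => h1 y]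
    rw [Finset.sum_const, ← Nat.cast_smul_eq_nsmul ℂ, smul_smul, Finset.card_univ, inv_mul_cancel₀ hC, one_smul]
  obtain ⟨m, hm, _⟩ := trace_idem_nat a h2
  refine ⟨m, ?_⟩
  rw [← hm]
  simp only [a, Matrix.trace_smul, Matrix.trace_sum, ← rep_trace, smul_eq_mul, Nat.card_eq_fintype_card]
  field_simp
end basics

section simple
variable {S : Type} [Group S] [Fintype S] [IsSimpleGroup S] (hna : ¬ ∀ x y : S, x * y = y * x)

include hna in
lemma center_triv {x : S} (hx : ∀ y, x * y = y * x) : x = 1 := by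
  have hc := (inferInstance : (Subgroup.center S).Normal).eq_bot_or_eq_top
  rcases hc with h | h
  · have : x ∈ Subgroup.center S := Subgroup.mem_center_iff.2 fun y => (hx y).symm
    rw [h] at this; simpa using this
  · exact absurd (fun x y => ((Subgroup.mem_center_iff.1 (h ▸ Subgroup.mem_top y : y ∈ Subgroup.center S)) x)) hna

lemma simple_faithful {f : S → ℂ} (hf : f ∈ irr S) (hf1 : f ≠ fun _ => 1) {x : S}
    (hx : rep hf (oo x) = 1) : x = 1 := by
  have := fin_deg_ne hf
  let ρ : S →* Matrix (Fin (deg f)) (Fin (deg f)) ℂ := ((rep hf : GA S →ₐ[ℂ] _) : GA S →* _).comp (MonoidAlgebra.of ℂ S)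
  have hρ : ∀ x, ρ x = rep hf (oo x) := fun x => rfl
  have hn : ρ.ker.Normal := inferInstance
  rcases hn.eq_bot_or_eq_top with h | h
  · have : x ∈ ρ.ker := by rw [MonoidHom.mem_ker, hρ, hx]
    rw [h] at this; simpa using this
  · exfalso
    apply hf1
    have h1 : ∀ x, f x = deg f := by
      intro x
      have : x ∈ ρ.ker := h ▸ Subgroup.mem_top x
      rw [MonoidHom.mem_ker, hρ] at this
      rw [rep_trace hf, this]; simp
    have h2 := irr_row hf
    simp only [h1, Finset.sum_const, Finset.card_univ, nsmul_eq_mul] at h2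
    have hX : (Fintype.card S : ℂ) ≠ 0 := by simp
    have h3 : (deg f : ℂ) * deg f = 1 := by
      apply mul_left_cancel₀ hX; rw [h2, mul_one]
    have h4 : deg f = 1 := by
      have : deg f * deg f = 1 := by exact_mod_cast h3
      exact Nat.eq_one_of_mul_eq_one_right this
    funext x; rw [h1, h4]; simp

include hna

lemma simple_scalar {f : S → ℂ} (hf : f ∈ irr S) (hf1 : f ≠ fun _ => 1) {x : S} {c : ℂ}
    (hx : rep hf (oo x) = c • 1) : x = 1 := by
  apply center_triv hna
  intro y
  have h : rep hf (oo (x * y * (y * x)⁻¹)) = 1 := by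
    rw [oo_mul, oo_mul, map_mul, map_mul, hx]
    have : (c • 1 : Matrix (Fin (deg f)) (Fin (deg f)) ℂ) * rep hf (oo y) = rep hf (oo y) * (c • 1) := by simp
    rw [this, ← hx, ← map_mul, ← map_mul, ← oo_mul, ← oo_mul]
    simp [oo_one]
  have := simple_faithful hf hf1 h
  rwa [mul_inv_eq_one] at this

lemma simple_deg {f : S → ℂ} (hf : f ∈ irr S) (hf1 : f ≠ fun _ => 1) : deg f ≠ 1 := by
  intro hd
  apply hna
  intro x y
  have hsub : Subsingleton (Fin (deg f)) := by rw [hd]; infer_instance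
  have h : rep hf (oo x) * rep hf (oo y) = rep hf (oo y) * rep hf (oo x) := by
    ext i j
    have : ∀ k l : Fin (deg f), k = l := fun k l => Subsingleton.elim k l
    rw [this j i]
    simp only [Matrix.mul_apply]
    refine Finset.sum_congr rfl fun k _ => ?_
    rw [this k i, mul_comm]
  have h2 : rep hf (oo (x * y * (y * x)⁻¹)) = 1 := by
    rw [oo_mul, oo_mul, map_mul, map_mul, h, ← map_mul, ← map_mul, ← oo_mul, ← oo_mul]
    simp [oo_one]
  have := simple_faithful hf hf1 h2
  rwa [mul_inv_eq_one] at this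

lemma exists_nontriv : ∃ f ∈ irr S, f ≠ fun _ => 1 := by
  by_contra h
  push Not at h
  obtain ⟨x, hx⟩ : ∃ x : S, x ≠ 1 := exists_ne 1
  have h1 := irr_sum_deg hx
  rw [Finset.sum_eq_single (fun _ => 1)] at h1
  · simp [deg_one] at h1
  · intro b hb hb'; exact absurd (h b hb) hb'
  · intro h; exact absurd one_mem_irr h
end simple

lemma rank_one_sandwich {ι : Type} [Fintype ι] [DecidableEq ι] (P : Matrix ι ι ℂ) (h : P.rank = 1)
    (A : Matrix ι ι ℂ) : ∃ c : ℂ, P * A * P = c • P := by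
  obtain ⟨v, hv, hw⟩ := finrank_eq_one_iff'.1 (show Module.finrank ℂ (LinearMap.range P.mulVecLin) = 1 from h)
  choose c hc using hw
  obtain ⟨r, w, hP⟩ : ∃ r w : ι → ℂ, P = Matrix.vecMulVec w r := by
    refine ⟨fun j => c ⟨P *ᵥ Pi.single j 1, ⟨Pi.single j 1, rfl⟩⟩, v.1, ?_⟩
    ext i j
    have := congrArg (fun w => w.1 i) (hc ⟨P *ᵥ Pi.single j 1, ⟨Pi.single j 1, rfl⟩⟩)
    simp only [Submodule.coe_smul, Pi.smul_apply, smul_eq_mul] at this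
    rw [Matrix.vecMulVec_apply, mul_comm, this]
    simp
  refine ⟨r ⬝ᵥ (A *ᵥ w), ?_⟩
  rw [hP, mul_assoc, Matrix.mul_vecMulVec, Matrix.vecMulVec_mul_vecMulVec, Matrix.vecMulVec_smul]

lemma class_card {X : Type} [Group X] [Fintype X] (g : X) :
    Nat.card (ConjClasses.carrier (ConjClasses.mk g)) = (Subgroup.centralizer {g}).index := by
  classical
  have h := ConjClasses.card_carrier g
  rw [← Nat.card_eq_fintype_card, ← Nat.card_eq_fintype_card, ← Nat.card_eq_fintype_card,
    ← Subgroup.nat_card_centralizer_nat_card_stabilizer] at h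
  rw [h, ← (Subgroup.centralizer {g}).card_mul_index, Nat.mul_div_cancel_left _ Nat.card_pos]

section lemA
variable {S : Type} [Group S] [Fintype S] [IsSimpleGroup S] (hna : ¬ ∀ x y : S, x * y = y * x)
include hna

lemma vanish {q : ℕ} [Fact q.Prime] (Q : Sylow q S) {f : S → ℂ} (hf : f ∈ irr S) (hd : deg f = q)
    {x : S} (hx : x ≠ 1) (hQ : (Q : Subgroup S) ≤ Subgroup.centralizer {x}) : f x = 0 := by
  have := fin_deg_ne hf
  have hq : q.Prime := Fact.out
  have hf1 : f ≠ fun _ => 1 := by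
    rintro rfl; rw [deg_one] at hd; exact hq.one_lt.ne hd
  rcases burnside_class (rep hf) (rep_surj hf) f (rep_trace hf) x (by
    rw [Fintype.card_fin, hd, class_card, hq.coprime_iff_not_dvd]
    intro h
    exact Q.not_dvd_index (h.trans (Subgroup.index_dvd_of_le hQ))) with h | ⟨c, h⟩
  · exact h
  · exact absurd (simple_scalar hna hf hf1 h) hx

theorem lemmaA {q : ℕ} [Fact q.Prime] {f : S → ℂ} (hf : f ∈ irr S) (hd : deg f = q) :
    ∃ z : S, orderOf z = q ∧ Nat.card (Subgroup.centralizer {z}) = q ∧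
      ∀ f' ∈ irr S, deg f' = q → f' z = 0 := by
  classical
  have hne := fin_deg_ne hf
  have hq : q.Prime := Fact.out
  have hf1 : f ≠ fun _ => 1 := by
    rintro rfl; rw [deg_one] at hd; exact hq.one_lt.ne hd
  have hdvd : q ∣ Nat.card S := by rw [← hd, Nat.card_eq_fintype_card]; exact irr_dvd hf
  obtain ⟨Q⟩ := (inferInstance : Nonempty (Sylow q S))
  have hQn : Nontrivial Q := by
    rw [← Finite.one_lt_card_iff_nontrivial]
    exact hq.one_lt.trans_le (Nat.le_of_dvd Nat.card_pos (Q.dvd_card_of_dvd_card hdvd))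
  have hcn := Q.isPGroup'.center_nontrivial
  have hcd : q ∣ Nat.card (Subgroup.center Q) := by
    obtain ⟨k, hk⟩ := (Q.isPGroup'.to_subgroup (Subgroup.center Q)).exists_card_eq
    rw [hk]
    apply dvd_pow_self
    rintro rfl
    rw [pow_zero] at hk
    rw [← Finite.one_lt_card_iff_nontrivial, hk] at hcn
    exact lt_irrefl _ hcn
  obtain ⟨⟨⟨z, hzQ⟩, hzc⟩, hz⟩ := exists_prime_orderOf_dvd_card' q hcd
  rw [Subgroup.orderOf_mk, Subgroup.orderOf_mk] at hz
  have hQz : (Q : Subgroup S) ≤ Subgroup.centralizer {z} := by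
    intro y hy
    rw [Subgroup.mem_centralizer_singleton_iff]
    exact congrArg Subtype.val (Subgroup.mem_center_iff.1 hzc ⟨y, hy⟩)
  have hz1 : z ≠ 1 := by
    rintro rfl; rw [orderOf_one] at hz; exact hq.one_lt.ne hz
  refine ⟨z, hz, ?_, fun f' hf' hd' => vanish hna Q hf' hd' hz1 hQz⟩
  have : NeZero q := ⟨hq.ne_zero⟩
  set T := rep hf (oo z) with hTdef
  have hT : T ^ q = 1 := by rw [W_pow, ← hz, pow_orderOf_eq_one, oo_one, map_one]
  have htr : ∀ i : ZMod q, (cycP T i).rank = 1 := by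
    intro i
    have hdc : (deg f : ℂ) = q := by exact_mod_cast hd
    have h1 := mu_eq T hT i
    rw [cycP, Matrix.trace_smul, Matrix.trace_sum, Finset.sum_eq_single 0] at h1
    · rw [ZMod.val_zero, pow_zero, zero_mul, neg_zero, AddChar.map_zero_eq_one, one_smul, Matrix.trace_one,
        Fintype.card_fin, hdc, smul_eq_mul, inv_mul_cancel₀ (by exact_mod_cast hq.ne_zero)] at h1
      have : mu T i = 1 := by exact_mod_cast h1.symm
      exact this
    · intro s _ hs
      rw [Matrix.trace_smul, W_pow, ← rep_trace]
      rw [vanish hna Q hf hd, smul_zero]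
      · intro h
        have := orderOf_dvd_of_pow_eq_one h
        rw [hz] at this
        exact hs ((ZMod.val_eq_zero s).1 (Nat.eq_zero_of_dvd_of_lt this (ZMod.val_lt s)))
      · refine hQz.trans ?_
        intro y hy
        rw [Subgroup.mem_centralizer_singleton_iff] at hy ⊢
        exact (Commute.pow_right (show Commute y z from hy) _)
    · simp
  have hdiag : ∀ x ∈ Subgroup.centralizer {z}, ∃ c : ZMod q → ℂ, rep hf (oo x) = ∑ i, c i • cycP T i := by
    intro x hx
    have hxT : rep hf (oo x) * T = T * rep hf (oo x) := by
      rw [Subgroup.mem_centralizer_singleton_iff] at hx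
      rw [hTdef, ← map_mul, ← map_mul, ← oo_mul, ← oo_mul, hx]
    choose c hc using fun i : ZMod q => rank_one_sandwich (cycP T i) (htr i) (rep hf (oo x))
    refine ⟨c, ?_⟩
    conv_lhs => rw [← mul_one (rep hf (oo x)), ← cycP_sum_one (n := q) T, Finset.mul_sum]
    refine Finset.sum_congr rfl fun i _ => ?_
    rw [← hc, ← cycP_comm T _ hxT, mul_assoc, cycP_mul T hT]; simp
  have hPP : ∀ i j : ZMod q, cycP T i * cycP T j = cycP T j * cycP T i := by
    intro i j
    rw [cycP_mul T hT, cycP_mul T hT]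
    split_ifs with h1 h2 h2
    · rw [h1]
    · exact absurd h1.symm h2
    · exact absurd h2.symm h1
    · rfl
  have hab : ∀ x ∈ Subgroup.centralizer {z}, ∀ y ∈ Subgroup.centralizer {z}, x * y = y * x := by
    intro x hx y hy
    obtain ⟨c, hc⟩ := hdiag x hx
    obtain ⟨d, hd⟩ := hdiag y hy
    have h : rep hf (oo x) * rep hf (oo y) = rep hf (oo y) * rep hf (oo x) := by
      have : Commute (rep hf (oo x)) (rep hf (oo y)) := by
        rw [hc, hd]
        refine Commute.sum_left _ _ _ fun i _ => Commute.sum_right _ _ _ fun j _ => ?_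
        exact ((show Commute _ _ from hPP i j).smul_left _).smul_right _
      exact this
    have h2 : rep hf (oo (x * y * (y * x)⁻¹)) = 1 := by
      rw [oo_mul, oo_mul, map_mul, map_mul, h, ← map_mul, ← map_mul, ← oo_mul, ← oo_mul]
      simp [oo_one]
    have := simple_faithful hf hf1 h2
    rwa [mul_inv_eq_one] at this
  obtain ⟨m, hm⟩ := avg_nat hf (Subgroup.centralizer {z})
  rw [Finset.sum_eq_single 1] at hm
  · rw [Subgroup.coe_one, irr_one hf, hd] at hm
    have hm' : q = m * Nat.card (Subgroup.centralizer {z}) := by exact_mod_cast hm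
    rcases (Nat.dvd_prime hq).1 ⟨m, by rw [mul_comm]; exact hm'⟩ with h | h
    · exfalso
      have hzc : z ∈ Subgroup.centralizer {z} := by rw [Subgroup.mem_centralizer_singleton_iff]
      have := Subgroup.eq_bot_of_card_eq _ h
      rw [this] at hzc
      exact hz1 (by simpa using hzc)
    · exact h
  · intro x _ hx
    apply vanish hna Q hf hd
    · intro h; exact hx (Subtype.ext h)
    · intro y hy
      rw [Subgroup.mem_centralizer_singleton_iff]
      exact hab y (hQz hy) x x.2
  · simp
end lemA

end P3

section P4
set_option linter.unusedSectionVars false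

section mults
variable {S : Type} [Group S] [Fintype S]

lemma zpow_val_inv {q : ℕ} [NeZero q] (z : S) (hz : z ^ q = 1) (s : ZMod q) :
    (z ^ s.val)⁻¹ = z ^ (-s).val := by
  rw [inv_eq_iff_mul_eq_one]
  have := pow_val_add z hz s (-s)
  rw [add_neg_cancel, ZMod.val_zero, pow_zero] at this
  exact this.symm

lemma mults {q : ℕ} [NeZero q] (z : S) (hz : z ^ q = 1) :
    ∃ a : (S → ℂ) → ZMod q → ℕ, ∀ f (hf : f ∈ irr S), (∑ i, a f i = deg f) ∧
      (∀ s : ZMod q, f (z ^ s.val) = ∑ i, ZMod.stdAddChar (s * i) * (a f i : ℂ)) ∧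
      (∀ i, (q : ℂ) * a f i = ∑ s : ZMod q, ZMod.stdAddChar (-(s * i)) * f (z ^ s.val)) ∧
      ((∀ i ≠ 0, a f i = 0) → rep hf (oo z) = 1) := by
  classical
  refine ⟨fun f => if hf : f ∈ irr S then fun i => mu (rep hf (oo z)) i else 0, fun f hf => ?_⟩
  have hne := fin_deg_ne hf
  have hT : (rep hf (oo z)) ^ q = 1 := by rw [W_pow, hz, oo_one, map_one]
  simp only [hf, dif_pos]
  refine ⟨?_, ?_, ?_, ?_⟩
  · rw [sum_mu _ hT, Fintype.card_fin]
  · intro s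
    rw [← trace_pow_mu _ hT, W_pow, rep_trace hf]
  · intro i
    rw [← mu_eq _ hT, cycP, Matrix.trace_smul, Matrix.trace_sum, smul_eq_mul, mul_inv_cancel_left₀ (by exact_mod_cast NeZero.ne q)]
    refine Finset.sum_congr rfl fun s _ => ?_
    rw [Matrix.trace_smul, smul_eq_mul, W_pow, ← rep_trace hf]
  · intro h
    have h1 : ∀ i ≠ (0 : ZMod q), cycP (rep hf (oo z)) i = 0 := fun i hi => mu_zero _ hT i (h i hi)
    have h2 := cycP_sum_one (n := q) (rep hf (oo z))
    rw [Finset.sum_eq_single 0 (fun i _ hi => h1 i hi) (by simp)] at h2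
    rcases Nat.lt_or_ge 1 q with hq | hq
    · have h3 := cycP_sum (n := q) (rep hf (oo z)) 1
      rw [Finset.sum_eq_single 0 (fun i _ hi => by rw [h1 i hi, smul_zero]) (by simp), h2] at h3
      have : Fact (1 < q) := ⟨hq⟩
      rw [ZMod.val_one, pow_one] at h3
      rw [← h3]; simp
    · have : q = 1 := le_antisymm hq (Nat.pos_of_ne_zero (NeZero.ne q))
      subst this
      rw [pow_one] at hT; exact hT

lemma parseval {q : ℕ} [NeZero q] (z : S) (hz : z ^ q = 1) {f : S → ℂ} (a : ZMod q → ℕ)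
    (h2 : ∀ s : ZMod q, f (z ^ s.val) = ∑ i, ZMod.stdAddChar (s * i) * (a i : ℂ))
    (h3 : ∀ i, (q : ℂ) * a i = ∑ s : ZMod q, ZMod.stdAddChar (-(s * i)) * f (z ^ s.val)) :
    ∑ s : ZMod q, f (z ^ s.val) * f (z ^ s.val)⁻¹ = q * ∑ i, (a i : ℂ) * a i := by
  simp_rw [zpow_val_inv z hz, h2 (-_), Finset.mul_sum]
  rw [Finset.sum_comm]
  refine Finset.sum_congr rfl fun i _ => ?_
  rw [← mul_assoc, h3, Finset.sum_mul]
  refine Finset.sum_congr rfl fun s _ => ?_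
  rw [neg_mul]; ring

lemma sq_ineq {q : ℕ} [NeZero q] (a : ZMod q → ℕ) {N : ℕ} (hN : ∑ i, a i = N) :
    (N : ℤ) * N ≤ q * ∑ i, (a i : ℤ) * a i ∧ (¬ q ∣ N → (N : ℤ) * N + (q - 1) ≤ q * ∑ i, (a i : ℤ) * a i) := by
  set c : ℤ := ((N / q : ℕ) : ℤ)
  set r : ℤ := ((N % q : ℕ) : ℤ) with hr
  have hN2 : (N : ℤ) = q * c + r := by
    have := Nat.div_add_mod N q
    simp only [c, r]; exact_mod_cast this.symm
  have hr0 : 0 ≤ r := by positivity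
  have hrq : r < q := by
    have := Nat.mod_lt N (Nat.pos_of_ne_zero (NeZero.ne q))
    simp only [r]; exact_mod_cast this
  have hs : ∑ i, (a i : ℤ) = N := by exact_mod_cast hN
  have h1 : ∑ i, ((a i : ℤ) - c) ≤ ∑ i, ((a i : ℤ) - c) * ((a i : ℤ) - c) := by
    refine Finset.sum_le_sum fun i _ => ?_
    rcases le_or_gt ((a i : ℤ) - c) 0 with h | h <;> nlinarith
  have h2 : ∑ i, ((a i : ℤ) - c) = r := by
    rw [Finset.sum_sub_distrib, hs, Finset.sum_const, Finset.card_univ, ZMod.card, nsmul_eq_mul, hN2]; ring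
  have h3 : ∑ i, ((a i : ℤ) - c) * ((a i : ℤ) - c) = ∑ i, (a i : ℤ) * a i - 2 * c * N + q * (c * c) := by
    have : ∀ i, ((a i : ℤ) - c) * ((a i : ℤ) - c) = (a i : ℤ) * a i - 2 * c * a i + c * c := fun i => by ring
    simp only [this, Finset.sum_add_distrib, Finset.sum_sub_distrib, ← Finset.mul_sum, hs]
    rw [Finset.sum_const, Finset.card_univ, ZMod.card, nsmul_eq_mul]; ring
  rw [h2, h3] at h1
  have h4 : (N : ℤ) * N + r * (q - r) ≤ q * ∑ i, (a i : ℤ) * a i := by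
    have : (q : ℤ) * r ≤ q * (∑ i, (a i : ℤ) * a i - 2 * c * N + q * (c * c)) :=
      mul_le_mul_of_nonneg_left h1 (by positivity)
    rw [hN2] at this ⊢
    nlinarith
  refine ⟨by nlinarith, fun hd => ?_⟩
  have : r ≠ 0 := by
    intro h; apply hd; rw [hr] at h; exact Nat.dvd_of_mod_eq_zero (by exact_mod_cast h)
  have : 1 ≤ r := by omega
  nlinarith

lemma cent_pow {q : ℕ} [Fact q.Prime] (z : S) (hz : orderOf z = q) (s : ZMod q) (hs : s ≠ 0) (x : S) :
    x⁻¹ * z ^ s.val * x = z ^ s.val ↔ x ∈ Subgroup.centralizer {z} := by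
  have hq : q.Prime := Fact.out
  rw [Subgroup.mem_centralizer_singleton_iff]
  have h0 : x⁻¹ * z ^ s.val * x = z ^ s.val ↔ Commute x (z ^ s.val) := by
    rw [mul_assoc, inv_mul_eq_iff_eq_mul]; exact eq_comm
  rw [h0]
  constructor
  · intro h
    have h2 := h.pow_right (s⁻¹).val
    rw [← pow_mul] at h2
    have h3 : z ^ (s.val * s⁻¹.val) = z := by
      conv_rhs => rw [← pow_one z]
      rw [pow_eq_pow_iff_modEq, hz, ← ZMod.natCast_eq_natCast_iff]
      push_cast
      rw [ZMod.natCast_zmod_val, ZMod.natCast_zmod_val, mul_inv_cancel₀ hs]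
    rw [h3] at h2; exact h2
  · intro h
    exact (show Commute x z from h).pow_right _

lemma q_count {q : ℕ} [Fact q.Prime] (z : S) (hz : orderOf z = q)
    (hc : Nat.card (Subgroup.centralizer {z}) = q) :
    ((irr S).filter fun f => ¬ q ∣ deg f).card ≤ q := by
  classical
  have hq : q.Prime := Fact.out
  have : NeZero q := ⟨hq.ne_zero⟩
  have hzq : z ^ q = 1 := by rw [← hz, pow_orderOf_eq_one]
  obtain ⟨a, ha⟩ := mults (q := q) z hzq
  have h1 : ∀ f ∈ irr S, ∑ s ∈ Finset.univ.erase (0 : ZMod q), f (z ^ s.val) * f (z ^ s.val)⁻¹ =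
      ((q * ∑ i, (a f i : ℤ) * a f i - (deg f : ℤ) * deg f : ℤ) : ℂ) := by
    intro f hf
    have h := parseval z hzq (a f) (ha f hf).2.1 (ha f hf).2.2.1
    rw [← Finset.add_sum_erase _ _ (Finset.mem_univ (0 : ZMod q))] at h
    rw [ZMod.val_zero, pow_zero, inv_one, irr_one hf] at h
    push_cast
    rw [← h]; ring
  have h2 : ∀ s ∈ Finset.univ.erase (0 : ZMod q), ∑ f ∈ irr S, f (z ^ s.val) * f (z ^ s.val)⁻¹ = (q : ℂ) := by
    intro s hs
    rw [irr_orth]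
    refine congrArg _ (Eq.trans ?_ hc)
    apply Nat.card_congr
    exact Equiv.subtypeEquivRight fun x => cent_pow z hz s (Finset.ne_of_mem_erase hs) x
  have h3 : ∑ f ∈ irr S, ((q * ∑ i, (a f i : ℤ) * a f i - (deg f : ℤ) * deg f : ℤ)) = ((q - 1) * q : ℤ) := by
    have : ((∑ f ∈ irr S, ((q * ∑ i, (a f i : ℤ) * a f i - (deg f : ℤ) * deg f : ℤ)) : ℤ) : ℂ) = ((q - 1) * q : ℤ) := by
      rw [Int.cast_sum, ← Finset.sum_congr rfl h1, Finset.sum_comm, Finset.sum_congr rfl h2]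
      rw [Finset.sum_const, Finset.card_erase_of_mem (Finset.mem_univ _), Finset.card_univ, ZMod.card, nsmul_eq_mul,
        Nat.cast_sub hq.one_lt.le]
      push_cast; ring
    exact_mod_cast this
  have h4 : ∑ f ∈ (irr S).filter (fun f => ¬ q ∣ deg f), ((q : ℤ) - 1) ≤ ((q - 1) * q : ℤ) := by
    rw [← h3]
    refine (Finset.sum_le_sum fun f hf => ?_).trans (Finset.sum_le_sum_of_subset_of_nonneg (Finset.filter_subset _ _) fun f hf _ => ?_)
    · rw [Finset.mem_filter] at hf
      have := (sq_ineq (a f) (ha f hf.1).1).2 hf.2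
      linarith
    · have := (sq_ineq (a f) (ha f hf).1).1
      linarith
  rw [Finset.sum_const, nsmul_eq_mul, mul_comm] at h4
  have h5 : (0 : ℤ) < q - 1 := by have := hq.one_lt; omega
  exact_mod_cast le_of_mul_le_mul_left h4 h5

lemma fixed_of_small {q : ℕ} [Fact q.Prime] {P : Type} [Group P] [Finite P] (hP : IsPGroup q P) {D : Type} [Finite D]
    [MulAction P D] (hD : Nat.card D < q) (x : P) (d : D) : x • d = d := by
  obtain ⟨n, hn⟩ := hP.card_orbit d
  have h1 : Nat.card (MulAction.orbit P d) ≤ Nat.card D := Finite.card_subtype_le _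
  have h2 : n = 0 := by
    by_contra h
    have := Nat.le_self_pow h q
    omega
  rw [h2, pow_zero, Nat.card_eq_one_iff_unique] at hn
  have := hn.1
  have := Subsingleton.elim (⟨x • d, MulAction.mem_orbit d x⟩ : MulAction.orbit P d) ⟨d, MulAction.mem_orbit_self d⟩
  exact congrArg Subtype.val this

lemma irr_aut (φ : MulAut S) {f : S → ℂ} (hf : f ∈ irr S) : (fun y => f (φ y)) ∈ irr S :=
  irr_comp φ.toMonoidHom φ.surjective hf

lemma deg_aut (φ : MulAut S) (f : S → ℂ) : deg (fun y => f (φ y)) = deg f := by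
  simp [deg]

lemma q_inv {q : ℕ} [Fact q.Prime] (z : S) (hz : orderOf z = q)
    (hc : Nat.card (Subgroup.centralizer {z}) = q) {P : Type} [Group P] [Finite P] (hP : IsPGroup q P)
    (α : P →* MulAut S) {f : S → ℂ} (hf : f ∈ irr S) (hd : ¬ q ∣ deg f) (x : P) (s : S) : f (α x s) = f s := by
  classical
  have hq : q.Prime := Fact.out
  by_cases hf1 : f = fun _ => 1
  · rw [hf1]
  let D := {f : S → ℂ // f ∈ ((irr S).filter fun f => ¬ q ∣ deg f).erase (fun _ => 1)}
  have hDf : Fintype D := inferInstanceAs (Fintype {f : S → ℂ // f ∈ ((irr S).filter fun f => ¬ q ∣ deg f).erase (fun _ => 1)})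
  have hDc : Nat.card D < q := by
    have h := q_count z hz hc
    have h1 : (fun _ => 1 : S → ℂ) ∈ (irr S).filter fun f => ¬ q ∣ deg f := by
      rw [Finset.mem_filter, deg_one]; exact ⟨one_mem_irr, fun h => hq.one_lt.ne' (Nat.dvd_one.1 h)⟩
    have h2 := Finset.card_erase_lt_of_mem h1
    rw [Nat.subtype_card _ (fun _ => Iff.rfl)]
    exact h2.trans_le h
  let _ : MulAction P D :=
    { smul := fun x f => ⟨fun s => f.1 (α x⁻¹ s), by
        have h := f.2
        rw [Finset.mem_erase, Finset.mem_filter] at h ⊢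
        refine ⟨?_, irr_aut _ h.2.1, by rw [deg_aut]; exact h.2.2⟩
        intro h'
        apply h.1
        funext s
        have := congrFun h' (α x s)
        simpa [← MulAut.mul_apply, ← map_mul] using this⟩
      one_smul := fun f => Subtype.ext (by funext s; change f.1 (α 1⁻¹ s) = _; simp)
      mul_smul := fun x y f => Subtype.ext (by
        funext s; change f.1 (α (x * y)⁻¹ s) = f.1 (α y⁻¹ (α x⁻¹ s))
        rw [mul_inv_rev, map_mul, MulAut.mul_apply]) }
  have h := fixed_of_small hP hDc x⁻¹ ⟨f, by
    rw [Finset.mem_erase, Finset.mem_filter]; exact ⟨hf1, hf, hd⟩⟩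
  have h2 := congrFun (congrArg Subtype.val h) s
  change f (α x⁻¹⁻¹ s) = f s at h2
  rwa [inv_inv] at h2

lemma nice {p : ℕ} [Fact p.Prime] (hp : p ∣ Fintype.card S) {P : Type} [Group P] [Finite P] (hP : IsPGroup p P)
    (α : P →* MulAut S) : ∃ f ∈ irr S, f ≠ (fun _ => 1) ∧ ¬ p ∣ deg f ∧ (∀ x s, f (α x s) = f s) := by
  classical
  have hpp : p.Prime := Fact.out
  let F : Finset (Σ _ : S → ℂ, ℕ × ℕ) := ((irr S).filter fun f => ¬ p ∣ deg f).sigma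
    fun f => Finset.range (deg f) ×ˢ Finset.range (deg f)
  have hmem : ∀ t : (Σ _ : S → ℂ, ℕ × ℕ), t ∈ F ↔ (t.1 ∈ irr S ∧ ¬ p ∣ deg t.1) ∧ t.2.1 < deg t.1 ∧ t.2.2 < deg t.1 := by
    intro t; simp [F, Finset.mem_sigma]
  have hF : p ∣ F.card := by
    rw [Finset.card_sigma]
    simp only [Finset.card_product, Finset.card_range]
    have h1 := irr_sum_sq (X := S)
    rw [← Finset.sum_filter_add_sum_filter_not (irr S) (fun f => p ∣ deg f)] at h1
    have h2 : p ∣ ∑ f ∈ (irr S).filter (fun f => p ∣ deg f), deg f * deg f :=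
      Finset.dvd_sum fun f hf => Dvd.dvd.mul_left (Finset.mem_filter.1 hf).2 _
    rw [← h1] at hp
    exact (Nat.dvd_add_right h2).1 hp
  let D := {t : (Σ _ : S → ℂ, ℕ × ℕ) // t ∈ F}
  have hDf : Fintype D := inferInstanceAs (Fintype {t : (Σ _ : S → ℂ, ℕ × ℕ) // t ∈ F})
  have hDc : p ∣ Nat.card D := by
    rw [Nat.subtype_card _ (fun _ => Iff.rfl)]; exact hF
  let _ : MulAction P D :=
    { smul := fun x t => ⟨⟨fun s => t.1.1 (α x⁻¹ s), t.1.2⟩, by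
        have h := t.2
        rw [hmem] at h ⊢
        simp only [deg_aut]
        exact ⟨⟨irr_aut _ h.1.1, h.1.2⟩, h.2⟩⟩
      one_smul := fun t => Subtype.ext (by
        refine Sigma.ext ?_ HEq.rfl
        funext s; change t.1.1 (α 1⁻¹ s) = _; simp)
      mul_smul := fun x y t => Subtype.ext (by
        refine Sigma.ext ?_ HEq.rfl
        funext s; change t.1.1 (α (x * y)⁻¹ s) = t.1.1 (α y⁻¹ (α x⁻¹ s))
        rw [mul_inv_rev, map_mul, MulAut.mul_apply]) }
  have h0 : (⟨fun _ => 1, 0, 0⟩ : Σ _ : S → ℂ, ℕ × ℕ) ∈ F := by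
    rw [hmem]; simp only [deg_one]
    exact ⟨⟨one_mem_irr, fun h => hpp.one_lt.ne' (Nat.dvd_one.1 h)⟩, one_pos, one_pos⟩
  obtain ⟨⟨⟨f, i, j⟩, ht⟩, hb, hne⟩ := hP.exists_fixed_point_of_prime_dvd_card_of_fixed_point D hDc
    (a := ⟨_, h0⟩) (fun x => rfl)
  rw [hmem] at ht
  refine ⟨f, ht.1.1, ?_, ht.1.2, ?_⟩
  · rintro rfl
    simp only [deg_one, Nat.lt_one_iff] at ht
    obtain ⟨_, rfl, rfl⟩ := ht
    exact hne rfl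
  · intro x s
    have h1 := congrArg Subtype.val (hb x⁻¹)
    have h2 := congrFun (congrArg Sigma.fst h1) s
    change f (α x⁻¹⁻¹ s) = f s at h2
    rwa [inv_inv] at h2
end mults
end P4

section P5
set_option linter.unusedSectionVars false

section sep
variable {S : Type} [Group S] [Fintype S]

lemma card_sum (p : S → Prop) [DecidablePred p] : (Nat.card {x : S // p x} : ℂ) = ∑ x, if p x then 1 else 0 := by
  rw [Nat.card_eq_fintype_card, Fintype.card_subtype, Finset.sum_boole]

lemma conj_pow_val {q : ℕ} [NeZero q] {z x : S} (hz : z ^ q = 1) {u : ZMod q} (h : x⁻¹ * z * x = z ^ u.val) (s : ZMod q) :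
    x⁻¹ * z ^ s.val * x = z ^ (u * s).val := by
  have h1 : x⁻¹ * z ^ s.val * x = (x⁻¹ * z * x) ^ s.val := by
    have := conj_pow (i := s.val) (a := x⁻¹) (b := z)
    rw [inv_inv] at this; exact this.symm
  rw [h1, h, ← pow_mul, pow_eq_pow_iff_modEq]
  have h2 : orderOf z ∣ q := orderOf_dvd_of_pow_eq_one hz
  apply Nat.ModEq.of_dvd h2
  rw [← ZMod.natCast_eq_natCast_iff]
  push_cast
  simp

lemma pow_val_inj {q : ℕ} [NeZero q] {z : S} (hz : orderOf z = q) {s t : ZMod q} (h : z ^ s.val = z ^ t.val) : s = t := by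
  rw [pow_eq_pow_iff_modEq, hz, ← ZMod.natCast_eq_natCast_iff] at h
  simpa using h

lemma four_sum {q : ℕ} [NeZero q] [DecidableEq (ZMod q)] (i j u : ZMod q) :
    ∑ s : ZMod q, ((ZMod.stdAddChar (-(s * i)) : ℂ) - ZMod.stdAddChar (-(s * j))) *
      (ZMod.stdAddChar ((u * s) * i) - ZMod.stdAddChar ((u * s) * j)) =
      ((q * ((if u * i = i then 1 else 0) - (if u * j = i then 1 else 0) - (if u * i = j then 1 else 0)
        + (if u * j = j then 1 else 0)) : ℤ) : ℂ) := by
  have h : ∀ a b : ZMod q, ∑ s : ZMod q, (ZMod.stdAddChar (-(s * a)) : ℂ) * ZMod.stdAddChar ((u * s) * b)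
      = q * (if u * b = a then 1 else 0) := by
    intro a b
    have h1 := ψ_sum (n := q) (u * b - a)
    simp only [sub_eq_zero] at h1
    rw [mul_ite, mul_one, mul_zero, ← h1]
    refine Finset.sum_congr rfl fun s _ => ?_
    rw [← AddChar.map_add_eq_mul]; congr 1; ring
  simp only [sub_mul, mul_sub, Finset.sum_sub_distrib, h]
  push_cast
  ring

lemma sep_bound {q : ℕ} [Fact q.Prime] (z : S) (hz : orderOf z = q)
    (hc : Nat.card (Subgroup.centralizer {z}) = q) (a : (S → ℂ) → ZMod q → ℕ)
    (ha : ∀ f ∈ irr S, ∀ i, (q : ℂ) * a f i = ∑ s : ZMod q, ZMod.stdAddChar (-(s * i)) * f (z ^ s.val))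
    {i j : ZMod q} (hi : i ≠ 0) (hj : j ≠ 0) (hij : i ≠ j) :
    ∑ f ∈ irr S, ((a f i : ℤ) - a f j) * ((a f i : ℤ) - a f j) ≤ 2 := by
  classical
  have hq : q.Prime := Fact.out
  have : NeZero q := ⟨hq.ne_zero⟩
  have hzq : z ^ q = 1 := by rw [← hz, pow_orderOf_eq_one]
  let c : ZMod q → ℂ := fun s => ZMod.stdAddChar (-(s * i)) - ZMod.stdAddChar (-(s * j))
  have h1 : ∀ f ∈ irr S, (q : ℂ) * ((a f i : ℂ) - a f j) = ∑ s : ZMod q, c s * f (z ^ s.val) := by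
    intro f hf
    rw [mul_sub, ha f hf, ha f hf, ← Finset.sum_sub_distrib]
    exact Finset.sum_congr rfl fun s _ => by simp only [c]; ring
  have h2 : ∀ f ∈ irr S, (q : ℂ) * ((a f i : ℂ) - a f j) = ∑ t : ZMod q, c (-t) * f (z ^ t.val)⁻¹ := by
    intro f hf
    rw [h1 f hf]
    refine Fintype.sum_equiv (Equiv.neg _) _ _ fun s => ?_
    rw [zpow_val_inv z hzq]; simp
  let d : S → ℂ := fun x => ∑ s : ZMod q, ∑ t : ZMod q, c s * c (-t) * (if x⁻¹ * z ^ s.val * x = z ^ t.val then 1 else 0)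
  have h3 : (q : ℂ) * q * ∑ f ∈ irr S, ((a f i : ℂ) - a f j) * ((a f i : ℂ) - a f j) = ∑ x, d x := by
    have e1 : (q : ℂ) * q * ∑ f ∈ irr S, ((a f i : ℂ) - a f j) * ((a f i : ℂ) - a f j) =
        ∑ f ∈ irr S, ∑ s : ZMod q, ∑ t : ZMod q, c s * c (-t) * (f (z ^ s.val) * f (z ^ t.val)⁻¹) := by
      rw [Finset.mul_sum]
      refine Finset.sum_congr rfl fun f hf => ?_
      have : (q : ℂ) * q * (((a f i : ℂ) - a f j) * ((a f i : ℂ) - a f j)) =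
        (q * ((a f i : ℂ) - a f j)) * (q * ((a f i : ℂ) - a f j)) := by ring
      rw [this]
      conv_lhs => enter [1]; rw [h1 f hf]
      rw [h2 f hf, Finset.sum_mul_sum]
      refine Finset.sum_congr rfl fun s _ => Finset.sum_congr rfl fun t _ => ?_
      ring
    rw [e1, Finset.sum_comm]
    simp only [d]
    rw [Finset.sum_comm (s := Finset.univ (α := S))]
    refine Finset.sum_congr rfl fun s _ => ?_
    rw [Finset.sum_comm, Finset.sum_comm (s := Finset.univ (α := S))]
    refine Finset.sum_congr rfl fun t _ => ?_
    rw [← Finset.mul_sum, ← Finset.mul_sum, irr_orth, card_sum]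
  have h4 : ∀ x, ∃ v : ℤ, d x = ((q * v : ℤ) : ℂ) ∧ v ≤ if x ∈ Subgroup.centralizer {z} then 2 else 0 := by
    intro x
    by_cases hx : ∃ u : ZMod q, x⁻¹ * z * x = z ^ u.val
    · obtain ⟨u, hu⟩ := hx
      refine ⟨(if u * i = i then 1 else 0) - (if u * j = i then 1 else 0) - (if u * i = j then 1 else 0)
        + (if u * j = j then 1 else 0), ?_, ?_⟩
      · simp only [d]
        rw [← four_sum i j u]
        refine Finset.sum_congr rfl fun s _ => ?_
        rw [Finset.sum_eq_single (u * s)]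
        · rw [if_pos (conj_pow_val hzq hu s), mul_one]; simp only [c, neg_mul, neg_neg]
        · intro t _ ht
          rw [if_neg, mul_zero]
          intro h
          rw [conj_pow_val hzq hu s] at h
          exact ht (pow_val_inj hz h).symm
        · simp
      · by_cases hu1 : u = 1
        · have : x ∈ Subgroup.centralizer {z} := by
            rw [← cent_pow z hz 1 one_ne_zero]
            have h := conj_pow_val hzq hu 1
            rwa [hu1, mul_one] at h
          rw [if_pos this]
          simp [hu1, hij, hij.symm]
        · have e : ∀ k : ZMod q, k ≠ 0 → u * k ≠ k := by
            intro k hk h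
            exact hu1 (by simpa [hk] using h)
          rw [if_neg (e i hi), if_neg (e j hj)]
          split_ifs <;> norm_num
    · refine ⟨0, ?_, by split_ifs <;> norm_num⟩
      simp only [d, mul_zero, Int.cast_zero]
      refine Finset.sum_eq_zero fun s _ => Finset.sum_eq_zero fun t _ => ?_
      by_cases hs : s = 0
      · simp [c, hs]
      · rw [if_neg, mul_zero]
        intro h
        apply hx
        refine ⟨t * s⁻¹, ?_⟩
        have h5 : z = (z ^ s.val) ^ (s⁻¹).val := by
          conv_lhs => rw [← pow_one z]
          rw [← pow_mul, pow_eq_pow_iff_modEq, hz, ← ZMod.natCast_eq_natCast_iff]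
          push_cast
          rw [ZMod.natCast_zmod_val, ZMod.natCast_zmod_val, mul_inv_cancel₀ hs]
        have h6 : x⁻¹ * z * x = (x⁻¹ * z ^ s.val * x) ^ (s⁻¹).val := by
          have := conj_pow (i := (s⁻¹).val) (a := x⁻¹) (b := z ^ s.val)
          rw [inv_inv, ← h5] at this; exact this.symm
        rw [h6, h, ← pow_mul, pow_eq_pow_iff_modEq, hz, ← ZMod.natCast_eq_natCast_iff]
        push_cast
        simp
  choose v hv hv2 using h4
  have h5 : (q : ℤ) * q * ∑ f ∈ irr S, ((a f i : ℤ) - a f j) * ((a f i : ℤ) - a f j) = q * ∑ x, v x := by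
    have : (((q : ℤ) * q * ∑ f ∈ irr S, ((a f i : ℤ) - a f j) * ((a f i : ℤ) - a f j) : ℤ) : ℂ) = ((q * ∑ x, v x : ℤ) : ℂ) := by
      rw [Finset.mul_sum (s := Finset.univ), Int.cast_sum, ← Finset.sum_congr rfl fun x _ => hv x, ← h3]
      push_cast; rfl
    exact_mod_cast this
  have h6 : ∑ x, v x ≤ 2 * q := by
    refine (Finset.sum_le_sum fun x _ => hv2 x).trans ?_
    rw [← Finset.sum_filter, Finset.sum_const, nsmul_eq_mul]
    have : (Finset.univ.filter fun x => x ∈ Subgroup.centralizer {z}).card = q := by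
      rw [← hc, ← Fintype.card_subtype, Nat.card_eq_fintype_card]
    rw [this, mul_comm]
  have hq0 : (0 : ℤ) < q := by exact_mod_cast hq.pos
  have h7 : (q : ℤ) * (q * ∑ f ∈ irr S, ((a f i : ℤ) - a f j) * ((a f i : ℤ) - a f j)) ≤ q * (q * 2) := by
    rw [← mul_assoc, h5]
    exact mul_le_mul_of_nonneg_left (by linarith) hq0.le
  exact le_of_mul_le_mul_left (le_of_mul_le_mul_left h7 hq0) hq0

lemma sep_deg {q : ℕ} [Fact q.Prime] (z : S) (hz : orderOf z = q) (a : (S → ℂ) → ZMod q → ℕ)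
    (ha : ∀ f ∈ irr S, ∀ i, (q : ℂ) * a f i = ∑ s : ZMod q, ZMod.stdAddChar (-(s * i)) * f (z ^ s.val))
    (i j : ZMod q) : ∑ f ∈ irr S, (deg f : ℤ) * ((a f i : ℤ) - a f j) = 0 := by
  have hq : q.Prime := Fact.out
  have : NeZero q := ⟨hq.ne_zero⟩
  have h1 : ∀ i, (q : ℂ) * ∑ f ∈ irr S, (deg f : ℂ) * a f i = Fintype.card S := by
    intro i
    have : ∀ f ∈ irr S, (q : ℂ) * ((deg f : ℂ) * a f i) = ∑ s : ZMod q, ZMod.stdAddChar (-(s * i)) * ((deg f : ℂ) * f (z ^ s.val)) := by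
      intro f hf
      rw [mul_left_comm, ha f hf, Finset.mul_sum]
      exact Finset.sum_congr rfl fun s _ => by ring
    rw [Finset.mul_sum, Finset.sum_congr rfl this, Finset.sum_comm]
    simp_rw [← Finset.mul_sum]
    rw [Finset.sum_eq_single 0]
    · simp [irr_sum_deg_one]
    · intro s _ hs
      rw [irr_sum_deg, mul_zero]
      intro h
      apply hs
      apply pow_val_inj hz
      rw [h]; simp
    · simp
  have h2 : (q : ℂ) ≠ 0 := by exact_mod_cast hq.ne_zero
  have h3 : ((∑ f ∈ irr S, (deg f : ℤ) * ((a f i : ℤ) - a f j) : ℤ) : ℂ) = 0 := by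
    push_cast
    simp only [mul_sub, Finset.sum_sub_distrib]
    rw [sub_eq_zero]
    apply mul_left_cancel₀ h2
    rw [h1, h1]
  exact_mod_cast h3

lemma sep {q : ℕ} [Fact q.Prime] (z : S) (hz : orderOf z = q)
    (hc : Nat.card (Subgroup.centralizer {z}) = q) (a : (S → ℂ) → ZMod q → ℕ)
    (ha : ∀ f ∈ irr S, ∀ i, (q : ℂ) * a f i = ∑ s : ZMod q, ZMod.stdAddChar (-(s * i)) * f (z ^ s.val))
    {i j : ZMod q} (hi : i ≠ 0) (hj : j ≠ 0) {f f' : S → ℂ} (hf : f ∈ irr S) (hf' : f' ∈ irr S)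
    (hd : deg f ≠ deg f') : a f i = a f j ∨ a f' i = a f' j := by
  classical
  by_contra hcon
  push Not at hcon
  have hij : i ≠ j := by rintro rfl; exact hcon.1 rfl
  have hb := sep_bound z hz hc a ha hi hj hij
  have hs := sep_deg z hz a ha i j
  have hne : f' ≠ f := by rintro rfl; exact hd rfl
  have hm : f' ∈ (irr S).erase f := Finset.mem_erase.2 ⟨hne, hf'⟩
  rw [← Finset.add_sum_erase _ _ hf, ← Finset.add_sum_erase _ _ hm] at hb hs
  have sq1 : ∀ x : ℤ, x ≠ 0 → 1 ≤ x * x := by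
    intro x hx
    have := mul_self_pos.2 hx
    omega
  have n1 : (a f i : ℤ) - a f j ≠ 0 := by
    intro h; apply hcon.1; omega
  have n2 : (a f' i : ℤ) - a f' j ≠ 0 := by
    intro h; apply hcon.2; omega
  have e1 := sq1 _ n1
  have e2 := sq1 _ n2
  have e3 : ∀ g ∈ ((irr S).erase f).erase f', 0 ≤ ((a g i : ℤ) - a g j) * ((a g i : ℤ) - a g j) :=
    fun g _ => mul_self_nonneg _
  have e4 := Finset.sum_nonneg e3
  have e5 : ∑ g ∈ ((irr S).erase f).erase f', ((a g i : ℤ) - a g j) * ((a g i : ℤ) - a g j) = 0 := by linarith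
  have e6 := (Finset.sum_eq_zero_iff_of_nonneg e3).1 e5
  have e7 : ∑ g ∈ ((irr S).erase f).erase f', (deg g : ℤ) * ((a g i : ℤ) - a g j) = 0 :=
    Finset.sum_eq_zero fun g hg => by rw [mul_self_eq_zero.1 (e6 g hg), mul_zero]
  rw [e7, add_zero] at hs
  have s1 : ((a f i : ℤ) - a f j) * ((a f i : ℤ) - a f j) = 1 := by linarith
  have s2 : ((a f' i : ℤ) - a f' j) * ((a f' i : ℤ) - a f' j) = 1 := by linarith
  have p1 := deg_pos hf
  have p2 := deg_pos hf'
  rcases mul_self_eq_one_iff.1 s1 with h | h <;> rcases mul_self_eq_one_iff.1 s2 with h' | h' <;>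
    rw [h, h'] at hs <;> apply hd <;> omega
end sep

section lemC
variable {S : Type} [Group S] [Fintype S] [IsSimpleGroup S] (hna : ¬ ∀ x y : S, x * y = y * x)
include hna

lemma nonconst {q : ℕ} [Fact q.Prime] (z : S) (hz : orderOf z = q) (a : ZMod q → ℕ) {f : S → ℂ}
    (hf : f ∈ irr S) (hf1 : f ≠ fun _ => 1) (h1 : ∑ i, a i = deg f)
    (h2 : (∀ i ≠ 0, a i = 0) → rep hf (oo z) = 1) (hd : deg f < q) (hd2 : deg f ≠ q - 1) :
    ∃ i j, i ≠ 0 ∧ j ≠ 0 ∧ a i ≠ a j := by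
  classical
  have hq : q.Prime := Fact.out
  have : NeZero q := ⟨hq.ne_zero⟩
  by_contra hcon
  push Not at hcon
  have hcst : ∀ i ≠ 0, a i = a 1 := fun i hi => hcon i 1 hi one_ne_zero
  by_cases h0 : a 1 = 0
  · have := simple_faithful hf hf1 (h2 fun i hi => by rw [hcst i hi, h0])
    rw [this, orderOf_one] at hz
    exact hq.one_lt.ne hz
  · have h3 : ∑ i ∈ Finset.univ.erase (0 : ZMod q), a i = (q - 1) * a 1 := by
      rw [Finset.sum_congr rfl fun i hi => hcst i (Finset.ne_of_mem_erase hi), Finset.sum_const,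
        Finset.card_erase_of_mem (Finset.mem_univ _), Finset.card_univ, ZMod.card, smul_eq_mul]
    rw [← Finset.add_sum_erase _ _ (Finset.mem_univ (0 : ZMod q)), h3] at h1
    have : (q - 1) * 1 ≤ (q - 1) * a 1 := Nat.mul_le_mul_left _ (Nat.pos_of_ne_zero h0)
    omega

lemma ne_pred {q r l : ℕ} (hq : q.Prime) (hr : r.Prime) (hl : l.Prime) (hrq : r < q) (hlq : l < q) (h : r ≠ l) :
    r ≠ q - 1 := by
  intro h1
  rcases hq.eq_two_or_odd with h2 | h2
  · have := hr.two_le; omega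
  · rcases hr.eq_two_or_odd with h3 | h3
    · have := hl.two_le; omega
    · omega

theorem lemmaC (h1 : ∃ f ∈ irr S, (deg f).Prime)
    (h2 : ∀ f ∈ irr S, f ≠ (fun _ => 1) → ¬ (deg f).Prime → ∀ f' ∈ irr S, (deg f').Prime → deg f' ∣ deg f) : False := by
  classical
  obtain ⟨f0, hf0, hmax⟩ := Finset.exists_max_image ((irr S).filter fun f => (deg f).Prime) deg
    (by obtain ⟨f, hf, hp⟩ := h1; exact ⟨f, Finset.mem_filter.2 ⟨hf, hp⟩⟩)
  rw [Finset.mem_filter] at hf0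
  obtain ⟨q, hq⟩ : ∃ q, deg f0 = q := ⟨_, rfl⟩
  rw [hq] at hf0 hmax
  have : Fact q.Prime := ⟨hf0.2⟩
  have hmax' : ∀ f ∈ irr S, (deg f).Prime → deg f ≤ q := fun f hf hp => hmax f (Finset.mem_filter.2 ⟨hf, hp⟩)
  obtain ⟨z, hz, hzc, hz0⟩ := lemmaA hna hf0.1 hq
  have hz1 : z ≠ 1 := by
    rintro rfl; rw [orderOf_one] at hz; exact hf0.2.one_lt.ne hz
  have case1 : ∀ r : ℕ, r.Prime → (∀ f ∈ irr S, f ≠ (fun _ => 1) → f z = 0 ∨ r ∣ deg f) → False := by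
    intro r hr h
    have h3 := irr_sum_deg hz1
    rw [← Finset.add_sum_erase _ _ one_mem_irr, deg_one] at h3
    have h4 : IsIntegral ℤ (∑ f ∈ (irr S).erase (fun _ => 1), (((deg f / r : ℕ) : ℂ) * f z)) :=
      IsIntegral.sum _ fun f hf => (isIntegral_natCast _).mul (irr_integral (Finset.mem_of_mem_erase hf) z)
    have h5 : ∑ f ∈ (irr S).erase (fun _ => 1), (deg f : ℂ) * f z =
        r * ∑ f ∈ (irr S).erase (fun _ => 1), (((deg f / r : ℕ) : ℂ) * f z) := by
      rw [Finset.mul_sum]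
      refine Finset.sum_congr rfl fun f hf => ?_
      rw [Finset.mem_erase] at hf
      rcases h f hf.2 hf.1 with h | h
      · rw [h]; simp
      · rw [Nat.cast_div h (by exact_mod_cast hr.ne_zero)]
        have : (r : ℂ) ≠ 0 := by exact_mod_cast hr.ne_zero
        field_simp
    rw [h5] at h3
    have h6 : (((1 : ℕ) : ℂ) / (r : ℂ)) = - ∑ f ∈ (irr S).erase (fun _ => 1), (((deg f / r : ℕ) : ℂ) * f z) := by
      have : (r : ℂ) ≠ 0 := by exact_mod_cast hr.ne_zero
      rw [div_eq_iff this]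
      push_cast at h3 ⊢
      linear_combination h3
    have h7 := int_of_integral hr.ne_zero (h6 ▸ h4.neg)
    exact hr.one_lt.ne' (Nat.dvd_one.1 h7)
  have ntriv : ∀ f : S → ℂ, (deg f).Prime → f ≠ fun _ => 1 := by
    rintro f hp rfl; rw [deg_one] at hp; exact Nat.not_prime_one hp
  by_cases hex : ∃ f ∈ irr S, (deg f).Prime ∧ deg f ≠ q
  · obtain ⟨f, hf, hfp, hfq⟩ := hex
    by_cases hex2 : ∃ f' ∈ irr S, (deg f').Prime ∧ deg f' ≠ q ∧ deg f ≠ deg f'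
    · obtain ⟨f', hf', hfp', hfq', hne⟩ := hex2
      have hlt : deg f < q := lt_of_le_of_ne (hmax' f hf hfp) hfq
      have hlt' : deg f' < q := lt_of_le_of_ne (hmax' f' hf' hfp') hfq'
      have : NeZero q := ⟨hf0.2.ne_zero⟩
      obtain ⟨a, ha⟩ := mults (q := q) z (by rw [← hz, pow_orderOf_eq_one])
      have hsep := fun (i j : ZMod q) (hi : i ≠ 0) (hj : j ≠ 0) =>
        sep z hz hzc a (fun f hf => (ha f hf).2.2.1) hi hj hf hf' hne
      obtain ⟨i, j, hi, hj, hij⟩ := nonconst hna z hz (a f) hf (ntriv f hfp) (ha f hf).1 (ha f hf).2.2.2 hlt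
        (ne_pred hna hf0.2 hfp hfp' hlt hlt' hne)
      obtain ⟨k, l, hk, hl, hkl⟩ := nonconst hna z hz (a f') hf' (ntriv f' hfp') (ha f' hf').1 (ha f' hf').2.2.2 hlt'
        (ne_pred hna hf0.2 hfp' hfp hlt' hlt hne.symm)
      have e1 := hsep i j hi hj
      have e2 := hsep k l hk hl
      have e3 := hsep i k hi hk
      have e4 := hsep j k hj hk
      have e5 := hsep i l hi hl
      have e6 := hsep j l hj hl
      omega
    · push Not at hex2
      refine case1 (deg f) hfp fun g hg hg1 => ?_
      by_cases hp : (deg g).Prime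
      · by_cases hgq : deg g = q
        · exact Or.inl (hz0 g hg hgq)
        · exact Or.inr (by rw [hex2 g hg hp hgq])
      · exact Or.inr (h2 g hg hg1 hp f hf hfp)
  · push Not at hex
    refine case1 q hf0.2 fun g hg hg1 => ?_
    by_cases hp : (deg g).Prime
    · exact Or.inl (hz0 g hg (hex g hg hp))
    · exact Or.inr (hq ▸ h2 g hg hg1 hp f0 hf0.1 (hq ▸ hf0.2))
end lemC
end P5

section P6
set_option linter.unusedSectionVars false

section orth
variable {X : Type} [Group X] [Fintype X]

lemma rep_props {f : X → ℂ} (hf : f ∈ irr X) :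
    rep hf (EE f) = 1 ∧ (∀ a, EE f * a = a * EE f) ∧ (∀ a, rep hf a = 0 ↔ EE f * a = 0) := by
  have := fin_deg_ne hf
  exact EE_props (rep hf) (rep_surj hf) f (rep_trace hf)

lemma EE_idem {f : X → ℂ} (hf : f ∈ irr X) : EE f * EE f = EE f := by
  have h := rep_props hf
  have := (h.2.2 (EE f - 1)).1 (by rw [map_sub, h.1, map_one, sub_self])
  rwa [mul_sub, mul_one, sub_eq_zero] at this

lemma EE_dich {f f' : X → ℂ} (hf : f ∈ irr X) (hf' : f' ∈ irr X) :
    EE f * EE f' = 0 ∨ EE f * EE f' = EE f := by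
  have := fin_deg_ne hf
  have h := rep_props hf
  have h' := rep_props hf'
  obtain ⟨c, hc⟩ := scalar_of_comm (rep hf (EE f')) (by
    intro B
    obtain ⟨b, rfl⟩ := rep_surj hf B
    rw [← map_mul, ← map_mul, h'.2.1])
  have hi : rep hf (EE f') * rep hf (EE f') = rep hf (EE f') := by rw [← map_mul, EE_idem hf']
  have h0 : c * c = c := by
    rw [hc] at hi
    have := congrArg (fun A => A (Classical.arbitrary _) (Classical.arbitrary _)) hi
    simpa using this
  rcases eq_or_ne c 0 with h1 | h1
  · left
    rw [← h.2.2, hc, h1, zero_smul]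
  · right
    have hc1 : c = 1 := mul_left_cancel₀ h1 (by rw [h0, mul_one])
    have := (h.2.2 (EE f' - 1)).1 (by rw [map_sub, hc, hc1, map_one, one_smul, sub_self])
    rwa [mul_sub, mul_one, sub_eq_zero] at this

lemma EE_ne_zero {f : X → ℂ} (hf : f ∈ irr X) : EE f ≠ 0 := by
  intro h0
  have := fin_deg_ne hf
  have h := (rep_props hf).1
  rw [h0, map_zero] at h
  exact zero_ne_one h

lemma EE_inj {f f' : X → ℂ} (hf : f ∈ irr X) (hf' : f' ∈ irr X) (h : EE f = EE f') : f = f' := by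
  have hX : (Fintype.card X : ℂ) ≠ 0 := by simp
  have h1 : ∀ x, f 1 * f x = f' 1 * f' x := by
    intro x
    have := congrArg (fun a => a.coeff x⁻¹) h
    simp only [EE_coeff, inv_inv] at this
    field_simp at this
    exact this
  have h2 := h1 1
  rw [irr_one hf, irr_one hf'] at h2
  have h3 : deg f = deg f' := by
    have : deg f * deg f = deg f' * deg f' := by exact_mod_cast h2
    exact Nat.mul_self_inj.1 this
  funext x
  have h4 := h1 x
  rw [irr_one hf, irr_one hf', h3] at h4
  exact mul_left_cancel₀ (by exact_mod_cast (deg_pos hf').ne') h4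

lemma EE_orth {f f' : X → ℂ} (hf : f ∈ irr X) (hf' : f' ∈ irr X) (h : f ≠ f') : EE f * EE f' = 0 := by
  rcases EE_dich hf hf' with h1 | h1
  · exact h1
  · rcases EE_dich hf' hf with h2 | h2
    · rw [(rep_props hf').2.1, h1] at h2
      exact absurd h2 (EE_ne_zero hf)
    · exact absurd (EE_inj hf hf' (by rw [← h1, (rep_props hf).2.1, h2])) h

lemma exists_phi {f : X → ℂ} (hf : f ∈ irr X) :
    ∃ Φ : Matrix (Fin (deg f)) (Fin (deg f)) ℂ →ₗ[ℂ] GA X, (∀ A B, Φ (A * B) = Φ A * Φ B) ∧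
      Φ 1 = EE f ∧ (∀ A, rep hf (Φ A) = A) ∧ ∀ a, Φ (rep hf a) = EE f * a := by
  have h := rep_props hf
  have key : ∀ a b, rep hf a = rep hf b → EE f * a = EE f * b := by
    intro a b hab
    have := (h.2.2 (a - b)).1 (by rw [map_sub, hab, sub_self])
    rwa [mul_sub, sub_eq_zero] at this
  choose s hs using rep_surj hf
  refine ⟨⟨⟨fun A => EE f * s A, ?_⟩, ?_⟩, ?_, ?_, ?_, ?_⟩
  · intro A B
    rw [← mul_add]
    apply key; rw [map_add, hs, hs, hs]
  · intro c A
    rw [RingHom.id_apply, ← mul_smul_comm]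
    apply key; rw [map_smul, hs, hs]
  · intro A B
    change EE f * s (A * B) = EE f * s A * (EE f * s B)
    rw [h.2.1 (s A), mul_assoc, ← mul_assoc (EE f) (EE f), EE_idem hf, ← mul_assoc, ← h.2.1 (s A), mul_assoc]
    apply key; rw [map_mul, hs, hs, hs]
  · change EE f * s 1 = EE f
    conv_rhs => rw [← mul_one (EE f)]
    apply key; rw [hs, map_one]
  · intro A
    change rep hf (EE f * s A) = A
    rw [map_mul, h.1, one_mul, hs]
  · intro a
    exact key _ _ (hs _)
end orth

section cliff
variable {G : Type} [Group G] [Fintype G] (M : Subgroup G) [M.Normal] [Fintype M]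

noncomputable def JJ : GA M →ₐ[ℂ] GA G := MonoidAlgebra.mapDomainAlgHom ℂ ℂ M.subtype
lemma JJ_oo (m : M) : JJ M (oo m) = oo (m : G) := map_oo M.subtype m
noncomputable def KK (g : G) : GA M →ₐ[ℂ] GA M :=
  MonoidAlgebra.mapDomainAlgHom ℂ ℂ (MulAut.conjNormal g : MulAut M).toMonoidHom
lemma KK_oo (g : G) (m : M) : KK M g (oo m) = oo (MulAut.conjNormal g m) :=
  map_oo (MulAut.conjNormal g : MulAut M).toMonoidHom m

lemma oo_inv_mul (g : G) : oo g⁻¹ * oo g = 1 := by rw [← oo_mul, inv_mul_cancel, oo_one]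
lemma oo_mul_inv (g : G) : oo g * oo g⁻¹ = 1 := by rw [← oo_mul, mul_inv_cancel, oo_one]

lemma JJ_conj (g : G) (a : GA M) : oo g * JJ M a = JJ M (KK M g a) * oo g := by
  rw [GA_sum a]
  simp only [map_sum, map_smul, Finset.mul_sum, Finset.sum_mul, mul_smul_comm, smul_mul_assoc]
  refine Finset.sum_congr rfl fun m _ => ?_
  rw [KK_oo, JJ_oo, JJ_oo, ← oo_mul, ← oo_mul]
  congr 2
  simp [MulAut.conjNormal_apply]

lemma KK_EE (g : G) (ψ : M → ℂ) : KK M g (EE ψ) = EE (fun m => ψ (MulAut.conjNormal g⁻¹ m)) := by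
  simp only [EE, map_sum, map_smul, KK_oo]
  refine Fintype.sum_equiv (MulAut.conjNormal g : MulAut M).toEquiv _ _ fun m => ?_
  simp [← map_inv, ← MulAut.mul_apply, ← map_mul]

theorem lemmaD {ψ : M → ℂ} (hψ : ψ ∈ irr M) {f : G → ℂ} (hf : f ∈ irr G) (h : rep hf (JJ M (EE ψ)) ≠ 0)
    (H : Subgroup G) (hH : ∀ g, (∀ m : M, ψ (MulAut.conjNormal g m) = ψ m) → g ∈ H) :
    H.index * deg ψ ∣ deg f := by
  classical
  have hne := fin_deg_ne hf
  have hneψ := fin_deg_ne hψ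
  let T : Subgroup G :=
    { carrier := {g | ∀ m : M, ψ (MulAut.conjNormal g m) = ψ m}
      one_mem' := by intro m; simp
      mul_mem' := by
        intro a b ha hb m
        rw [map_mul, MulAut.mul_apply, ha, hb]
      inv_mem' := by
        intro a ha m
        rw [← ha]
        rw [← MulAut.mul_apply, ← map_mul]; simp }
  have hTH : T ≤ H := fun g hg => hH g hg
  have hT : ∀ g, g ∈ T ↔ ∀ m : M, ψ (MulAut.conjNormal g m) = ψ m := fun g => Iff.rfl
  let e := JJ M (EE ψ)
  let F : GA G := ∑ g : G, JJ M (KK M g (EE ψ))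
  have hFg : ∀ x : G, oo x * F = F * oo x := by
    intro x
    simp only [F, Finset.mul_sum, Finset.sum_mul]
    refine Fintype.sum_equiv (Equiv.mulLeft x) _ _ fun g => ?_
    rw [JJ_conj]
    congr 2
    rw [KK_EE, KK_EE, KK_EE]
    congr 1
    funext m
    simp only [Equiv.coe_mulLeft, mul_inv_rev, map_mul, MulAut.mul_apply]
  have hFc : ∀ a, a * F = F * a := by
    intro a
    rw [GA_sum a, Finset.sum_mul, Finset.mul_sum]
    exact Finset.sum_congr rfl fun x _ => by rw [smul_mul_assoc, mul_smul_comm, hFg]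
  obtain ⟨c, hc⟩ := scalar_of_comm (rep hf F) (by
    intro B
    obtain ⟨b, rfl⟩ := rep_surj hf B
    rw [← map_mul, ← map_mul, hFc])
  have hFe : F * e = (Nat.card T : ℂ) • e := by
    simp only [F, Finset.sum_mul, e, ← map_mul]
    have h1 : ∀ g : G, JJ M (KK M g (EE ψ) * EE ψ) = if g ∈ T then JJ M (EE ψ) else 0 := by
      intro g
      split_ifs with hg
      · have : (fun m => ψ (MulAut.conjNormal g⁻¹ m)) = ψ := funext fun m => (hT _).1 (T.inv_mem hg) m
        rw [KK_EE, this, EE_idem hψ]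
      · rw [KK_EE, EE_orth (irr_aut _ hψ) hψ, map_zero]
        intro h
        apply hg
        rw [← inv_inv g]
        apply T.inv_mem
        exact (hT _).2 fun m => congrFun h m
    rw [Finset.sum_congr rfl fun g _ => h1 g, ← Finset.sum_filter, Finset.sum_const, ← Nat.cast_smul_eq_nsmul ℂ]
    congr 2
    rw [Nat.card_eq_fintype_card, Fintype.card_subtype]
  have hcT : c = Nat.card T := by
    have h1 := congrArg (rep hf) hFe
    rw [map_mul, hc, map_smul, smul_mul_assoc, one_mul, ← sub_eq_zero, ← sub_smul] at h1
    rcases smul_eq_zero.1 h1 with h2 | h2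
    · exact sub_eq_zero.1 h2
    · exact absurd h2 h
  have hcj : ∀ g, (rep hf (JJ M (KK M g (EE ψ)))).trace = (rep hf e).trace := by
    intro g
    have : JJ M (KK M g (EE ψ)) = oo g * e * oo g⁻¹ := by
      rw [JJ_conj, mul_assoc, oo_mul_inv, mul_one]
    rw [this, map_mul, Matrix.trace_mul_comm, ← map_mul, ← mul_assoc, oo_inv_mul, one_mul]
  have htr : (deg f : ℂ) * Nat.card T = Nat.card G * (rep hf e).trace := by
    have h1 := congrArg Matrix.trace hc
    rw [Matrix.trace_smul, Matrix.trace_one, Fintype.card_fin, hcT] at h1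
    simp only [F, map_sum, Matrix.trace_sum, hcj] at h1
    rw [Finset.sum_const, Finset.card_univ, nsmul_eq_mul, ← Nat.card_eq_fintype_card, smul_eq_mul] at h1
    rw [h1, mul_comm]
  obtain ⟨Φ, hΦ, hΦ1, -, -⟩ := exists_phi hψ
  let i0 : Fin (deg ψ) := ⟨0, deg_pos hψ⟩
  let B : Fin (deg ψ) → Matrix (Fin (deg f)) (Fin (deg f)) ℂ := fun i => rep hf (JJ M (Φ (Matrix.single i i 1)))
  have hB : ∀ i, (B i).trace = (B i0).trace := by
    intro i
    have e1 : Matrix.single i i (1 : ℂ) = Matrix.single i i0 1 * Matrix.single i0 i 1 := by simp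
    have e2 : Matrix.single i0 i0 (1 : ℂ) = Matrix.single i0 i 1 * Matrix.single i i0 1 := by simp
    simp only [B]
    rw [e1, e2, hΦ, hΦ, map_mul, map_mul, map_mul, map_mul, Matrix.trace_mul_comm]
  have hB2 : B i0 * B i0 = B i0 := by
    simp only [B, ← map_mul, ← hΦ]; simp
  obtain ⟨n, hn, -⟩ := trace_idem_nat _ hB2
  have hte : (rep hf e).trace = deg ψ * n := by
    have e1 : e = ∑ i, JJ M (Φ (Matrix.single i i 1)) := by
      simp only [e]
      rw [← hΦ1, ← map_sum, ← map_sum]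
      congr 2
      ext a b
      rw [Matrix.sum_apply, Matrix.one_apply]
      simp only [Matrix.single_apply]
      split_ifs with hab
      · subst hab; simp
      · symm
        refine Finset.sum_eq_zero fun i _ => if_neg ?_
        rintro ⟨rfl, rfl⟩; exact hab rfl
    rw [e1, map_sum, Matrix.trace_sum, Finset.sum_congr rfl fun i _ => hB i, hn]
    simp
  rw [hte, ← T.card_mul_index] at htr
  have h5 : deg f * Nat.card T = Nat.card T * T.index * (deg ψ * n) := by exact_mod_cast htr
  have h6 : deg f = T.index * deg ψ * n := by
    apply Nat.eq_of_mul_eq_mul_left (Nat.card_pos (α := T))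
    rw [mul_comm, h5]; ring
  rw [h6]
  exact Dvd.dvd.mul_right (Nat.mul_dvd_mul_right (Subgroup.index_dvd_of_le hTH) _) _
end cliff
end P6

section P7
set_option linter.unusedSectionVars false

lemma inner_aut {d : ℕ} (σ : Matrix (Fin d) (Fin d) ℂ ≃ₐ[ℂ] Matrix (Fin d) (Fin d) ℂ) :
    ∃ T : Matrix (Fin d) (Fin d) ℂ, T.det ≠ 0 ∧ ∀ A, σ A * T = T * A := by
  let L := Matrix.toLinAlgEquiv' (R := ℂ) (n := Fin d)
  obtain ⟨T, hT⟩ := AlgEquiv.eq_linearEquivConjAlgEquiv (L.symm.trans (σ.trans L))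
  refine ⟨L.symm T.toLinearMap, ?_, ?_⟩
  · have h1 : L.symm T.toLinearMap * L.symm T.symm.toLinearMap = 1 := by
      rw [← map_mul]
      have : (T.toLinearMap * T.symm.toLinearMap : Module.End ℂ (Fin d → ℂ)) = 1 := by
        ext v; simp
      rw [this, map_one]
    exact Matrix.det_ne_zero_of_right_inverse h1
  · intro A
    have h := congrArg (fun F => F (L A)) hT
    simp only [AlgEquiv.trans_apply, AlgEquiv.symm_apply_apply] at h
    apply L.injective
    rw [map_mul, map_mul, AlgEquiv.apply_symm_apply, h]
    ext v
    simp [LinearEquiv.conjAlgEquiv_apply]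

lemma root_exists {d : ℕ} (hd : 0 < d) (c : ℂ) (hc : c ≠ 0) : ∃ b : ℂ, b ≠ 0 ∧ b ^ d * c = 1 := by
  obtain ⟨b, hb⟩ := IsAlgClosed.exists_pow_nat_eq (c⁻¹) hd
  refine ⟨b, ?_, by rw [hb, inv_mul_cancel₀ hc]⟩
  rintro rfl
  rw [zero_pow hd.ne'] at hb
  exact inv_ne_zero hc hb.symm

lemma root_pow {n d : ℕ} (hco : Nat.Coprime n d) (hd : 0 < d) : ∃ s : ℕ, ∀ w : ℂ, w ^ d = 1 → (w ^ n) ^ s = w := by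
  rcases Nat.lt_or_ge 1 d with h | h
  · obtain ⟨s, -, hs⟩ := Nat.exists_mul_mod_eq_one_of_coprime hco h
    refine ⟨s, fun w hw => ?_⟩
    rw [← pow_mul, ← Nat.div_add_mod (n * s) d, hs, pow_add, pow_mul, hw, one_pow, one_mul, pow_one]
  · have : d = 1 := by omega
    subst this
    refine ⟨0, fun w hw => ?_⟩
    rw [pow_zero]; rw [pow_one] at hw; exact hw.symm

section ext
variable {G : Type} [Group G] [Fintype G] (M : Subgroup G) [M.Normal] [Fintype M]

lemma KK_mul (x y : G) (a : GA M) : KK M x (KK M y a) = KK M (x * y) a := by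
  rw [GA_sum a]
  simp only [map_sum, map_smul, KK_oo, map_mul, MulAut.mul_apply]

lemma KK_one (a : GA M) : KK M 1 a = a := by
  conv_lhs => rw [GA_sum a]
  simp only [map_sum, map_smul, KK_oo, map_one, MulAut.one_apply]
  exact (GA_sum a).symm

lemma KK_EE_inv {ψ : M → ℂ} {x : G} (hx : ∀ m, ψ (MulAut.conjNormal x m) = ψ m) : KK M x (EE ψ) = EE ψ := by
  rw [KK_EE]
  congr 1
  funext m
  rw [← hx, ← MulAut.mul_apply, ← map_mul]; simp

lemma ext1 {ψ : M → ℂ} (hψ : ψ ∈ irr M) (x : G) (hx : ∀ m, ψ (MulAut.conjNormal x m) = ψ m) :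
    ∃ T : Matrix (Fin (deg ψ)) (Fin (deg ψ)) ℂ, T.det = 1 ∧ ∀ a, rep hψ (KK M x a) * T = T * rep hψ a := by
  have hne := fin_deg_ne hψ
  obtain ⟨Φ, hΦ, hΦ1, hΦr, hΦe⟩ := exists_phi hψ
  let σ : Matrix (Fin (deg ψ)) (Fin (deg ψ)) ℂ →ₐ[ℂ] Matrix (Fin (deg ψ)) (Fin (deg ψ)) ℂ :=
    AlgHom.ofLinearMap ((rep hψ).toLinearMap ∘ₗ (KK M x).toLinearMap ∘ₗ Φ)
      (by simp [hΦ1, KK_EE_inv M hx, (rep_props hψ).1]) (by intro A B; simp [hΦ])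
  have hσ : ∀ a, σ (rep hψ a) = rep hψ (KK M x a) := by
    intro a
    change rep hψ (KK M x (Φ (rep hψ a))) = _
    rw [hΦe, map_mul, KK_EE_inv M hx, map_mul, (rep_props hψ).1, one_mul]
  have hs : Function.Surjective σ := by
    intro B
    obtain ⟨b, rfl⟩ := rep_surj hψ B
    refine ⟨rep hψ (KK M x⁻¹ b), ?_⟩
    rw [hσ, KK_mul, mul_inv_cancel, KK_one]
  have hi : Function.Injective σ := (LinearMap.injective_iff_surjective (f := σ.toLinearMap)).2 hs
  obtain ⟨T, hT, h⟩ := inner_aut (AlgEquiv.ofBijective σ ⟨hi, hs⟩)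
  obtain ⟨b, hb0, hb⟩ := root_exists (deg_pos hψ) _ hT
  refine ⟨b • T, by rw [Matrix.det_smul, Fintype.card_fin, hb], fun a => ?_⟩
  rw [mul_smul_comm, smul_mul_assoc, ← hσ]
  congr 1
  exact h _

lemma comm_scalar {ψ : M → ℂ} (hψ : ψ ∈ irr M) {A B : Matrix (Fin (deg ψ)) (Fin (deg ψ)) ℂ} (x : G)
    (hA : ∀ a, rep hψ (KK M x a) * A = A * rep hψ a) (hB : ∀ a, rep hψ (KK M x a) * B = B * rep hψ a)
    (hA1 : A.det = 1) (hB1 : B.det = 1) : ∃ c : ℂ, c ^ deg ψ = 1 ∧ A = c • B := by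
  have hBu : IsUnit B.det := by rw [hB1]; exact isUnit_one
  obtain ⟨c, hc⟩ := scalar_of_comm (B⁻¹ * A) (by
    intro C
    obtain ⟨a, rfl⟩ := rep_surj hψ C
    have : rep hψ (KK M x a) = B * rep hψ a * B⁻¹ := by
      rw [← hB, Matrix.mul_assoc, Matrix.mul_nonsing_inv _ hBu, Matrix.mul_one]
    have h2 := hA a
    rw [this] at h2
    rw [Matrix.mul_assoc, ← h2, Matrix.mul_assoc, Matrix.mul_assoc, Matrix.nonsing_inv_mul_cancel_left _ _ hBu])
  have h : A = c • B := by
    have := congrArg (fun C => B * C) hc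
    simpa [Matrix.mul_nonsing_inv_cancel_left _ _ hBu] using this
  refine ⟨c, ?_, h⟩
  have h2 := congrArg Matrix.det h
  rw [Matrix.det_smul, Fintype.card_fin, hA1, hB1, mul_one] at h2
  exact h2.symm

lemma ext_hom {ψ : M → ℂ} (hψ : ψ ∈ irr M) (P : Subgroup G) [Fintype P]
    (hP : ∀ x ∈ P, ∀ m, ψ (MulAut.conjNormal x m) = ψ m) (hco : Nat.Coprime (Fintype.card P) (deg ψ))
    (hdet : ∀ m, (rep hψ (oo m)).det = 1) :
    ∃ T : P →* Matrix (Fin (deg ψ)) (Fin (deg ψ)) ℂ,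
      (∀ (x : P) a, rep hψ (KK M x a) * T x = T x * rep hψ a) ∧
      ∀ (x : P) (m : M), (m : G) = x → T x = rep hψ (oo m) := by
  have hne := fin_deg_ne hψ
  choose T hT1 hT using fun x : P => ext1 M hψ (x : G) (hP x x.2)
  have hTT : ∀ x y : P, ∀ a, rep hψ (KK M ((x * y : P) : G) a) * (T x * T y) = (T x * T y) * rep hψ a := by
    intro x y a
    rw [Subgroup.coe_mul, ← KK_mul, ← mul_assoc, hT, mul_assoc, hT, mul_assoc]
  choose α hα1 hα using fun x y : P => comm_scalar M hψ ((x * y : P) : G) (hTT x y) (hT (x * y))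
    (by rw [Matrix.det_mul, hT1, hT1, one_mul]) (hT1 _)
  have hα0 : ∀ x y, α x y ≠ 0 := by
    intro x y h
    have := hα1 x y
    rw [h, zero_pow (deg_pos hψ).ne'] at this
    exact zero_ne_one this
  have hT0 : ∀ x, T x ≠ 0 := by
    intro x h
    have := hT1 x
    rw [h, Matrix.det_zero] at this
    exact zero_ne_one this
  have hcoc : ∀ x y z, α x y * α (x * y) z = α x (y * z) * α y z := by
    intro x y z
    have h1 : T x * T y * T z = (α x y * α (x * y) z) • T (x * y * z) := by
      rw [hα, smul_mul_assoc, hα, smul_smul]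
    have h2 : T x * T y * T z = (α x (y * z) * α y z) • T (x * y * z) := by
      rw [mul_assoc, hα y z, mul_smul_comm, hα, smul_smul, mul_assoc x, mul_comm]
    rw [h1, ← sub_eq_zero, ← sub_smul] at h2
    rcases smul_eq_zero.1 h2 with h | h
    · exact sub_eq_zero.1 h
    · exact absurd h (hT0 _)
  let β : P → ℂ := fun x => ∏ z, α x z
  have hβ0 : ∀ x, β x ≠ 0 := fun x => Finset.prod_ne_zero_iff.2 fun z _ => hα0 x z
  have hβ1 : ∀ x, β x ^ deg ψ = 1 := fun x => by
    simp only [β]; rw [← Finset.prod_pow]; exact Finset.prod_eq_one fun z _ => hα1 x z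
  have hβ : ∀ x y, α x y ^ Fintype.card P * β (x * y) = β x * β y := by
    intro x y
    have h1 : ∏ z, (α x y * α (x * y) z) = ∏ z, (α x (y * z) * α y z) := Finset.prod_congr rfl fun z _ => hcoc x y z
    rw [Finset.prod_mul_distrib, Finset.prod_mul_distrib, Finset.prod_const, Finset.card_univ] at h1
    rw [h1]
    congr 1
    exact Fintype.prod_equiv (Equiv.mulLeft y) _ _ fun z => rfl
  obtain ⟨s, hs⟩ := root_pow hco (deg_pos hψ)
  let T' : P → Matrix (Fin (deg ψ)) (Fin (deg ψ)) ℂ := fun x => (β x ^ s)⁻¹ • T x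
  have hm : ∀ x y, T' (x * y) = T' x * T' y := by
    intro x y
    simp only [T']
    rw [smul_mul_assoc, mul_smul_comm, smul_smul, hα, smul_smul]
    congr 1
    have h1 := congrArg (fun w => w ^ s) (hβ x y)
    simp only [mul_pow] at h1
    rw [hs _ (hα1 x y)] at h1
    rw [← mul_inv, ← h1, mul_inv, mul_right_comm, inv_mul_cancel₀ (hα0 _ _), one_mul]
  have hdT : ∀ x, (T' x).det = 1 := by
    intro x
    simp only [T']
    rw [Matrix.det_smul, hT1, mul_one, Fintype.card_fin, inv_pow, ← pow_mul, mul_comm, pow_mul, hβ1, one_pow, inv_one]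
  have h1 : T' 1 = 1 := by
    have h := hm 1 1
    rw [mul_one] at h
    have hu : IsUnit (T' 1).det := by rw [hdT]; exact isUnit_one
    have := congrArg (fun A => (T' 1)⁻¹ * A) h
    simpa [Matrix.nonsing_inv_mul_cancel_left _ _ hu, Matrix.nonsing_inv_mul _ hu] using this.symm
  have hT' : ∀ (x : P) a, rep hψ (KK M x a) * T' x = T' x * rep hψ a := by
    intro x a
    simp only [T']
    rw [mul_smul_comm, smul_mul_assoc, hT]
  refine ⟨⟨⟨T', h1⟩, hm⟩, hT', ?_⟩
  intro x m hxm
  change T' x = _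
  have hB : ∀ a, rep hψ (KK M x a) * rep hψ (oo m) = rep hψ (oo m) * rep hψ a := by
    intro a
    rw [← map_mul, ← map_mul]
    congr 1
    conv_lhs => rw [GA_sum a]
    conv_rhs => rw [GA_sum a]
    simp only [map_sum, map_smul, Finset.mul_sum, Finset.sum_mul, mul_smul_comm, smul_mul_assoc, KK_oo, ← oo_mul]
    refine Finset.sum_congr rfl fun y _ => ?_
    congr 2
    apply Subtype.ext
    simp [MulAut.conjNormal_apply, ← hxm]
  obtain ⟨c, hc1, hc⟩ := comm_scalar M hψ (x : G) (hT' x) hB (hdT x) (hdet m)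
  have hn1 : T' x ^ Fintype.card P = 1 := by
    have : ∀ k : ℕ, T' x ^ k = T' (x ^ k) := by
      intro k
      induction k with
      | zero => rw [pow_zero, pow_zero, h1]
      | succ k ih => rw [pow_succ, ih, ← hm, pow_succ]
    rw [this, pow_card_eq_one, h1]
  have hn2 : rep hψ (oo m) ^ Fintype.card P = 1 := by
    rw [W_pow]
    have : m ^ Fintype.card P = 1 := by
      apply Subtype.ext
      rw [Subgroup.coe_pow, hxm, ← Subgroup.coe_pow, pow_card_eq_one]; rfl
    rw [this, oo_one, map_one]
  rw [hc, smul_pow, hn2] at hn1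
  have hcn : c ^ Fintype.card P = 1 := by
    have := congrArg (fun A => A (Classical.arbitrary _) (Classical.arbitrary _)) hn1
    simpa using this
  have hc2 := hs c hc1
  rw [hcn, one_pow] at hc2
  rw [hc, ← hc2, one_smul]

open Classical in
lemma JJ_coeff (a : GA M) (g : G) : (JJ M a).coeff g = if h : g ∈ M then a.coeff ⟨g, h⟩ else 0 := by
  classical
  conv_lhs => rw [GA_sum a]
  simp only [map_sum, map_smul, JJ_oo, MonoidAlgebra.coeff_sum, MonoidAlgebra.coeff_smul, Finsupp.finsetSum_apply,
    Finsupp.smul_apply, oo_coeff, smul_eq_mul]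
  split_ifs with h
  · rw [Finset.sum_eq_single ⟨g, h⟩]
    · simp
    · intro b _ hb
      rw [if_neg, mul_zero]
      intro h'; exact hb (Subtype.ext h')
    · simp
  · refine Finset.sum_eq_zero fun m _ => ?_
    rw [if_neg, mul_zero]
    rintro rfl; exact h m.2

lemma mul_oo_coeff {X : Type} [Group X] (a : GA X) (x y : X) : (a * oo x).coeff y = a.coeff (y * x⁻¹) := by
  rw [oo, MonoidAlgebra.of_apply, MonoidAlgebra.coeff_mul_single_apply, mul_one]

theorem lemmaC2 {ψ : M → ℂ} (hψ : ψ ∈ irr M) (P : Subgroup G) {p k h : ℕ} (hp : p.Prime) (hPp : IsPGroup p P)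
    (hP : ∀ x ∈ P, ∀ m, ψ (MulAut.conjNormal x m) = ψ m) (hpd : ¬ p ∣ deg ψ)
    (hdet : ∀ m, (rep hψ (oo m)).det = 1) (hG : Nat.card G = k * (Nat.card P * h)) (hph : ¬ p ∣ h) :
    ∃ (f : G → ℂ) (hf : f ∈ irr G), rep hf (JJ M (EE ψ)) ≠ 0 ∧ ¬ k * p ∣ deg f := by
  classical
  have : Fact p.Prime := ⟨hp⟩
  have hco : Nat.Coprime (Fintype.card P) (deg ψ) := by
    obtain ⟨n, hn⟩ := hPp.exists_card_eq
    rw [← Nat.card_eq_fintype_card, hn]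
    exact Nat.Coprime.pow_left _ ((hp.coprime_iff_not_dvd).2 hpd)
  obtain ⟨T, hT, hTM⟩ := ext_hom M hψ P hP hco hdet
  obtain ⟨Φ, hΦ, hΦ1, hΦr, hΦe⟩ := exists_phi hψ
  have hTi : ∀ x : P, T x⁻¹ * T x = 1 := fun x => by rw [← map_mul, inv_mul_cancel, map_one]
  have hTi' : ∀ x : P, T x * T x⁻¹ = 1 := fun x => by rw [← map_mul, mul_inv_cancel, map_one]
  have hKΦ : ∀ (x : P) A, KK M x (Φ A) = Φ (T x * A * T x⁻¹) := by
    intro x A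
    have h1 : Φ (rep hψ (KK M x (Φ A))) = KK M x (Φ A) := by
      rw [hΦe]
      conv_lhs => rw [← KK_EE_inv M (hP x x.2)]
      rw [← map_mul, ← hΦ1, ← hΦ, one_mul]
    rw [← h1]
    congr 1
    have h2 := hT x (Φ A)
    rw [hΦr] at h2
    rw [← h2, mul_assoc, hTi', mul_one]
  let y : P → GA G := fun x => JJ M (Φ (T x⁻¹)) * oo (x : G)
  have hy : ∀ x z, y x * y z = y (x * z) := by
    intro x z
    simp only [y]
    rw [mul_assoc, ← mul_assoc (oo (x : G)), JJ_conj, hKΦ, mul_assoc, ← oo_mul, ← mul_assoc, ← map_mul, ← hΦ]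
    congr 3
    rw [mul_inv_rev, map_mul, ← mul_assoc, ← mul_assoc, hTi, one_mul]
  have hey : ∀ x, JJ M (EE ψ) * y x = y x := by
    intro x
    simp only [y]
    rw [← mul_assoc, ← map_mul, ← hΦ1, ← hΦ, one_mul]
  have hcP : (Fintype.card P : ℂ) ≠ 0 := by simp
  let E : GA G := (Fintype.card P : ℂ)⁻¹ • ∑ x, y x
  have hyE : ∀ x, y x * E = E := by
    intro x
    simp only [E, mul_smul_comm, Finset.mul_sum, hy]
    congr 1
    exact Fintype.sum_equiv (Equiv.mulLeft x) _ _ fun z => rfl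
  have hEE : E * E = E := by
    conv_lhs => enter [1]; simp only [E]
    rw [smul_mul_assoc, Finset.sum_mul, Finset.sum_congr rfl fun x _ => hyE x, Finset.sum_const, Finset.card_univ,
      ← Nat.cast_smul_eq_nsmul ℂ, smul_smul, inv_mul_cancel₀ hcP, one_smul]
  have heE : JJ M (EE ψ) * E = E := by
    simp only [E, mul_smul_comm, Finset.mul_sum, hey]
  have hy1 : ∀ x : P, (y x).coeff 1 = if x ∈ M.subgroupOf P then (deg ψ : ℂ) * deg ψ / Fintype.card M else 0 := by
    intro x
    simp only [y]
    rw [mul_oo_coeff, one_mul, JJ_coeff]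
    by_cases hx : (x : G) ∈ M
    · rw [if_pos (Subgroup.mem_subgroupOf.2 hx), dif_pos (M.inv_mem hx), hTM x⁻¹ ⟨(x : G)⁻¹, M.inv_mem hx⟩ rfl, hΦe,
        mul_oo_coeff, mul_inv_cancel, EE_coeff, inv_one, irr_one hψ]
      ring
    · rw [if_neg (fun h => hx (Subgroup.mem_subgroupOf.1 h)), dif_neg (fun h => hx (by simpa using h))]
  have hE1 : E.coeff 1 = (Fintype.card P : ℂ)⁻¹ * (Nat.card (M.subgroupOf P) * ((deg ψ : ℂ) * deg ψ / Fintype.card M)) := by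
    simp only [E, MonoidAlgebra.coeff_sum, MonoidAlgebra.coeff_smul, Finsupp.finsetSum_apply,
      Finsupp.smul_apply, smul_eq_mul, hy1]
    rw [← Finset.sum_filter, Finset.sum_const, nsmul_eq_mul]
    congr 3
    rw [Nat.card_eq_fintype_card]
    exact (Fintype.card_subtype (fun x => x ∈ M.subgroupOf P)).symm
  have hsum := irr_sum_lin E
  by_contra hcon
  push Not at hcon
  have hterm : ∀ f ∈ irr G, ∃ n : ℕ, (deg f : ℂ) * ∑ x, E.coeff x * f x = ((k * p * n : ℕ) : ℂ) := by
    intro f hf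
    rw [← rep_trace_lin (rep hf) f (rep_trace hf)]
    obtain ⟨n, hn, hn0, -⟩ := trace_idem_nat (rep hf E) (by rw [← map_mul, hEE])
    by_cases he : rep hf (JJ M (EE ψ)) = 0
    · refine ⟨0, ?_⟩
      rw [← heE, map_mul, he]; simp
    · obtain ⟨c, hc⟩ := hcon f hf he
      refine ⟨c * n, ?_⟩
      rw [hn, hc]; push_cast; ring
  choose! n hn using hterm
  rw [Finset.sum_congr rfl hn, ← Nat.cast_sum, ← Finset.mul_sum, hE1] at hsum
  have hcM : (Fintype.card M : ℂ) ≠ 0 := by simp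
  rw [← Nat.card_eq_fintype_card, hG] at hsum
  field_simp at hsum
  rw [← Nat.card_eq_fintype_card (α := P), ← Nat.card_eq_fintype_card (α := M)] at hsum
  have h1 : k * p * (∑ f ∈ irr G, n f) * Nat.card P * Nat.card M = k * (Nat.card P * h) * Nat.card (M.subgroupOf P) * (deg ψ * deg ψ) := by
    have : ((k * p * (∑ f ∈ irr G, n f) * Nat.card P * Nat.card M : ℕ) : ℂ) = ((k * (Nat.card P * h) * Nat.card (M.subgroupOf P) * (deg ψ * deg ψ) : ℕ) : ℂ) := by
      push_cast at hsum ⊢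
      linear_combination hsum
    exact_mod_cast this
  have hGp : 0 < Nat.card G := Nat.card_pos
  have hk : 0 < k := Nat.pos_of_ne_zero (by rintro rfl; simp at hG)
  have hPc : 0 < Nat.card P := Nat.card_pos
  obtain ⟨m', hm'⟩ := Subgroup.card_subgroup_dvd_card (P.subgroupOf M)
  have hPM : Nat.card (P.subgroupOf M) = Nat.card (M.subgroupOf P) :=
    Nat.card_congr ⟨fun x => ⟨⟨x.1.1, x.2⟩, x.1.2⟩, fun x => ⟨⟨x.1.1, x.2⟩, x.1.2⟩, fun _ => rfl, fun _ => rfl⟩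
  have hc : 0 < Nat.card (M.subgroupOf P) := Nat.card_pos
  rw [hPM] at hm'
  rw [hm'] at h1
  have h2 : p * ((∑ f ∈ irr G, n f) * m') = h * (deg ψ * deg ψ) := by
    apply Nat.eq_of_mul_eq_mul_left (Nat.mul_pos (Nat.mul_pos hk hPc) hc)
    linarith
  have h3 : p ∣ h * (deg ψ * deg ψ) := ⟨_, h2.symm⟩
  rcases hp.dvd_mul.1 h3 with h4 | h4
  · exact hph h4
  · rcases hp.dvd_mul.1 h4 with h5 | h5 <;> exact hpd h5
end ext
end P7

section P8
set_option linter.unusedSectionVars false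

/-- The structure of a nonabelian, nonsimple minimal normal subgroup. -/
theorem min_normal_struct {G : Type} [Group G] [Finite G] (M : Subgroup G) [M.Normal]
    (hmin : ∀ K : Subgroup G, K.Normal → K ≤ M → K = ⊥ ∨ K = M)
    (hna : ∃ x ∈ M, ∃ y ∈ M, x * y ≠ y * x) (hns : ¬ IsSimpleGroup M) :
    ∃ S : Subgroup G, S ≤ M ∧ IsSimpleGroup S ∧ (¬ ∀ x y : S, x * y = y * x) ∧
      (∀ m ∈ M, ∀ s ∈ S, m * s * m⁻¹ ∈ S) ∧
      (∀ g, g ∉ Subgroup.normalizer (S : Set G) → ∀ s ∈ S, ∀ t ∈ S, (g * t * g⁻¹) * s = s * (g * t * g⁻¹)) ∧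
      Subgroup.normalizer (S : Set G) ≠ ⊤ ∧
      ∃ π : M →* S, ∀ (m : M) (t : S), (m * t * (m : G)⁻¹ : G) = (π m * t * (π m)⁻¹ : S) := by
  have hMn : M.Normal := inferInstance
  obtain ⟨x0, hx0, y0, hy0, hxy⟩ := hna
  have hM : M ≠ ⊥ := by
    rintro rfl
    rw [Subgroup.mem_bot] at hx0 hy0
    exact hxy (by rw [hx0, hy0])
  let F : Set (Subgroup G) := {S | S ≠ ⊥ ∧ S ≤ M ∧ ∀ m ∈ M, ∀ s ∈ S, m * s * m⁻¹ ∈ S}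
  obtain ⟨S, ⟨hS0, hSM, hSn⟩, hSmin⟩ := (Set.toFinite F).exists_minimal ⟨M, hM, le_refl _, fun m hm s hs => hMn.conj_mem s hs m⟩
  have hmin' : ∀ T : Subgroup G, T ≤ S → (∀ m ∈ M, ∀ s ∈ T, m * s * m⁻¹ ∈ T) → T = ⊥ ∨ T = S := by
    intro T hT hTn
    by_cases h : T = ⊥
    · exact Or.inl h
    · exact Or.inr (le_antisymm hT (hSmin (show T ∈ F from ⟨h, hT.trans hSM, hTn⟩) hT))
  -- normality of conjugates
  have hconjn : ∀ g, ∀ m ∈ M, ∀ t ∈ S, ∃ t' ∈ S, m * (g * t * g⁻¹) * m⁻¹ = g * t' * g⁻¹ := by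
    intro g m hm t ht
    refine ⟨(g⁻¹ * m * g) * t * (g⁻¹ * m * g)⁻¹, hSn _ ?_ _ ht, by group⟩
    simpa using hMn.conj_mem m hm g⁻¹
  have hcomm : ∀ g, g ∉ Subgroup.normalizer (S : Set G) → ∀ s ∈ S, ∀ t ∈ S, (g * t * g⁻¹) * s = s * (g * t * g⁻¹) := by
    intro g hg s hs t ht
    let T : Subgroup G := S ⊓ S.map (MulAut.conj g).toMonoidHom
    have hT : ∀ x, x ∈ T ↔ x ∈ S ∧ ∃ t ∈ S, g * t * g⁻¹ = x := by
      intro x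
      simp [T, Subgroup.mem_inf, Subgroup.mem_map, MulAut.conj_apply]
    rcases hmin' T inf_le_left (by
      intro m hm x hx
      rw [hT] at hx ⊢
      obtain ⟨h1, t, ht, rfl⟩ := hx
      obtain ⟨t', ht', h⟩ := hconjn g m hm t ht
      exact ⟨hSn m hm _ h1, t', ht', h.symm⟩) with h | h
    · have h1 : (g * t * g⁻¹) * s * (g * t * g⁻¹)⁻¹ * s⁻¹ ∈ T := by
        rw [hT]
        constructor
        · exact S.mul_mem (hSn _ (hMn.conj_mem t (hSM ht) g) s hs) (S.inv_mem hs)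
        · obtain ⟨t', ht', h⟩ := hconjn g s (hSM hs) t⁻¹ (S.inv_mem ht)
          refine ⟨t * t', S.mul_mem ht ht', ?_⟩
          have : g * (t * t') * g⁻¹ = g * t * g⁻¹ * (g * t' * g⁻¹) := by group
          rw [this, ← h]; group
      rw [h, Subgroup.mem_bot] at h1
      have h2 := mul_eq_one_iff_eq_inv.1 h1
      rw [inv_inv] at h2
      exact mul_inv_eq_iff_eq_mul.1 h2
    · exfalso
      apply hg
      have hle : S ≤ S.map (MulAut.conj g).toMonoidHom := by
        intro x hx
        rw [← h] at hx
        exact hx.2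
      have heq : S = S.map (MulAut.conj g).toMonoidHom := by
        apply Subgroup.eq_of_le_of_card_ge hle
        rw [Subgroup.card_map_of_injective (MulAut.conj g).injective]
      rw [Subgroup.mem_normalizer_iff]
      intro x
      constructor
      · intro hx
        rw [heq]
        exact ⟨x, hx, rfl⟩
      · intro hx
        rw [heq] at hx
        obtain ⟨t, ht, h3⟩ := hx
        have : t = x := (MulAut.conj g).injective h3
        exact this ▸ ht
  have hNC : Subgroup.normalClosure (S : Set G) = M := by
    rcases hmin _ Subgroup.normalClosure_normal (Subgroup.normalClosure_le_normal hSM) with h | h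
    · exfalso
      apply hS0
      rw [eq_bot_iff, ← h]
      exact Subgroup.subset_normalClosure
    · exact h
  have hact : ∀ m ∈ M, ∃ s ∈ S, ∀ t ∈ S, m * t * m⁻¹ = s * t * s⁻¹ := by
    intro m hm
    rw [← hNC, Subgroup.normalClosure] at hm
    induction hm using Subgroup.closure_induction with
    | mem x hx =>
      obtain ⟨a, ha, hc⟩ := Group.mem_conjugatesOfSet_iff.1 hx
      obtain ⟨g, rfl⟩ := isConj_iff.1 hc
      by_cases hg : g ∈ Subgroup.normalizer (S : Set G)
      · exact ⟨_, (Subgroup.mem_normalizer_iff.1 hg a).1 ha, fun t _ => rfl⟩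
      · refine ⟨1, S.one_mem, fun t ht => ?_⟩
        rw [hcomm g hg t ht a ha]; group
    | one => exact ⟨1, S.one_mem, fun t _ => rfl⟩
    | mul x y _ _ hx hy =>
      obtain ⟨s, hs, h1⟩ := hx
      obtain ⟨s', hs', h2⟩ := hy
      refine ⟨s * s', S.mul_mem hs hs', fun t ht => ?_⟩
      have h3 := h1 _ (S.mul_mem (S.mul_mem hs' ht) (S.inv_mem hs'))
      rw [← h2 t ht] at h3
      have h4 := h2 t ht
      calc x * y * t * (x * y)⁻¹ = x * (y * t * y⁻¹) * x⁻¹ := by group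
        _ = s * (y * t * y⁻¹) * s⁻¹ := h3
        _ = s * (s' * t * s'⁻¹) * s⁻¹ := by rw [h4]
        _ = _ := by group
    | inv x _ hx =>
      obtain ⟨s, hs, h1⟩ := hx
      refine ⟨s⁻¹, S.inv_mem hs, fun t ht => ?_⟩
      have h2 := h1 (s⁻¹ * t * s⁻¹⁻¹) (S.mul_mem (S.mul_mem (S.inv_mem hs) ht) (S.inv_mem (S.inv_mem hs)))
      have h3 : s * (s⁻¹ * t * s⁻¹⁻¹) * s⁻¹ = t := by group
      rw [h3] at h2
      conv_lhs => rw [← h2]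
      group
  have hSna : ¬ ∀ x y : S, x * y = y * x := by
    intro hab
    have h1 : M ≤ Subgroup.centralizer (M : Set G) := by
      conv_lhs => rw [← hNC]
      apply Subgroup.normalClosure_le_normal
      intro x hx
      rw [SetLike.mem_coe, Subgroup.mem_centralizer_iff]
      intro m hm
      obtain ⟨s, hs, h⟩ := hact m hm
      have h2 := congrArg Subtype.val (hab ⟨s, hs⟩ ⟨x, hx⟩)
      simp only [Subgroup.coe_mul] at h2
      have h3 := h x hx
      rw [h2, mul_inv_cancel_right] at h3
      exact mul_inv_eq_iff_eq_mul.1 h3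
    exact hxy (Subgroup.mem_centralizer_iff.1 (h1 hy0) x0 hx0)
  have hSs : IsSimpleGroup S := by
    have : Nontrivial S := (Subgroup.nontrivial_iff_ne_bot S).2 hS0
    refine ⟨fun L hL => ?_⟩
    rcases hmin' (L.map S.subtype) (Subgroup.map_subtype_le L) (by
      rintro m hm _ ⟨x, hx, rfl⟩
      obtain ⟨s, hs, h⟩ := hact m hm
      rw [Subgroup.subtype_apply, h x x.2]
      exact ⟨⟨s, hs⟩ * x * ⟨s, hs⟩⁻¹, hL.conj_mem x hx ⟨s, hs⟩, rfl⟩) with h | h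
    · left
      rwa [Subgroup.map_eq_bot_iff_of_injective _ S.subtype_injective] at h
    · right
      rw [eq_top_iff]
      intro x _
      have : (x : G) ∈ L.map S.subtype := by rw [h]; exact x.2
      obtain ⟨y, hy, h2⟩ := this
      have : y = x := Subtype.ext h2
      exact this ▸ hy
  refine ⟨S, hSM, hSs, hSna, hSn, hcomm, ?_, ?_⟩
  · intro htop
    have hSnor : S.Normal := Subgroup.normalizer_eq_top_iff.1 htop
    rcases hmin S hSnor hSM with h | h
    · exact hS0 h
    · subst h
      exact hns hSs
  · have := Fintype.ofFinite S
    have huniq : ∀ s s' : S, (∀ t : S, s * t * s⁻¹ = s' * t * s'⁻¹) → s = s' := by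
      intro s s' h
      have := center_triv hSna (x := s'⁻¹ * s) (by
        intro y
        have h2 := h y
        calc s'⁻¹ * s * y = s'⁻¹ * (s * y * s⁻¹) * s := by group
          _ = s'⁻¹ * (s' * y * s'⁻¹) * s := by rw [h2]
          _ = _ := by group)
      exact (inv_mul_eq_one.1 this).symm
    have hact' : ∀ m : M, ∃ s : S, ∀ t : S, (m * t * (m : G)⁻¹ : G) = (s * t * s⁻¹ : S) := by
      intro m
      obtain ⟨s, hs, h⟩ := hact m m.2
      exact ⟨⟨s, hs⟩, fun t => h t t.2⟩
    choose π hπ using hact'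
    refine ⟨MonoidHom.mk' π ?_, hπ⟩
    intro a b
    apply huniq
    intro t
    apply Subtype.ext
    rw [← hπ]
    have h1 := hπ a (π b * t * (π b)⁻¹)
    rw [← hπ] at h1
    calc ((a * b : M) * t * ((a * b : M) : G)⁻¹ : G) = a * (b * t * (b : G)⁻¹) * (a : G)⁻¹ := by
          simp only [Subgroup.coe_mul]; group
      _ = _ := h1
      _ = _ := by congr 1; group
end P8

section P9
set_option linter.unusedSectionVars false

section prod
variable {X Y : Type} [Group X] [Fintype X] [Group Y] [Fintype Y]

lemma irr_prod {f : X → ℂ} (hf : f ∈ irr X) {g : Y → ℂ} (hg : g ∈ irr Y) :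
    (fun z : X × Y => f z.1 * g z.2) ∈ irr (X × Y) := by
  have := fin_deg_ne hf
  have := fin_deg_ne hg
  let T : X × Y →* Matrix (Fin (deg f) × Fin (deg g)) (Fin (deg f) × Fin (deg g)) ℂ :=
    { toFun := fun z => Matrix.kroneckerMap (· * ·) (rep hf (oo z.1)) (rep hg (oo z.2))
      map_one' := by
        rw [Prod.fst_one, Prod.snd_one, oo_one, oo_one, map_one, map_one]
        exact Matrix.one_kronecker_one
      map_mul' := fun a b => by
        rw [Prod.fst_mul, Prod.snd_mul, oo_mul, oo_mul, map_mul, map_mul]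
        exact Matrix.mul_kronecker_mul _ _ _ _ }
  let W := MonoidAlgebra.lift ℂ (Matrix (Fin (deg f) × Fin (deg g)) (Fin (deg f) × Fin (deg g)) ℂ) (X × Y) T
  have hW : ∀ z, W (oo z) = Matrix.kroneckerMap (· * ·) (rep hf (oo z.1)) (rep hg (oo z.2)) := by
    intro z
    simp [W, oo, T]
  refine mem_irr.2 (irr_of_rep W ?_ _ ?_)
  · have hk : ∀ A B, ∃ c, W c = Matrix.kroneckerMap (· * ·) A B := by
      intro A B
      obtain ⟨a, rfl⟩ := rep_surj hf A
      obtain ⟨b, rfl⟩ := rep_surj hg B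
      refine ⟨∑ x, ∑ y, (a.coeff x * b.coeff y) • oo (x, y), ?_⟩
      conv_rhs => rw [GA_sum a, GA_sum b]
      simp only [map_sum, map_smul, hW]
      ext i j
      simp only [Matrix.sum_apply, Matrix.smul_apply, Matrix.kroneckerMap_apply, Finset.sum_mul_sum, smul_eq_mul]
      refine Finset.sum_congr rfl fun x _ => Finset.sum_congr rfl fun y _ => ?_
      ring
    intro C
    choose c hc using hk
    refine ⟨∑ i, ∑ j, C i j • c (Matrix.single i.1 j.1 1) (Matrix.single i.2 j.2 1), ?_⟩
    simp only [map_sum, map_smul, hc]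
    conv_rhs => rw [Matrix.matrix_eq_sum_single C]
    refine Finset.sum_congr rfl fun i _ => Finset.sum_congr rfl fun j _ => ?_
    ext a b
    simp only [Matrix.smul_apply, Matrix.kroneckerMap_apply, Matrix.single_apply, smul_eq_mul, Prod.ext_iff]
    split_ifs <;> simp_all
  · intro z
    rw [hW, rep_trace hf, rep_trace hg]
    exact (Matrix.trace_kronecker _ _).symm
end prod

lemma exists_over {G : Type} [Group G] [Fintype G] (M : Subgroup G) [M.Normal] [Fintype M] {ψ : M → ℂ}
    (hψ : ψ ∈ irr M) : ∃ (f : G → ℂ) (hf : f ∈ irr G), rep hf (JJ M (EE ψ)) ≠ 0 := by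
  classical
  by_contra hcon
  push Not at hcon
  have h := irr_sum_lin (JJ M (EE ψ))
  rw [Finset.sum_eq_zero] at h
  · rw [JJ_coeff, dif_pos M.one_mem] at h
    have h1 : (EE ψ).coeff ⟨1, M.one_mem⟩ ≠ 0 := by
      rw [EE_coeff, irr_one hψ]
      have : (⟨1, M.one_mem⟩ : M)⁻¹ = 1 := by simp
      rw [this, irr_one hψ]
      have h3 : (deg ψ : ℂ) ≠ 0 := Nat.cast_ne_zero.2 (deg_pos hψ).ne'
      have h4 : (Fintype.card M : ℂ) ≠ 0 := by simp
      exact mul_ne_zero (div_ne_zero h3 h4) h3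
    have h2 : (Fintype.card G : ℂ) ≠ 0 := by simp
    exact (mul_ne_zero h2 h1) h.symm
  · intro f hf
    rw [← rep_trace_lin (rep hf) f (rep_trace hf), hcon f hf]; simp

section final
variable {G : Type} [Group G] [Fintype G] (M : Subgroup G) [hMn : M.Normal] [Fintype M]
    (S : Subgroup G) [Fintype S] [IsSimpleGroup S] (hSna : ¬ ∀ x y : S, x * y = y * x)
    (hSM : S ≤ M)
    (hcomm : ∀ g, g ∉ Subgroup.normalizer (S : Set G) → ∀ s ∈ S, ∀ t ∈ S, (g * t * g⁻¹) * s = s * (g * t * g⁻¹))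
    (π : M →* S) (hπ : ∀ (m : M) (t : S), (m * t * (m : G)⁻¹ : G) = (π m * t * (π m)⁻¹ : S))
include hSna hSM hcomm hπ

omit hSM hcomm in
lemma pi_eq (m : M) (s : S) (h : ∀ t : S, (m * t * (m : G)⁻¹ : G) = (s * t * s⁻¹ : S)) : π m = s := by
  have := center_triv hSna (x := s⁻¹ * π m) (by
    intro y
    have h2 : s * y * s⁻¹ = π m * y * (π m)⁻¹ := Subtype.ext ((h y).symm.trans (hπ m y))
    calc s⁻¹ * π m * y = s⁻¹ * (π m * y * (π m)⁻¹) * π m := by group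
      _ = s⁻¹ * (s * y * s⁻¹) * π m := by rw [h2]
      _ = _ := by group)
  exact (inv_mul_eq_one.1 this).symm

omit hcomm in
lemma pi_S (s : S) : π ⟨s, hSM s.2⟩ = s := pi_eq M S hSna π hπ _ _ fun t => rfl

lemma pi_conj {g : G} (hg : g ∉ Subgroup.normalizer (S : Set G)) (s : S) (m : M) (hm : (m : G) = g * s * g⁻¹) :
    π m = 1 := by
  apply pi_eq M S hSna π hπ
  intro t
  rw [hm, hcomm g hg t t.2 s s.2]
  simp only [Subgroup.coe_mul, Subgroup.coe_inv, Subgroup.coe_one]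
  group

omit hSM hcomm in
lemma pi_norm (x : Subgroup.normalizer (S : Set G)) (m : M) :
    π (MulAut.conjNormal (x : G) m) = S.normalizerMonoidHom x (π m) := by
  apply pi_eq M S hSna π hπ
  intro t
  have h := hπ m ((S.normalizerMonoidHom x)⁻¹ t)
  have hx : ∀ t, ((S.normalizerMonoidHom x t : S) : G) = x * t * (x : G)⁻¹ := fun t => rfl
  have hx' : ((((S.normalizerMonoidHom x)⁻¹ : MulAut S) t : S) : G) = (x : G)⁻¹ * t * x := by
    rw [← map_inv]
    change ((x⁻¹ : Subgroup.normalizer (S : Set G)) : G) * t * ((x⁻¹ : Subgroup.normalizer (S : Set G)) : G)⁻¹ = _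
    simp
  rw [hx'] at h
  simp only [MulAut.conjNormal_apply, Subgroup.coe_mul, Subgroup.coe_inv, hx] at h ⊢
  rw [hx'] at h
  calc _ = (x : G) * (m * ((x : G)⁻¹ * t * x) * (m : G)⁻¹) * (x : G)⁻¹ := by group
    _ = _ := by rw [h]; group

/-- the character of `M` built from two characters of `S` -/
def psi (g₀ : G) (θ₁ θ₂ : S → ℂ) (m : M) : ℂ := θ₁ (π m) * θ₂ (π (MulAut.conjNormal g₀⁻¹ m))

lemma psi_irr {g₀ : G} (hg₀ : g₀ ∉ Subgroup.normalizer (S : Set G)) {θ₁ θ₂ : S → ℂ} (h₁ : θ₁ ∈ irr S) (h₂ : θ₂ ∈ irr S) :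
    psi M S π g₀ θ₁ θ₂ ∈ irr M := by
  have hg₀' : g₀⁻¹ ∉ Subgroup.normalizer (S : Set G) := fun h => hg₀ (by simpa using Subgroup.inv_mem _ h)
  let φ : M →* S × S := MonoidHom.prod π (π.comp (MulAut.conjNormal g₀⁻¹).toMonoidHom)
  refine irr_comp φ ?_ (irr_prod h₁ h₂)
  rintro ⟨s, t⟩
  refine ⟨⟨s, hSM s.2⟩ * ⟨g₀ * t * g₀⁻¹, hMn.conj_mem t (hSM t.2) g₀⟩, ?_⟩
  have e1 : π ⟨g₀ * t * g₀⁻¹, hMn.conj_mem t (hSM t.2) g₀⟩ = 1 := pi_conj M S hSna hSM hcomm π hπ hg₀ t _ rfl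
  have e2 : π (MulAut.conjNormal g₀⁻¹ ⟨s, hSM s.2⟩) = 1 :=
    pi_conj M S hSna hSM hcomm π hπ hg₀' s _ (by rw [MulAut.conjNormal_apply])
  have e3 : MulAut.conjNormal g₀⁻¹ (⟨g₀ * t * g₀⁻¹, hMn.conj_mem t (hSM t.2) g₀⟩ : M) = ⟨t, hSM t.2⟩ := by
    apply Subtype.ext
    rw [MulAut.conjNormal_apply]
    group
  have e4 := pi_S M S hSna hSM π hπ
  apply Prod.ext
  · change π (_ * _) = s
    rw [map_mul, e1, e4, mul_one]
  · change π (MulAut.conjNormal g₀⁻¹ (_ * _)) = t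
    rw [map_mul, map_mul, e2, e3, e4, one_mul]

omit hSna hSM hcomm hπ in
lemma psi_deg (g₀ : G) {θ₁ θ₂ : S → ℂ} (h₁ : θ₁ ∈ irr S) (h₂ : θ₂ ∈ irr S) (h : psi M S π g₀ θ₁ θ₂ ∈ irr M) :
    deg (psi M S π g₀ θ₁ θ₂) = deg θ₁ * deg θ₂ := by
  have h3 := irr_one h
  rw [psi, map_one, map_one, map_one, irr_one h₁, irr_one h₂] at h3
  exact_mod_cast h3.symm

lemma psi_stab {g₀ : G} (hg₀ : g₀ ∉ Subgroup.normalizer (S : Set G)) {θ₁ θ₂ : S → ℂ} (h₁ : θ₁ ∈ irr S) (h₂ : θ₂ ∈ irr S)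
    (hd : deg θ₁ ≠ deg θ₂) (hd1 : deg θ₁ ≠ 1) (g : G)
    (h : ∀ m : M, psi M S π g₀ θ₁ θ₂ (MulAut.conjNormal g m) = psi M S π g₀ θ₁ θ₂ m) :
    g ∈ Subgroup.normalizer (S : Set G) := by
  by_contra hg
  have hg₀' : g₀⁻¹ ∉ Subgroup.normalizer (S : Set G) := fun h => hg₀ (by simpa using Subgroup.inv_mem _ h)
  have hcS : (Fintype.card S : ℂ) ≠ 0 := by simp
  have p1 := deg_pos h₁
  have p2 := deg_pos h₂
  have hs : ∀ s : S, (deg θ₁ : ℂ) * θ₂ (π (MulAut.conjNormal (g₀⁻¹ * g) ⟨s, hSM s.2⟩)) = θ₁ s * deg θ₂ := by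
    intro s
    have h3 := h ⟨s, hSM s.2⟩
    rw [psi, psi, pi_S M S hSna hSM π hπ,
      pi_conj M S hSna hSM hcomm π hπ hg s (MulAut.conjNormal g ⟨s, hSM s.2⟩) (by rw [MulAut.conjNormal_apply]),
      pi_conj M S hSna hSM hcomm π hπ hg₀' s (MulAut.conjNormal g₀⁻¹ ⟨s, hSM s.2⟩) (by rw [MulAut.conjNormal_apply]),
      irr_one h₁, irr_one h₂] at h3
    rw [map_mul, MulAut.mul_apply, h3]
  by_cases hgg : g₀⁻¹ * g ∈ Subgroup.normalizer (S : Set G)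
  · have h4 := irr_row (irr_aut (S.normalizerMonoidHom ⟨g₀⁻¹ * g, hgg⟩) h₂)
    have h5 := irr_row h₁
    have h6 : ∀ s : S, (deg θ₁ : ℂ) * θ₂ (S.normalizerMonoidHom ⟨g₀⁻¹ * g, hgg⟩ s) = θ₁ s * deg θ₂ := by
      intro s
      rw [← hs s]
      have := pi_norm M S hSna π hπ ⟨g₀⁻¹ * g, hgg⟩ ⟨s, hSM s.2⟩
      simp only at this
      rw [this, pi_S M S hSna hSM π hπ]
    have h7 : (deg θ₁ : ℂ) ^ 2 * Fintype.card S = (deg θ₂ : ℂ) ^ 2 * Fintype.card S := by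
      conv_lhs => rw [← h4]
      conv_rhs => rw [← h5]
      rw [Finset.mul_sum, Finset.mul_sum]
      refine Finset.sum_congr rfl fun s _ => ?_
      have a1 := h6 s
      have a2 := h6 s⁻¹
      linear_combination (deg θ₁ : ℂ) * θ₂ (S.normalizerMonoidHom ⟨g₀⁻¹ * g, hgg⟩ s) * a2 + θ₁ s⁻¹ * deg θ₂ * a1
    have h8 := mul_right_cancel₀ hcS h7
    have h9 : deg θ₁ ^ 2 = deg θ₂ ^ 2 := by exact_mod_cast h8
    exact hd (Nat.pow_left_injective (n := 2) (by norm_num) h9)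
  · have h6 : ∀ s, θ₁ s = deg θ₁ := by
      intro s
      have h3 := hs s
      rw [pi_conj M S hSna hSM hcomm π hπ hgg s (MulAut.conjNormal (g₀⁻¹ * g) ⟨s, hSM s.2⟩) (by rw [MulAut.conjNormal_apply]),
        irr_one h₂] at h3
      exact (mul_right_cancel₀ (Nat.cast_ne_zero.2 p2.ne') h3).symm
    have h5 := irr_row h₁
    simp only [h6, Finset.sum_const, Finset.card_univ, nsmul_eq_mul] at h5
    have h3 : (deg θ₁ : ℂ) * deg θ₁ = 1 := by
      apply mul_left_cancel₀ hcS; rw [h5, mul_one]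
    have h4 : deg θ₁ * deg θ₁ = 1 := by exact_mod_cast h3
    exact hd1 (Nat.eq_one_of_mul_eq_one_right h4)

end final

lemma det_one {G : Type} [Group G] [Fintype G] (M : Subgroup G) [M.Normal] [Fintype M]
    (hmin : ∀ K : Subgroup G, K.Normal → K ≤ M → K = ⊥ ∨ K = M)
    (hna : ∃ x ∈ M, ∃ y ∈ M, x * y ≠ y * x) {ψ : M → ℂ} (hψ : ψ ∈ irr M) (m : M) : (rep hψ (oo m)).det = 1 := by
  have h1 : ⁅M, M⁆ = M := by
    rcases hmin ⁅M, M⁆ inferInstance (Subgroup.commutator_le_left M M) with h | h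
    · obtain ⟨x, hx, y, hy, hxy⟩ := hna
      have h2 := Subgroup.commutator_mem_commutator hx hy
      rw [h, Subgroup.mem_bot, commutatorElement_eq_one_iff_mul_comm] at h2
      exact absurd h2 hxy
    · exact h
  let D : M →* ℂ := 
    { toFun := fun m => (rep hψ (oo m)).det
      map_one' := by rw [oo_one, map_one, Matrix.det_one]
      map_mul' := fun a b => by rw [oo_mul, map_mul, Matrix.det_mul] }
  have h2 : m ∈ commutator M := by
    have : (m : G) ∈ (commutator M).map M.subtype := by
      rw [Subgroup.map_subtype_commutator, h1]; exact m.2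
    obtain ⟨y, hy, h2⟩ := this
    have : y = m := Subtype.ext h2
    exact this ▸ hy
  have h3 := Abelianization.commutator_subset_ker D.toHomUnits h2
  rw [MonoidHom.mem_ker] at h3
  have h4 := congrArg Units.val h3
  exact h4
end P9

section P10
set_option linter.unusedSectionVars false

lemma omega_three {k d a : ℕ} (ha : a ≠ 0) (hk : k ≠ 1) (hd1 : d ≠ 1) (hd : ¬ d.Prime) (h : k * d ∣ a) :
    ¬ a.primeFactorsList.length ≤ 2 := by
  obtain ⟨c, rfl⟩ := h
  have hc : c ≠ 0 := by rintro rfl; simp at ha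
  have hk0 : k ≠ 0 := by rintro rfl; simp at ha
  have hd0 : d ≠ 0 := by rintro rfl; simp at ha
  rw [← ArithmeticFunction.cardFactors_apply, ArithmeticFunction.cardFactors_mul (mul_ne_zero hk0 hd0) hc,
    ArithmeticFunction.cardFactors_mul hk0 hd0]
  have h1 : ArithmeticFunction.cardFactors k ≠ 0 := by
    rw [Ne, ArithmeticFunction.cardFactors_eq_zero_iff_eq_zero_or_one]; tauto
  have h2 : ArithmeticFunction.cardFactors d ≠ 0 := by
    rw [Ne, ArithmeticFunction.cardFactors_eq_zero_iff_eq_zero_or_one]; tauto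
  have h3 : ArithmeticFunction.cardFactors d ≠ 1 := by
    rw [Ne, ArithmeticFunction.cardFactors_eq_one_iff_prime]; exact hd
  omega

/-- the final contradiction -/
theorem final_contra {G : Type} [Group G] [Fintype G] (M : Subgroup G) [hMn : M.Normal]
    (hmin : ∀ K : Subgroup G, K.Normal → K ≤ M → K = ⊥ ∨ K = M)
    (hna : ∃ x ∈ M, ∃ y ∈ M, x * y ≠ y * x) (hns : ¬ IsSimpleGroup M)
    (htp : ∀ f ∈ irr G, ∀ f' ∈ irr G, deg f ≠ deg f' → (Nat.gcd (deg f) (deg f')).primeFactorsList.length ≤ 2) :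
    False := by
  classical
  have := Fintype.ofFinite M
  obtain ⟨S, hSM, hSs, hSna, -, hcomm, hntop, π, hπ⟩ := min_normal_struct M hmin hna hns
  have := Fintype.ofFinite S
  set H := Subgroup.normalizer (S : Set G) with hH
  obtain ⟨g₀, hg₀⟩ : ∃ g₀, g₀ ∉ H := by
    by_contra hcon
    push Not at hcon
    exact hntop (eq_top_iff.2 fun x _ => hcon x)
  have hk : H.index ≠ 1 := fun h => hntop (Subgroup.index_eq_one.1 h)
  have lemmaB : ∀ (p : ℕ) [Fact p.Prime] (Q : Sylow p H) (f : S → ℂ), f ∈ irr S → deg f ≠ 1 → ¬ (deg f).Prime →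
      ¬ p ∣ deg f → (∀ (x : Q) (s : S), f (S.normalizerMonoidHom x s) = f s) → ∀ f2 ∈ irr S, ¬ p ∣ deg f2 := by
    intro p hpf Q f hf hd1 hdp hpd hinv f2 hf2 hp2
    have hp : p.Prime := hpf.out
    have hψ := psi_irr M S hSna hSM hcomm π hπ hg₀ hf one_mem_irr
    have hψd := psi_deg M S π g₀ hf one_mem_irr hψ
    rw [deg_one, mul_one] at hψd
    have hψ2 := psi_irr M S hSna hSM hcomm π hπ hg₀ hf hf2
    have hψd2 := psi_deg M S π g₀ hf hf2 hψ2
    have hcP : Nat.card ((Q : Subgroup H).map H.subtype) = Nat.card Q :=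
      Subgroup.card_map_of_injective H.subtype_injective
    obtain ⟨χ, hχ, hχ0, hχp⟩ := lemmaC2 M hψ ((Q : Subgroup H).map H.subtype) (k := H.index) (h := (Q : Subgroup H).index) hp
      (Q.isPGroup'.map H.subtype) (by
        rintro _ ⟨x, hx, rfl⟩ m
        simp only [psi, mul_one]
        have h1 := pi_norm M S hSna π hπ x m
        rw [Subgroup.subtype_apply, h1]
        exact hinv ⟨x, hx⟩ (π m)) (by rwa [hψd]) (det_one M hmin hna hψ) (by
        rw [hcP, ← Subgroup.card_mul_index H, ← Subgroup.card_mul_index (Q : Subgroup H)]; ring) Q.not_dvd_index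
    have hD := lemmaD M hψ hχ hχ0 H (psi_stab M S hSna hSM hcomm π hπ hg₀ hf one_mem_irr (by rwa [deg_one]) hd1)
    rw [hψd] at hD
    obtain ⟨χ2, hχ2, hχ20⟩ := exists_over M hψ2
    have hne : deg f ≠ deg f2 := fun h => hpd (h ▸ hp2)
    have hD2 := lemmaD M hψ2 hχ2 hχ20 H (psi_stab M S hSna hSM hcomm π hπ hg₀ hf hf2 hne hd1)
    rw [hψd2] at hD2
    have hne2 : deg χ ≠ deg χ2 := by
      intro h
      apply hχp
      rw [h]
      exact (mul_dvd_mul_left _ (hp2.mul_left _)).trans hD2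
    refine omega_three ?_ hk hd1 hdp (Nat.dvd_gcd hD ((mul_dvd_mul_left _ (Dvd.intro _ rfl)).trans hD2)) (htp χ hχ χ2 hχ2 hne2)
    exact (Nat.gcd_pos_of_pos_left _ (deg_pos hχ)).ne'
  apply lemmaC hSna
  · obtain ⟨f0, hf0, hf01⟩ := exists_nontriv hSna
    have hd0 := simple_deg hSna hf0 hf01
    obtain ⟨p, hp, hpd⟩ := Nat.exists_prime_and_dvd hd0
    have : Fact p.Prime := ⟨hp⟩
    obtain ⟨Q⟩ : Nonempty (Sylow p H) := inferInstance
    obtain ⟨f, hf, hf1, hpf, hinv⟩ := nice (hpd.trans (irr_dvd hf0)) Q.isPGroup' (S.normalizerMonoidHom.comp (Q : Subgroup H).subtype)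
    refine ⟨f, hf, ?_⟩
    by_contra hnp
    exact lemmaB p Q f hf (simple_deg hSna hf hf1) hnp hpf hinv f0 hf0 hpd
  · intro f hf hf1 hnp f' hf' hq
    by_contra hqd
    have : Fact (deg f').Prime := ⟨hq⟩
    obtain ⟨Q⟩ : Nonempty (Sylow (deg f') H) := inferInstance
    obtain ⟨z, hz, hzc, -⟩ := lemmaA hSna hf' rfl
    exact lemmaB (deg f') Q f hf (simple_deg hSna hf hf1) hnp hqd
      (q_inv z hz hzc Q.isPGroup' (S.normalizerMonoidHom.comp (Q : Subgroup H).subtype) hf hqd) f' hf' dvd_rfl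
end P10


lemma deg_mem_charDegrees {X : Type} [Group X] [Fintype X] {f : X → ℂ} (hf : f ∈ irr X) : deg f ∈ charDegrees X := by
  have hne := fin_deg_ne hf
  let L := Matrix.toLinAlgEquiv' (R := ℂ) (n := Fin (deg f))
  let ρ : Representation ℂ X (Fin (deg f) → ℂ) :=
    { toFun := fun x => L (rep hf (oo x))
      map_one' := by rw [oo_one, map_one, map_one]
      map_mul' := fun a b => by rw [oo_mul, map_mul, map_mul] }
  refine ⟨FDRep.of ρ, ?_, ?_⟩
  · have : NeZero (Nat.card X : ℂ) := ⟨by simp⟩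
    rw [FDRep.simple_iff_end_is_rank_one]
    have key : ∀ w : FDRep.of ρ ⟶ FDRep.of ρ, ∃ c : ℂ, c • 𝟙 (FDRep.of ρ) = w := by
      intro w
      let A : (Fin (deg f) → ℂ) →ₗ[ℂ] (Fin (deg f) → ℂ) := w.hom.hom.hom
      have hA : ∀ x, A * ρ x = ρ x * A := by
        intro x
        have := congrArg (fun z => z.hom.hom) (w.comm x)
        exact this
      obtain ⟨c, hc⟩ := scalar_of_comm (L.symm A) (by
        intro B
        obtain ⟨a, rfl⟩ := rep_surj hf B
        rw [GA_sum a]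
        simp only [map_sum, map_smul, Finset.mul_sum, Finset.sum_mul, mul_smul_comm, smul_mul_assoc]
        refine Finset.sum_congr rfl fun x _ => ?_
        congr 1
        apply L.injective
        rw [map_mul, map_mul, AlgEquiv.apply_symm_apply]
        exact hA x)
      refine ⟨c, ?_⟩
      have hA' : A = c • LinearMap.id := by
        apply L.symm.injective
        rw [hc, map_smul]
        congr 1
        exact (map_one L.symm).symm
      apply Action.hom_ext
      apply FGModuleCat.hom_ext
      exact hA'.symm
    refine (finrank_eq_one_iff_of_nonzero' (𝟙 (FDRep.of ρ)) ?_).2 key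
    intro h
    have h1 := congrArg (fun z => z.hom.hom.hom) h
    have h2 : (LinearMap.id : (Fin (deg f) → ℂ) →ₗ[ℂ] (Fin (deg f) → ℂ)) = 0 := h1
    have h3 := congrFun (LinearMap.congr_fun h2 (fun _ => 1)) (Classical.arbitrary _)
    simp at h3
  · change Module.finrank ℂ (Fin (deg f) → ℂ) = deg f
    simp

/-- A nonabelian chief factor `M/N` of a finite nonsolvable group satisfying the two-prime
hypothesis is simple or isomorphic to `A₅ × A₅`. -/
theorem chief_factor_simple_or_A5xA5
    (G : Type) [Group G] [Finite G] (hG : TwoPrimeHypothesis G)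
    (hns : ¬ IsSolvable G)
    (N M : Subgroup G) [N.Normal] [M.Normal] (hNM : N < M)
    (hchief : ∀ K : Subgroup G, K.Normal → N < K → K < M → False)
    (hnonab : ¬ ∀ x y : M ⧸ N.subgroupOf M, Commute x y) :
    IsSimpleGroup (M ⧸ N.subgroupOf M) ∨
      Nonempty ((M ⧸ N.subgroupOf M) ≃*
        (alternatingGroup (Fin 5) × alternatingGroup (Fin 5))) := by
  left
  by_contra hnsimp
  have := Fintype.ofFinite G
  have := Fintype.ofFinite (G ⧸ N)
  let q := QuotientGroup.mk' N
  have hq : Function.Surjective q := QuotientGroup.mk'_surjective N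
  have hqk : q.ker = N := QuotientGroup.ker_mk' N
  let Mb : Subgroup (G ⧸ N) := M.map q
  have hMb : Mb.Normal := Subgroup.Normal.map inferInstance q hq
  -- the quotient as a subgroup
  let e : M →* Mb := q.subgroupMap M
  have he : Function.Surjective e := q.subgroupMap_surjective M
  have hek : e.ker = N.subgroupOf M := by
    ext x
    rw [MonoidHom.mem_ker, Subgroup.mem_subgroupOf, Subtype.ext_iff]
    change q x = 1 ↔ _
    rw [← MonoidHom.mem_ker, hqk]
  let E : (M ⧸ N.subgroupOf M) ≃* Mb :=
    (QuotientGroup.quotientMulEquivOfEq hek.symm).trans (QuotientGroup.quotientKerEquivOfSurjective e he)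
  refine final_contra Mb ?_ ?_ ?_ ?_
  · intro K hK hKM
    by_contra hcon
    push Not at hcon
    have h1 : (K.comap q).Normal := hK.comap q
    have h2 : N ≤ K.comap q := hqk.symm.le.trans (Subgroup.ker_le_comap q K)
    have h3 : K.comap q ≤ M := by
      have : M = Mb.comap q := by
        rw [Subgroup.comap_map_eq, hqk, sup_eq_left.2 hNM.le]
      rw [this]
      exact Subgroup.comap_mono hKM
    have hmc : (K.comap q).map q = K := Subgroup.map_comap_eq_self_of_surjective hq K
    refine hchief _ h1 (lt_of_le_of_ne h2 ?_) (lt_of_le_of_ne h3 ?_)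
    · intro h
      apply hcon.1
      rw [← hmc, ← h, Subgroup.map_eq_bot_iff, hqk]
    · intro h
      apply hcon.2
      rw [← hmc, h]
  · by_contra hcon
    push Not at hcon
    apply hnonab
    intro x y
    apply E.injective
    rw [map_mul, map_mul]
    exact Subtype.ext (hcon _ (E x).2 _ (E y).2)
  · intro h
    exact hnsimp (E.isSimpleGroup_congr.2 h)
  · intro f hf f' hf' hne
    have h1 := deg_mem_charDegrees (irr_comp q hq hf)
    have h2 := deg_mem_charDegrees (irr_comp q hq hf')
    have h3 : ∀ f : G ⧸ N → ℂ, deg (fun y => f (q y)) = deg f := by intro f; simp [deg]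
    rw [h3] at h1 h2
    exact hG _ h1 _ h2 hne
end

section
/- For every prime power q ≥ 7, the group PGL_2(q) satisfies the two-prime hypothesis. -/
open CategoryTheory

/-- `PGL₂(F)`: the quotient of `GL₂(F)` by its center. -/
abbrev PGL2 (F : Type) [Field F] : Type :=
  Matrix.GeneralLinearGroup (Fin 2) F ⧸
    Subgroup.center (Matrix.GeneralLinearGroup (Fin 2) F)


lemma simple_invariant {G : Type} [Group G] (V : FDRep ℂ G) [hV : Simple V]
    (W : Submodule ℂ V) (hW : ∀ g : G, ∀ v ∈ W, V.ρ g v ∈ W) (hne : W ≠ ⊥) : W = ⊤ := by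
  let σ : Representation ℂ G W :=
    { toFun := fun g => (V.ρ g).restrict (hW g)
      map_one' := by ext v; simp
      map_mul' := fun g h => by ext v; simp }
  let f : FDRep.of σ ⟶ V :=
    { hom := FGModuleCat.ofHom W.subtype
      comm := fun g => by
        ext v
        rfl }
  have hfa : ∀ w : W, f.hom.hom.hom w = (w : V) := fun w => rfl
  have hm : Mono f := by
    have : Mono ((forget₂ (FDRep ℂ G) (FGModuleCat ℂ)).map f) := by
      apply ConcreteCategory.mono_of_injective
      intro a b hab
      exact Subtype.ext hab
    exact Functor.mono_of_mono_map (forget₂ (FDRep ℂ G) (FGModuleCat ℂ)) this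
  have hf : f ≠ 0 := by
    intro h0
    apply hne
    rw [eq_bot_iff]
    intro w hw
    have := hfa ⟨w, hw⟩
    rw [h0] at this
    exact this.symm
  have hi : IsIso f := (Simple.mono_isIso_iff_nonzero f).2 hf
  rw [eq_top_iff]
  intro v _
  have h1 : (inv f ≫ f) = 𝟙 V := IsIso.inv_hom_id f
  have h2 : (inv f ≫ f).hom.hom.hom v = v := by rw [h1]; rfl
  rw [← h2]
  exact ((inv f).hom.hom.hom v).2

lemma simple_nontrivial {G : Type} [Group G] (V : FDRep ℂ G) [hV : Simple V] : Nontrivial V := by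
  by_contra h
  rw [not_nontrivial_iff_subsingleton] at h
  apply id_nonzero V
  ext v
  exact Subsingleton.elim (α := V) _ _

open Matrix

section Hecke

variable {F : Type} [Field F] [Fintype F] {V : Type} [AddCommGroup V] [Module ℂ V]

/-- The projection of `V` to the `ψ(a ·)`-isotypic part for the upper unipotent group. -/
noncomputable def eProj (R : Matrix (Fin 2) (Fin 2) F →* Module.End ℂ V) (ψ : AddChar F ℂ)
    (a : F) : Module.End ℂ V :=
  ((Fintype.card F : ℂ)⁻¹) • ∑ x : F, ψ (-(a * x)) • R !![1, x; 0, 1]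

variable (R : Matrix (Fin 2) (Fin 2) F →* Module.End ℂ V) (ψ : AddChar F ℂ)

lemma u_mul_eProj (a y : F) : R !![1, y; 0, 1] * eProj R ψ a = ψ (a * y) • eProj R ψ a := by
  unfold eProj
  rw [mul_smul_comm, smul_comm (ψ _)]
  congr 1
  rw [Finset.mul_sum, Finset.smul_sum]
  rw [← Equiv.sum_comp (Equiv.addRight y) (fun x => ψ (a * y) • ψ (-(a * x)) • R !![1, x; 0, 1])]
  refine Finset.sum_congr rfl fun x _ => ?_
  rw [mul_smul_comm, ← map_mul, smul_smul, ← AddChar.map_add_eq_mul]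
  simp only [Equiv.coe_addRight]
  congr 2
  · ring
  · simp [Matrix.mul_fin_two]

lemma eProj_mul_u (a y : F) : eProj R ψ a * R !![1, y; 0, 1] = ψ (a * y) • eProj R ψ a := by
  rw [← u_mul_eProj]
  unfold eProj
  rw [mul_smul_comm, smul_mul_assoc, Finset.mul_sum, Finset.sum_mul]
  congr 1
  refine Finset.sum_congr rfl fun x _ => ?_
  rw [mul_smul_comm, smul_mul_assoc, ← map_mul R, ← map_mul R]
  congr 2
  simp [Matrix.mul_fin_two, add_comm]

lemma card_ne : (Fintype.card F : ℂ) ≠ 0 := by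
  exact_mod_cast Fintype.card_ne_zero

lemma eProj_mul_eProj [DecidableEq F] (hψ : ψ.IsPrimitive) (a b : F) :
    eProj R ψ a * eProj R ψ b = if b = a then eProj R ψ b else 0 := by
  conv_lhs => rw [eProj]
  rw [smul_mul_assoc, Finset.sum_mul]
  have : ∀ x ∈ (Finset.univ : Finset F), (ψ (-(a * x)) • R !![1, x; 0, 1]) * eProj R ψ b
      = ψ (x * (b - a)) • eProj R ψ b := by
    intro x _
    rw [smul_mul_assoc, u_mul_eProj, smul_smul, ← AddChar.map_add_eq_mul]
    congr 2
    ring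
  rw [Finset.sum_congr rfl this, ← Finset.sum_smul, AddChar.sum_mulShift _ hψ]
  simp only [sub_eq_zero]
  split_ifs with h
  · rw [smul_smul, inv_mul_cancel₀ card_ne, one_smul]
  · simp

lemma sum_eProj (hψ : ψ.IsPrimitive) : ∑ a, eProj R ψ a = 1 := by
  classical
  unfold eProj
  rw [← Finset.smul_sum, Finset.sum_comm]
  have : ∀ x ∈ (Finset.univ : Finset F), (∑ a : F, ψ (-(a * x)) • R !![1, x; 0, 1])
      = if x = 0 then (Fintype.card F : ℂ) • (1 : Module.End ℂ V) else 0 := by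
    intro x _
    rw [← Finset.sum_smul]
    have h := AddChar.sum_mulShift (-x) hψ
    simp only [mul_neg, neg_eq_zero] at h
    rw [h]
    split_ifs with hx
    · subst hx
      rw [← Matrix.one_fin_two, map_one]
    · simp
  rw [Finset.sum_congr rfl this]
  simp [smul_smul]

lemma diag_mul_eProj (s d a : F) (hs : s ≠ 0) (hd : d ≠ 0) :
    R !![s, 0; 0, d] * eProj R ψ a = eProj R ψ (a * d / s) * R !![s, 0; 0, d] := by
  unfold eProj
  rw [mul_smul_comm, smul_mul_assoc, Finset.mul_sum, Finset.sum_mul]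
  congr 1
  rw [← Equiv.sum_comp (Equiv.mulRight₀ (s / d) (div_ne_zero hs hd))
    (fun x => ψ (-(a * d / s * x)) • R !![1, x; 0, 1] * R !![s, 0; 0, d])]
  refine Finset.sum_congr rfl fun x _ => ?_
  rw [mul_smul_comm, smul_mul_assoc, ← map_mul R, ← map_mul R]
  simp only [Equiv.mulRight₀_apply]
  refine congrArg₂ (fun (c : ℂ) (f : Module.End ℂ V) => c • f) (congrArg ψ ?_) ?_
  · field_simp
  · refine congrArg R ?_
    ext i j
    fin_cases i <;> fin_cases j <;> simp <;> field_simp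

/-- The anti-involution does not change Hecke operators. -/
lemma hecke_symm (hψ : ψ.IsPrimitive) (h0 : ∀ M, M.det = 0 → R M = 0) (a b c d : F) :
    eProj R ψ 1 * R !![a, b; c, d] * eProj R ψ 1 =
      eProj R ψ 1 * R !![d, b; c, a] * eProj R ψ 1 := by
  classical
  by_cases hc : c = 0
  · subst hc
    have key : ∀ a b d : F, a ≠ d → 
        eProj R ψ 1 * R !![a, b; 0, d] * eProj R ψ 1 = 0 := by
      intro a b d had
      by_cases ha : a = 0
      · rw [h0 _ (by simp [ha])]; simp
      by_cases hd : d = 0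
      · rw [h0 _ (by simp [hd])]; simp
      have : !![a, b; 0, d] = !![1, b / d; 0, 1] * !![a, 0; 0, d] := by
        simp [Matrix.mul_fin_two, hd]
      rw [this, map_mul, ← mul_assoc, eProj_mul_u, smul_mul_assoc, smul_mul_assoc, mul_assoc,
        diag_mul_eProj _ _ _ _ _ ha hd, ← mul_assoc, eProj_mul_eProj _ _ hψ, if_neg]
      · simp
      · rw [one_mul, div_eq_iff ha, one_mul]
        exact fun h => had h.symm
    by_cases had : a = d
    · rw [had]
    · rw [key _ _ _ had, key _ _ _ (Ne.symm had)]
  · have key : ∀ a d : F, eProj R ψ 1 * R !![a, b; c, d] * eProj R ψ 1 = (ψ (a / c) * ψ (d / c)) •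
        (eProj R ψ 1 * R !![0, b - a * d / c; c, 0] * eProj R ψ 1) := by
      intro a d
      have : !![a, b; c, d] = !![1, a / c; 0, 1] * !![0, b - a * d / c; c, 0] *
          !![1, d / c; 0, 1] := by
        simp only [Matrix.mul_fin_two]
        ext i j
        fin_cases i <;> fin_cases j <;> simp <;> field_simp
        ring
      rw [this, map_mul, map_mul, mul_assoc, mul_assoc, mul_assoc, u_mul_eProj, ← mul_assoc,
        eProj_mul_u, one_mul, one_mul]
      simp only [smul_mul_assoc, mul_smul_comm, smul_smul, mul_assoc]
      rw [mul_comm (ψ (d / c))]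
    rw [key, key, mul_comm a d, mul_comm (ψ (a / c))]

lemma eProj_idem (hψ : ψ.IsPrimitive) (a : F) : eProj R ψ a * eProj R ψ a = eProj R ψ a := by
  classical
  rw [eProj_mul_eProj _ _ hψ, if_pos rfl]

lemma hecke_mul (hψ : ψ.IsPrimitive) (M N : Matrix (Fin 2) (Fin 2) F) :
    (eProj R ψ 1 * R M * eProj R ψ 1) * (eProj R ψ 1 * R N * eProj R ψ 1) =
    ((Fintype.card F : ℂ)⁻¹) • ∑ x : F, ψ (-(1 * x)) •
      (eProj R ψ 1 * R (M * !![1, x; 0, 1] * N) * eProj R ψ 1) := by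
  have h1 : (eProj R ψ 1 * R M * eProj R ψ 1) * (eProj R ψ 1 * R N * eProj R ψ 1)
     = eProj R ψ 1 * R M * (eProj R ψ 1 * eProj R ψ 1) * (R N * eProj R ψ 1) := by
    simp only [mul_assoc]
  rw [h1, eProj_idem _ _ hψ]
  conv_lhs => 
    enter [1, 2]
    rw [eProj]
  simp only [smul_mul_assoc, mul_smul_comm, Finset.mul_sum, Finset.sum_mul, map_mul, mul_assoc]

lemma hecke_comm (hψ : ψ.IsPrimitive) (h0 : ∀ M, M.det = 0 → R M = 0)
    (M N : Matrix (Fin 2) (Fin 2) F) :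
    (eProj R ψ 1 * R M * eProj R ψ 1) * (eProj R ψ 1 * R N * eProj R ψ 1) =
    (eProj R ψ 1 * R N * eProj R ψ 1) * (eProj R ψ 1 * R M * eProj R ψ 1) := by
  have hs : ∀ K : Matrix (Fin 2) (Fin 2) F, eProj R ψ 1 * R K * eProj R ψ 1 =
      eProj R ψ 1 * R !![K 1 1, K 0 1; K 1 0, K 0 0] * eProj R ψ 1 := by
    intro K
    rw [← hecke_symm R ψ hψ h0, ← Matrix.eta_fin_two K]
  have hR : ∀ x, eProj R ψ 1 * R (N * !![1, x; 0, 1] * M) * eProj R ψ 1 = eProj R ψ 1 *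
      R (!![M 1 1, M 0 1; M 1 0, M 0 0] * !![1, x; 0, 1] * !![N 1 1, N 0 1; N 1 0, N 0 0]) *
        eProj R ψ 1 := by
    intro x
    rw [hs]
    congr 3
    ext i j
    fin_cases i <;> fin_cases j <;> simp [Matrix.mul_apply, Fin.sum_univ_two] <;> ring
  rw [hecke_mul _ _ hψ N M, hs M, hs N, hecke_mul _ _ hψ]
  simp only [hR]

lemma span_orbit (hirr : ∀ W : Submodule ℂ V, (∀ M, ∀ v ∈ W, R M v ∈ W) → W ≠ ⊥ → W = ⊤)
    (v : V) (hv : v ≠ 0) : Submodule.span ℂ (Set.range fun M => R M v) = ⊤ := by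
  have hmem : v ∈ Submodule.span ℂ (Set.range fun M => R M v) :=
    Submodule.subset_span ⟨1, by simp⟩
  apply hirr
  · intro M w hw
    induction hw using Submodule.span_induction with
    | mem x hx =>
      obtain ⟨N, rfl⟩ := hx
      exact Submodule.subset_span ⟨M * N, by simp⟩
    | zero => simp
    | add x y _ _ hx hy => rw [map_add]; exact add_mem hx hy
    | smul c x _ hx => rw [map_smul]; exact Submodule.smul_mem _ _ hx
  · intro h
    rw [h] at hmem
    exact hv (by simpa using hmem)

lemma finrank_eProj_le_one [FiniteDimensional ℂ V] (hψ : ψ.IsPrimitive)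
    (h0 : ∀ M, M.det = 0 → R M = 0)
    (hirr : ∀ W : Submodule ℂ V, (∀ M, ∀ v ∈ W, R M v ∈ W) → W ≠ ⊥ → W = ⊤) :
    Module.finrank ℂ (eProj R ψ 1).range ≤ 1 := by
  set e := eProj R ψ 1 with he
  have hee : e * e = e := eProj_idem R ψ hψ 1
  have hfix : ∀ w ∈ e.range, e w = w := by
    rintro _ ⟨w, rfl⟩
    rw [← Module.End.mul_apply, hee]
  have hgen : ∀ v ∈ e.range, v ≠ 0 → ∀ w ∈ e.range,
      w ∈ Submodule.span ℂ (Set.range fun M => (e * R M * e) v) := by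
    intro v hv hv0 w hw
    have hw' : w ∈ (Submodule.span ℂ (Set.range fun M => R M v)).map e := by
      rw [span_orbit R hirr v hv0]
      exact ⟨w, trivial, hfix w hw⟩
    rw [Submodule.map_span, ← Set.range_comp] at hw'
    convert hw' using 3
    funext M
    simp [hfix v hv]
  by_cases hbot : e.range = ⊥
  · rw [hbot]; simp
  have hnt : Nontrivial e.range := Submodule.nontrivial_iff_ne_bot.2 hbot
  have hscal : ∀ M, ∃ μ : ℂ, ∀ w ∈ e.range, (e * R M * e) w = μ • w := by
    intro M
    have hmap : ∀ w ∈ e.range, (e * R M * e) w ∈ e.range := by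
      intro w _
      exact ⟨R M (e w), rfl⟩
    obtain ⟨μ, hμ⟩ := Module.End.exists_eigenvalue ((e * R M * e).restrict hmap)
    obtain ⟨v, hv⟩ := hμ.exists_hasEigenvector
    have hv1 : (e * R M * e) v = μ • (v : V) := by
      have := congrArg Subtype.val hv.apply_eq_smul
      simpa using this
    have hv0 : (v : V) ≠ 0 := fun h => hv.2 (Subtype.ext h)
    refine ⟨μ, fun w hw => ?_⟩
    have hsp : Submodule.span ℂ (Set.range fun M => (e * R M * e) v) ≤
        LinearMap.ker (e * R M * e - μ • (1 : Module.End ℂ V)) := by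
      rw [Submodule.span_le]
      rintro _ ⟨N, rfl⟩
      simp only [SetLike.mem_coe, LinearMap.mem_ker, LinearMap.sub_apply, LinearMap.smul_apply,
        Module.End.one_apply, sub_eq_zero]
      rw [← Module.End.mul_apply, hecke_comm R ψ hψ h0, Module.End.mul_apply, ← he, hv1, map_smul]
    have := hsp (hgen v v.2 hv0 w hw)
    simpa only [LinearMap.mem_ker, LinearMap.sub_apply, LinearMap.smul_apply,
        Module.End.one_apply, sub_eq_zero] using this
  obtain ⟨v, hv⟩ := exists_ne (0 : e.range)
  have hv0 : (v : V) ≠ 0 := fun h => hv (Subtype.ext h)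
  have hle : e.range ≤ Submodule.span ℂ {(v : V)} := by
    intro w hw
    refine Submodule.span_le.2 ?_ (hgen v v.2 hv0 w hw)
    rintro _ ⟨M, rfl⟩
    obtain ⟨μ, hμ⟩ := hscal M
    simp only [hμ v v.2]
    exact Submodule.smul_mem _ _ (Submodule.mem_span_singleton_self _)
  calc _ ≤ Module.finrank ℂ (Submodule.span ℂ {(v : V)}) := Submodule.finrank_mono hle
    _ = 1 := finrank_span_singleton hv0

lemma finrank_eq_trace [FiniteDimensional ℂ V] (hψ : ψ.IsPrimitive) (a : F) :
    LinearMap.trace ℂ V (eProj R ψ a) = Module.finrank ℂ (eProj R ψ a).range :=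
  (LinearMap.IsIdempotentElem.isProj_range _ (eProj_idem R ψ hψ a)).trace

lemma trace_eProj (a : F) (ha : a ≠ 0) :
    LinearMap.trace ℂ V (eProj R ψ a) = LinearMap.trace ℂ V (eProj R ψ 1) := by
  have h1 := diag_mul_eProj R ψ a 1 a ha one_ne_zero
  rw [mul_one, div_self ha] at h1
  have h2 : R !![a⁻¹, 0; 0, 1] * R !![a, 0; 0, 1] = 1 := by
    rw [← map_mul, ← map_one R, Matrix.one_fin_two]
    simp [Matrix.mul_fin_two, ha]
  have h3 : R !![a, 0; 0, 1] * R !![a⁻¹, 0; 0, 1] = 1 := by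
    rw [← map_mul, ← map_one R, Matrix.one_fin_two]
    simp [Matrix.mul_fin_two, ha]
  calc LinearMap.trace ℂ V (eProj R ψ a)
      = LinearMap.trace ℂ V (R !![a⁻¹, 0; 0, 1] * (R !![a, 0; 0, 1] * eProj R ψ a)) := by
        rw [← mul_assoc, h2, one_mul]
    _ = LinearMap.trace ℂ V (eProj R ψ 1) := by
        rw [LinearMap.trace_mul_comm, h1, mul_assoc, h3, mul_one]

lemma finrank_formula [FiniteDimensional ℂ V] (hψ : ψ.IsPrimitive) :
    Module.finrank ℂ V = Module.finrank ℂ (eProj R ψ 0).range +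
      (Fintype.card F - 1) * Module.finrank ℂ (eProj R ψ 1).range := by
  classical
  have h := congrArg (LinearMap.trace ℂ V) (sum_eProj R ψ hψ)
  rw [map_sum, LinearMap.trace_one, ← Finset.add_sum_erase _ _ (Finset.mem_univ (0 : F)),
    Finset.sum_congr rfl (fun a ha => trace_eProj R ψ a (Finset.ne_of_mem_erase ha)),
    Finset.sum_const, Finset.card_erase_of_mem (Finset.mem_univ _), Finset.card_univ,
    finrank_eq_trace R ψ hψ, finrank_eq_trace R ψ hψ, nsmul_eq_mul] at h
  exact_mod_cast h.symm

lemma exists_borel_vector [FiniteDimensional ℂ V] (hψ : ψ.IsPrimitive)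
    (h0 : ∀ M, M.det = 0 → R M = 0) (hz : ∀ a : F, a ≠ 0 → R !![a, 0; 0, a] = 1)
    (hirr : ∀ W : Submodule ℂ V, (∀ M, ∀ v ∈ W, R M v ∈ W) → W ≠ ⊥ → W = ⊤)
    (hne : (eProj R ψ 0).range ≠ ⊥) :
    ∃ v w : V, Submodule.span ℂ (insert v (Set.range fun x => R !![1, x; 0, 1] w)) = ⊤ := by
  set e := eProj R ψ 0 with he
  have hee : e * e = e := eProj_idem R ψ hψ 0
  have hfix : ∀ w ∈ e.range, e w = w := by
    rintro _ ⟨w, rfl⟩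
    rw [← Module.End.mul_apply, hee]
  have hnt : Nontrivial e.range := Submodule.nontrivial_iff_ne_bot.2 hne
  obtain ⟨z, hgen⟩ := IsCyclic.exists_generator (α := Fˣ)
  have hmap : ∀ w ∈ e.range, R !![(z : F), 0; 0, 1] w ∈ e.range := by
    rintro _ ⟨w, rfl⟩
    rw [← Module.End.mul_apply, he, diag_mul_eProj _ _ _ _ _ z.ne_zero one_ne_zero, zero_mul,
      zero_div]
    exact ⟨_, rfl⟩
  obtain ⟨μ, hμ⟩ := Module.End.exists_eigenvalue ((R !![(z : F), 0; 0, 1]).restrict hmap)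
  obtain ⟨v, hv⟩ := hμ.exists_hasEigenvector
  have hv1 : R !![(z : F), 0; 0, 1] v = μ • (v : V) := by
    have := congrArg Subtype.val hv.apply_eq_smul
    simpa using this
  have hv0 : (v : V) ≠ 0 := fun h => hv.2 (Subtype.ext h)
  have hu : ∀ x, R !![1, x; 0, 1] v = (v : V) := by
    intro x
    have h1 := congrArg (fun f : Module.End ℂ V => f (v : V)) (u_mul_eProj R ψ 0 x)
    simp only [← he, Module.End.mul_apply, LinearMap.smul_apply, hfix v v.2, zero_mul,
      AddChar.map_zero_eq_one, one_smul] at h1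
    exact h1
  have hpow : ∀ n : ℕ, R !![(z : F) ^ n, 0; 0, 1] v = μ ^ n • (v : V) := by
    intro n
    induction n with
    | zero => simp [← Matrix.one_fin_two]
    | succ n ih =>
      have : !![(z : F) ^ (n + 1), 0; 0, 1] = !![(z : F), 0; 0, 1] * !![(z : F) ^ n, 0; 0, 1] := by
        simp [Matrix.mul_fin_two, pow_succ']
      rw [this, map_mul, Module.End.mul_apply, ih, map_smul, hv1, smul_smul, pow_succ]
  have ht : ∀ a : F, a ≠ 0 → ∃ c : ℂ, R !![a, 0; 0, 1] v = c • (v : V) := by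
    intro a ha
    have := hgen (Units.mk0 a ha)
    rw [← mem_powers_iff_mem_zpowers] at this
    obtain ⟨n, hn⟩ := this
    have hn' : (z : F) ^ n = a := by simpa using congrArg Units.val hn
    exact ⟨μ ^ n, by rw [← hn', hpow]⟩
  have hB : ∀ a b d : F, a ≠ 0 → d ≠ 0 → ∃ c : ℂ, R !![a, b; 0, d] v = c • (v : V) := by
    intro a b d ha hd
    obtain ⟨c, hc⟩ := ht (a / d) (div_ne_zero ha hd)
    have : !![a, b; 0, d] = !![d, 0; 0, d] * !![a / d, 0; 0, 1] * !![1, b / a; 0, 1] := by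
      simp only [Matrix.mul_fin_two]
      ext i j
      fin_cases i <;> fin_cases j <;> simp <;> field_simp
    refine ⟨c, ?_⟩
    rw [this, map_mul, map_mul, hz d hd, one_mul, Module.End.mul_apply, hu, hc]
  refine ⟨v, R !![0, 1; 1, 0] v, ?_⟩
  rw [eq_top_iff, ← span_orbit R hirr v hv0, Submodule.span_le]
  rintro _ ⟨M, rfl⟩
  obtain ⟨a, b, c, d, rfl⟩ : ∃ a b c d, M = !![a, b; c, d] := ⟨_, _, _, _, Matrix.eta_fin_two M⟩
  simp only [SetLike.mem_coe]
  by_cases hdet : (!![a, b; c, d]).det = 0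
  · rw [h0 _ hdet]; simp
  rw [Matrix.det_fin_two_of] at hdet
  by_cases hc : c = 0
  · subst hc
    have ha : a ≠ 0 := by rintro rfl; simp at hdet
    have hd : d ≠ 0 := by rintro rfl; simp at hdet
    obtain ⟨k, hk⟩ := hB a b d ha hd
    rw [hk]
    exact Submodule.smul_mem _ _ (Submodule.subset_span (Set.mem_insert _ _))
  · have hk0 : b - a * d / c ≠ 0 := by
      intro h
      apply hdet
      field_simp at h
      linear_combination -h
    obtain ⟨k, hk⟩ := hB c d _ hc hk0
    have : !![a, b; c, d] = !![1, a / c; 0, 1] * (!![0, 1; 1, 0] *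
        !![c, d; 0, b - a * d / c]) := by
      simp only [Matrix.mul_fin_two]
      ext i j
      fin_cases i <;> fin_cases j <;> simp <;> field_simp
      ring
    rw [this, map_mul, map_mul, Module.End.mul_apply, Module.End.mul_apply, hk, map_smul, map_smul]
    exact Submodule.smul_mem _ _ (Submodule.subset_span (Set.mem_insert_of_mem _ ⟨_, rfl⟩))

lemma finrank_cases [FiniteDimensional ℂ V] (hψ : ψ.IsPrimitive) (hq : 7 ≤ Fintype.card F)
    (h0 : ∀ M, M.det = 0 → R M = 0) (hz : ∀ a : F, a ≠ 0 → R !![a, 0; 0, a] = 1)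
    (hirr : ∀ W : Submodule ℂ V, (∀ M, ∀ v ∈ W, R M v ∈ W) → W ≠ ⊥ → W = ⊤) :
    Module.finrank ℂ V ≤ 2 ∨ (Fintype.card F ≤ Module.finrank ℂ V + 1 ∧
      Module.finrank ℂ V ≤ Fintype.card F + 1) := by
  classical
  have hform := finrank_formula R ψ hψ
  have hle := finrank_eProj_le_one R ψ hψ h0 hirr
  by_cases hm : Module.finrank ℂ (eProj R ψ 1).range = 0
  · left
    have hea : ∀ a : F, a ≠ 0 → eProj R ψ a = 0 := by
      intro a ha
      rw [← LinearMap.IsIdempotentElem.trace_eq_zero_iff (eProj_idem R ψ hψ a),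
        trace_eProj R ψ a ha, finrank_eq_trace R ψ hψ, hm, Nat.cast_zero]
    have he0 : eProj R ψ 0 = 1 := by
      rw [← sum_eProj R ψ hψ, Finset.sum_eq_single 0 (fun a _ ha => hea a ha) (by simp)]
    have hu : ∀ x, R !![1, x; 0, 1] = 1 := by
      intro x
      have := u_mul_eProj R ψ 0 x
      rw [he0] at this
      simpa using this
    by_cases hb : (eProj R ψ 0).range = ⊥
    · rw [hform, hm, hb]; simp
    obtain ⟨v, w, hvw⟩ := exists_borel_vector R ψ hψ h0 hz hirr hb
    simp only [hu, Module.End.one_apply, Set.range_const] at hvw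
    rw [← finrank_top ℂ V, ← hvw]
    have := finrank_span_finset_le_card (R := ℂ) ({v, w} : Finset V)
    rw [Finset.coe_pair] at this
    exact this.trans Finset.card_le_two
  · right
    have hm1 : Module.finrank ℂ (eProj R ψ 1).range = 1 := by omega
    rw [hm1, mul_one] at hform
    refine ⟨by omega, ?_⟩
    by_cases hb : (eProj R ψ 0).range = ⊥
    · rw [hb, finrank_bot] at hform; omega
    obtain ⟨v, w, hvw⟩ := exists_borel_vector R ψ hψ h0 hz hirr hb
    rw [← finrank_top ℂ V, ← hvw]
    have := finrank_span_finset_le_card (R := ℂ)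
      (insert v (Finset.univ.image fun x => R !![1, x; 0, 1] w) : Finset V)
    simp only [Finset.coe_insert, Finset.coe_image, Finset.coe_univ, Set.image_univ] at this
    refine this.trans ((Finset.card_insert_le _ _).trans ?_)
    have := Finset.card_image_le (s := (Finset.univ : Finset F)) (f := fun x => R !![1, x; 0, 1] w)
    rw [Finset.card_univ] at this
    omega

end Hecke


open scoped Classical in
/-- The extension by zero of a representation of `GL₂` to the monoid of all matrices. -/
noncomputable def matExt {F : Type} [Field F] {V : Type} [AddCommGroup V] [Module ℂ V]
    (ρ : Matrix.GeneralLinearGroup (Fin 2) F →* Module.End ℂ V) :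
    Matrix (Fin 2) (Fin 2) F →* Module.End ℂ V where
  toFun M := if h : M.det ≠ 0 then ρ (Matrix.GeneralLinearGroup.mkOfDetNeZero M h) else 0
  map_one' := by
    have h : (1 : Matrix (Fin 2) (Fin 2) F).det ≠ 0 := by simp
    rw [dif_pos h, ← map_one ρ]
    congr 1
    ext i j
    rfl
  map_mul' M N := by
    by_cases hM : M.det ≠ 0
    · by_cases hN : N.det ≠ 0
      · have hMN : (M * N).det ≠ 0 := by rw [Matrix.det_mul]; exact mul_ne_zero hM hN
        rw [dif_pos hM, dif_pos hN, dif_pos hMN, ← map_mul]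
        congr 1
        ext i j
        rfl
      · have hMN : ¬ (M * N).det ≠ 0 := by rw [Matrix.det_mul]; simp_all
        rw [dif_neg hN, dif_neg hMN, mul_zero]
    · have hMN : ¬ (M * N).det ≠ 0 := by rw [Matrix.det_mul]; simp_all
      rw [dif_neg hM, dif_neg hMN, zero_mul]

lemma charDegrees_cases (F : Type) [Field F] [Fintype F] (hq : 7 ≤ Fintype.card F) (n : ℕ)
    (hn : n ∈ charDegrees (PGL2 F)) :
    0 < n ∧ (n ≤ 2 ∨ (Fintype.card F ≤ n + 1 ∧ n ≤ Fintype.card F + 1)) := by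
  obtain ⟨V, hV, rfl⟩ := hn
  have hnt := simple_nontrivial V
  refine ⟨Module.finrank_pos, ?_⟩
  obtain ⟨ψ, hψ⟩ := AddChar.exists_apply_ne_zero.2 (one_ne_zero (α := F))
  have hprim : ψ.IsPrimitive := AddChar.IsPrimitive.of_ne_one (by rintro rfl; simp at hψ)
  let ρ : Matrix.GeneralLinearGroup (Fin 2) F →* Module.End ℂ V := V.ρ.comp (QuotientGroup.mk' _)
  refine finrank_cases (matExt ρ) ψ hprim hq ?_ ?_ ?_
  · intro M hM
    exact dif_neg (by simpa using hM)
  · intro a ha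
    have h : (!![a, 0; 0, a]).det ≠ 0 := by simp [Matrix.det_fin_two_of, ha]
    have h1 : matExt ρ !![a, 0; 0, a] = ρ (Matrix.GeneralLinearGroup.mkOfDetNeZero _ h) :=
      dif_pos h
    rw [h1]
    have h2 : Matrix.GeneralLinearGroup.mkOfDetNeZero _ h ∈
        Subgroup.center (Matrix.GeneralLinearGroup (Fin 2) F) := by
      rw [Subgroup.mem_center_iff]
      intro g
      apply Units.ext
      change g.1 * !![a, 0; 0, a] = !![a, 0; 0, a] * g.1
      ext i j
      fin_cases i <;> fin_cases j <;> simp [Matrix.mul_apply, Fin.sum_univ_two, mul_comm]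
    have h3 : QuotientGroup.mk' (Subgroup.center (Matrix.GeneralLinearGroup (Fin 2) F))
        (Matrix.GeneralLinearGroup.mkOfDetNeZero _ h) = 1 := (QuotientGroup.eq_one_iff _).2 h2
    change V.ρ (QuotientGroup.mk' _ _) = 1
    rw [h3, map_one]
  · intro W hW hne
    refine simple_invariant V W ?_ hne
    intro g v hv
    obtain ⟨g, rfl⟩ := QuotientGroup.mk'_surjective _ g
    have hdet : (g : Matrix (Fin 2) (Fin 2) F).det ≠ 0 := g.det.ne_zero
    have h1 : matExt ρ g = ρ (Matrix.GeneralLinearGroup.mkOfDetNeZero _ hdet) := dif_pos hdet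
    have h2 : Matrix.GeneralLinearGroup.mkOfDetNeZero _ hdet = g := by
      ext i j
      rfl
    have := hW g v hv
    rw [h1, h2] at this
    exact this

/-- For every prime power `q ≥ 7`, the group `PGL₂(q)` satisfies the two-prime hypothesis. -/
theorem pgl2_two_prime_hypothesis
    (q : ℕ) (hq : 7 ≤ q) (hpp : IsPrimePow q)
    (F : Type) [Field F] [Fintype F] (hF : Fintype.card F = q) :
    TwoPrimeHypothesis (PGL2 F) := by
  subst hF
  intro a ha b hb hab
  obtain ⟨ha0, ha⟩ := charDegrees_cases F hq a ha
  obtain ⟨hb0, hb⟩ := charDegrees_cases F hq b hb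
  have hg : Nat.gcd a b ≤ 2 := by
    rcases ha with ha | ha
    · exact (Nat.gcd_le_left b ha0).trans ha
    rcases hb with hb | hb
    · exact (Nat.gcd_le_right a hb0).trans hb
    rcases lt_or_gt_of_ne hab with h | h
    · have h1 := Nat.le_of_dvd (by omega)
        (Nat.dvd_sub (Nat.gcd_dvd_right a b) (Nat.gcd_dvd_left a b))
      omega
    · have h1 := Nat.le_of_dvd (by omega)
        (Nat.dvd_sub (Nat.gcd_dvd_left a b) (Nat.gcd_dvd_right a b))
      omega
  generalize Nat.gcd a b = g at hg
  interval_cases g <;> simp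
end
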